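/- Let k ≥ 2 be an integer, let ε be an integer with 0 < ε < 2^k, and set q = 2^k + 1 + ε. Let L be a real vector subspace of the q×q complex matrices consisting entirely of Hermitian matrices, and suppose that every nonzero X ∈ L has at least 2 positive eigenvalues and at least 2 negative eigenvalues (counted with multiplicity). Then the real dimension of L is at most q² − (4q − 3 − 4ε). -/

import Mathlib

open Matrix

/-- The number of positive eigenvalues (counted with multiplicity) of a Hermitian matrix. -/
noncomputable def posEigCount {n : Type*} [Fintype n] [DecidableEq n]
    {A : Matrix n n ℂ} (hA : A.IsHermitian) : ℕ :=
  (Finset.univ.filter fun i => 0 < hA.eigenvalues i).card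

/-- The number of negative eigenvalues (counted with multiplicity) of a Hermitian matrix. -/
noncomputable def negEigCount {n : Type*} [Fintype n] [DecidableEq n]
    {A : Matrix n n ℂ} (hA : A.IsHermitian) : ℕ :=
  (Finset.univ.filter fun i => hA.eigenvalues i < 0).card

/-!
Write `n = 2 ^ k`. If `L` had codimension at most `4 n` in the Hermitian matrices, restricting to
an `(n + 1) × (n + 1)` block would give `4 n` real linear functionals `Λ` on the Hermitian matrices
of size `n + 1` whose common kernel contains no nonzero matrix that is semidefinite on a complex
hyperplane.

The Hermitian matrices of rank at most two are the real points of a cone of dimension `4 n` whose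
degree is odd, precisely because `n` is a power of two. As `Λ` vanishes at no nonzero point of this
cone, a perturbation of `Λ` is a finite projection of its complexification, and a fibre of odd
degree over a real point contains a real point: so `Λ` maps the cone onto `ℝ ^ (4 n)`.

Removing a rank-one matrix `e e*` from a Hermitian matrix of rank at most two leaves a matrix that
is semidefinite on a hyperplane, so `e e*` is alone in its fibre of `Λ`. At `e e*` the cone looks
like its tangent space plus or minus positive semidefinite matrices orthogonal to `e`, and a
supporting functional `ψ` of the image of the latter vanishes on the image of the tangent space. A
direction `h` in the kernel of `ψ` outside that image is then not met: `Λ (e e*) + t h` has no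
preimage near `e e*` for small `t ≠ 0`, and properness of `Λ` contradicts surjectivity.

The degree is found from the Hilbert function: the coordinate ring is generated by the entries of
`a cᵀ + b dᵀ`, and by the representation theory of `𝔰𝔩₂`, acting on the pairs `(a, b)` and `(c, d)`,
its graded pieces have the dimensions of weight spaces minus those of the next ones.
-/

namespace HermitianInertia

section RealPoints

open Module TensorProduct

theorem finrank_eq_one_or_two_of_field (K : Type*) [Field K] [Algebra ℝ K] [Module.Finite ℝ K] :
    finrank ℝ K = 1 ∨ finrank ℝ K = 2 := by
  have : 0 < finrank ℝ K := finrank_pos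
  have : finrank ℝ K ≤ finrank ℝ ℂ :=
    LinearMap.finrank_le_finrank_of_injective
      (f := (IsAlgClosed.lift : K →ₐ[ℝ] ℂ).toLinearMap) (RingHom.injective _)
  rw [Complex.finrank_real_complex] at this
  lia

theorem nonempty_algHom_real_of_isSimpleModule {R M : Type*} [CommRing R] [Algebra ℝ R]
    [AddCommGroup M] [Module R M] [Module ℝ M] [IsScalarTower ℝ R M] [Module.Finite ℝ M]
    [IsSimpleModule R M] :
    Nonempty (R →ₐ[ℝ] ℝ) ∨ finrank ℝ M = 2 := by
  obtain ⟨I, hI, ⟨e⟩⟩ := isSimpleModule_iff_quot_maximal.mp ‹IsSimpleModule R M›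
  let _ : Field (R ⧸ I) := Ideal.Quotient.field I
  have eℝ : M ≃ₗ[ℝ] R ⧸ I := e.restrictScalars ℝ
  have : Module.Finite ℝ (R ⧸ I) := Module.Finite.equiv eℝ
  rw [eℝ.finrank_eq]
  refine (finrank_eq_one_or_two_of_field (R ⧸ I)).imp_left fun hone => ?_
  have hbij : Function.Bijective (Algebra.ofId ℝ (R ⧸ I)) :=
    Algebra.finrank_eq_one_iff_bijective_algebraMap.mp hone
  exact ⟨(AlgEquiv.ofBijective _ hbij).symm.toAlgHom.comp (Ideal.Quotient.mkₐ ℝ I)⟩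

theorem nonempty_algHom_real_of_odd_finrank {R : Type*} [CommRing R] [Algebra ℝ R] (M : Type*)
    [AddCommGroup M] [Module R M] [Module ℝ M] [IsScalarTower ℝ R M] [Module.Finite ℝ M]
    (hodd : Odd (finrank ℝ M)) : Nonempty (R →ₐ[ℝ] ℝ) := by
  induction hm : finrank ℝ M using Nat.strong_induction_on generalizing M with
  | _ m ih =>
  have : Nontrivial M := nontrivial_of_finrank_pos hodd.pos
  have : IsArtinian R M := isArtinian_of_tower ℝ inferInstance
  obtain ⟨N, hN⟩ := IsAtomic.exists_atom (Submodule R M)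
  have : IsSimpleModule R N := isSimpleModule_iff_isAtom.mpr hN
  have : Module.Finite ℝ N := inferInstanceAs (Module.Finite ℝ (N.restrictScalars ℝ))
  refine (nonempty_algHom_real_of_isSimpleModule (R := R) (M := N)).elim id fun htwo => ?_
  have hadd : finrank ℝ (M ⧸ N) + finrank ℝ N = finrank ℝ M :=
    (N.restrictScalars ℝ).finrank_quotient_add_finrank
  have : Module.Finite ℝ (M ⧸ N) := inferInstanceAs (Module.Finite ℝ (M ⧸ N.restrictScalars ℝ))
  refine ih (finrank ℝ (M ⧸ N)) (by lia) (M ⧸ N) ?_ rfl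
  grind

theorem exists_forall_finrank_baseChange_eq (A M : Type*) [CommRing A] [IsDomain A]
    [IsNoetherianRing A] [AddCommGroup M] [Module A M] [Module.Finite A M] :
    ∃ g : A, g ≠ 0 ∧ ∀ (K : Type*) [Field K] [Algebra A K], algebraMap A K g ≠ 0 →
      finrank K (K ⊗[A] M) = finrank A M := by
  have : Module.FinitePresentation A M := Module.finitePresentation_of_finite A M
  obtain ⟨g, hg, hfree, hrank⟩ := Module.FinitePresentation.exists_free_localizedModule_powers
    (nonZeroDivisors A) (LocalizedModule.mkLinearMap (nonZeroDivisors A) M) (FractionRing A)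
  refine ⟨g, nonZeroDivisors.ne_zero hg, fun K _ _ hgK => ?_⟩
  let Ag := Localization (Submonoid.powers g)
  let _ : Algebra Ag K := (IsLocalization.Away.lift g hgK.isUnit : Ag →+* K).toAlgebra
  have : IsScalarTower A Ag K := .of_algebraMap_eq fun a =>
    (IsLocalization.Away.lift_eq g hgK.isUnit a).symm
  have e : K ⊗[Ag] LocalizedModule.Away g M ≃ₗ[K] K ⊗[A] M :=
    (AlgebraTensorModule.congr (.refl K K)
      (LocalizedModule.equivTensorProduct (.powers g) M)).trans
      (AlgebraTensorModule.cancelBaseChange A Ag K K M)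
  have : Nontrivial Ag := (algebraMap Ag K).domain_nontrivial
  rw [← e.finrank_eq, finrank_baseChange, hrank,
    IsLocalization.finrank_eq (FractionRing A) (nonZeroDivisors A) le_rfl,
    IsLocalizedModule.finrank_eq (nonZeroDivisors A)
      (LocalizedModule.mkLinearMap (nonZeroDivisors A) M) le_rfl]

theorem exists_algHom_real_comp_eq {A R : Type*} [CommRing A] [IsDomain A] [IsNoetherianRing A]
    [Algebra ℝ A] [CommRing R] [Algebra ℝ R] [Algebra A R] [IsScalarTower ℝ A R]
    [Module.Finite A R] (hodd : Odd (finrank A R)) :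
    ∃ g : A, g ≠ 0 ∧ ∀ φ : A →ₐ[ℝ] ℝ, φ g ≠ 0 →
      ∃ χ : R →ₐ[ℝ] ℝ, ∀ a, χ (algebraMap A R a) = φ a := by
  obtain ⟨g, hg, hrank⟩ := exists_forall_finrank_baseChange_eq A R
  refine ⟨g, hg, fun φ hφ => ?_⟩
  let _ : Algebra A ℝ := φ.toRingHom.toAlgebra
  have : IsScalarTower ℝ A ℝ := .of_algebraMap_eq fun a => (φ.commutes a).symm
  have hfiber : Odd (finrank ℝ (ℝ ⊗[A] R)) := (hrank ℝ hφ).symm ▸ hodd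
  obtain ⟨χ⟩ := nonempty_algHom_real_of_odd_finrank (R := ℝ ⊗[A] R) (ℝ ⊗[A] R) hfiber
  refine ⟨χ.comp ((Algebra.TensorProduct.includeRight (R := A)).restrictScalars ℝ), fun a => ?_⟩
  have hsmul : (1 : ℝ) ⊗ₜ[A] algebraMap A R a = algebraMap ℝ (ℝ ⊗[A] R) (φ a) := by
    rw [Algebra.algebraMap_eq_smul_one, ← smul_tmul, Algebra.TensorProduct.algebraMap_apply,
      Algebra.smul_def, mul_one]
    rfl
  exact (congrArg χ hsmul).trans (χ.commutes _)

end RealPoints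

section Growth

open Filter Module MvPolynomial Topology

/-- The number of monomials of degree at most `d` in `p` variables (equivalently, of degree exactly
`d` in `p + 1` variables), as a real number: the gauge for all growth rates below. -/
noncomputable def monomialCount (p d : ℕ) : ℝ := (p + d).choose p

theorem monomialCount_pos (p d : ℕ) : 0 < monomialCount p d :=
  Nat.cast_pos.mpr (Nat.choose_pos (Nat.le_add_right p d))

theorem monomialCount_mono (p : ℕ) : Monotone (monomialCount p) := fun _ _ h =>
  Nat.cast_le.mpr (Nat.choose_le_choose p (Nat.add_le_add_left h p))

theorem monomialCount_add_one_mul (p d : ℕ) :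
    monomialCount p (d + 1) * (d + 1) = (p + d + 1) * monomialCount p d := by
  have h := Nat.add_one_mul_choose_eq (p + d) d
  rw [add_assoc, ← Nat.choose_symm_add, ← Nat.choose_symm_add] at h
  unfold monomialCount
  exact_mod_cast h.symm

theorem tendsto_monomialCount_add_div (p c : ℕ) :
    Tendsto (fun d => monomialCount p (d + c) / monomialCount p d) atTop (𝓝 1) := by
  induction c with
  | zero =>
    exact tendsto_const_nhds.congr fun d => (div_self (monomialCount_pos p d).ne').symm
  | succ c ih =>
    have hratio : Tendsto (fun d : ℕ => 1 + (p : ℝ) / ((d + c + 1 : ℕ) : ℝ)) atTop (𝓝 (1 + 0)) :=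
      (tendsto_const_nhds.div_atTop
        (tendsto_natCast_atTop_atTop.comp (tendsto_add_atTop_nat (c + 1)))).const_add 1
    have hmul := ih.mul hratio
    rw [add_zero, one_mul] at hmul
    refine hmul.congr fun d => ?_
    have hrec := monomialCount_add_one_mul p (d + c)
    have := (monomialCount_pos p d).ne'
    push_cast at hrec ⊢
    field_simp
    rw [← add_assoc d c 1]
    linarith

variable {σ K : Type*} [Fintype σ] [Field K]

theorem sum_range_multichoose (n d : ℕ) :
    ∑ e ∈ Finset.range (d + 1), n.multichoose e = (n + 1).multichoose d := by
  induction d with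
  | zero => simp
  | succ d ih => rw [Finset.sum_range_succ, ih, Nat.multichoose_succ_succ, add_comm]

theorem finrank_restrictTotalDegree (d : ℕ) :
    (finrank K (restrictTotalDegree σ K d) : ℝ) = monomialCount (Fintype.card σ) d := by
  classical
  have hset : {s : σ →₀ ℕ | (s.sum fun _ e => e) ≤ d} =
      ((Finset.range (d + 1)).biUnion fun e => (Finset.univ : Finset σ).finsuppAntidiag e :
        Finset (σ →₀ ℕ)) := by
    ext s
    simp [Finset.mem_finsuppAntidiag, Finsupp.sum_fintype]
  have hdisj : (Finset.range (d + 1) : Set ℕ).PairwiseDisjoint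
      fun e => (Finset.univ : Finset σ).finsuppAntidiag e := fun e _ e' _ hne =>
    Finset.disjoint_left.mpr fun s hs hs' => hne <|
      (Finset.mem_finsuppAntidiag.mp hs).1.symm.trans (Finset.mem_finsuppAntidiag.mp hs').1
  have hbasis := finrank_eq_nat_card_basis
    (basisRestrictSupport K {s : σ →₀ ℕ | (s.sum fun _ e => e) ≤ d})
  rw [restrictTotalDegree, hbasis, hset, Nat.card_coe_set_eq, Set.ncard_coe_finset,
    Finset.card_biUnion hdisj]
  simp only [Finset.card_finsuppAntidiag_nat_eq_multichoose, Finset.card_univ]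
  rw [sum_range_multichoose, Nat.multichoose_eq, monomialCount, Nat.choose_symm_add,
    add_right_comm, Nat.add_sub_cancel]

end Growth

section ModuleGrowth

open Filter Module MvPolynomial Topology

theorem exists_linearIndependent_smul_mem_span (A M : Type*) [CommRing A] [IsDomain A]
    [AddCommGroup M] [Module A M] [Module.Finite A M] :
    ∃ b : Fin (finrank A M) → M, LinearIndependent A b ∧
      ∃ g : A, g ≠ 0 ∧ ∀ m, g • m ∈ Submodule.span A (Set.range b) := by
  obtain ⟨b, hb⟩ := exists_linearIndependent_of_le_finrank (R := A) (M := M) le_rfl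
  refine ⟨b, hb, ?_⟩
  set N := Submodule.span A (Set.range b)
  have hadd := N.finrank_quotient_add_finrank
  rw [finrank_span_eq_card hb, Fintype.card_fin, Nat.add_eq_right,
    finrank_eq_zero_iff_isTorsion] at hadd
  obtain ⟨g, hann, hg⟩ := Submodule.annihilator_top_inter_nonZeroDivisors hadd
  refine ⟨g, nonZeroDivisors.ne_zero hg, fun m => ?_⟩
  rw [← Submodule.Quotient.mk_eq_zero, Submodule.Quotient.mk_smul]
  exact Submodule.mem_annihilator.mp hann _ Submodule.mem_top

theorem finrank_smul_le {K A M : Type*} [Field K] [Ring A] [Algebra K A] [AddCommGroup M]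
    [Module A M] [Module K M] [IsScalarTower K A M] (P : Submodule K A) (W : Submodule K M)
    [FiniteDimensional K P] [FiniteDimensional K W] :
    FiniteDimensional K (P • W : Submodule K M) ∧
      finrank K (P • W : Submodule K M) ≤ finrank K P * finrank K W := by
  have hrange : P • W = LinearMap.range (TensorProduct.lift
      ((Algebra.lsmul K K M).toLinearMap.domRestrict₁₂ P W)) := by
    refine le_antisymm (Submodule.smul_le.mpr fun a ha w hw => ⟨⟨a, ha⟩ ⊗ₜ ⟨w, hw⟩, rfl⟩) ?_
    rintro _ ⟨t, rfl⟩
    induction t with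
    | zero => simp
    | tmul a w => exact Submodule.smul_mem_smul a.2 w.2
    | add s t hs ht => simpa using add_mem hs ht
  rw [hrange]
  exact ⟨inferInstance, (LinearMap.finrank_range_le _).trans_eq (finrank_tensorProduct ..)⟩

variable {σ K M : Type*} [Field K] [AddCommGroup M] [Module (MvPolynomial σ K) M] [Module K M]
  [IsScalarTower K (MvPolynomial σ K) M]

theorem restrictTotalDegree_smul_smul_le (d c : ℕ) (W : Submodule K M) :
    restrictTotalDegree σ K d • restrictTotalDegree σ K c • W ≤
      restrictTotalDegree σ K (d + c) • W := by
  rw [← Submodule.smul_assoc]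
  refine Submodule.smul_mono_left (Submodule.smul_le.mpr fun p hp q hq => ?_)
  rw [mem_restrictTotalDegree] at *
  exact (totalDegree_mul p q).trans (add_le_add hp hq)

theorem restrictTotalDegree_smul_mono (W : Submodule K M) :
    Monotone fun d => restrictTotalDegree σ K d • W := fun d e hde =>
  Submodule.smul_mono_left fun p hp => by
    rw [mem_restrictTotalDegree] at *
    exact hp.trans hde

theorem exists_le_restrictTotalDegree_smul {T W : Submodule K M} (hT : T.FG)
    (hTW : (T : Set M) ⊆ Submodule.span (MvPolynomial σ K) (W : Set M)) :
    ∃ c, T ≤ restrictTotalDegree σ K c • W := by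
  have hmem (m : M) (hm : m ∈ Submodule.span (MvPolynomial σ K) (W : Set M)) :
      ∃ c, m ∈ restrictTotalDegree σ K c • W := by
    induction hm using Submodule.span_induction with
    | mem w hw =>
      have hone : (1 : MvPolynomial σ K) ∈ restrictTotalDegree σ K 0 := by
        simp [mem_restrictTotalDegree]
      exact ⟨0, one_smul (MvPolynomial σ K) w ▸ Submodule.smul_mem_smul hone hw⟩
    | zero => exact ⟨0, zero_mem _⟩
    | add x y _ _ hx hy =>
      obtain ⟨⟨c, hc⟩, e, he⟩ := hx, hy
      exact ⟨max c e, add_mem (restrictTotalDegree_smul_mono W (le_max_left c e) hc)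
        (restrictTotalDegree_smul_mono W (le_max_right c e) he)⟩
    | smul p x _ hx =>
      obtain ⟨c, hc⟩ := hx
      exact ⟨_, restrictTotalDegree_smul_smul_le p.totalDegree c W
        (Submodule.smul_mem_smul ((mem_restrictTotalDegree ..).mpr le_rfl) hc)⟩
  obtain ⟨s, hs⟩ := hT
  choose! c hc using hmem
  refine ⟨s.sup c, hs ▸ Submodule.span_le.mpr fun m hm => ?_⟩
  exact restrictTotalDegree_smul_mono W (Finset.le_sup hm)
    (hc m (hTW (hs ▸ Submodule.subset_span hm)))

variable [Fintype σ]

theorem card_mul_monomialCount_le_finrank {ι : Type*} [Fintype ι] {b : ι → M}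
    (hb : LinearIndependent (MvPolynomial σ K) b) {W : Submodule K M} [FiniteDimensional K W]
    {c : ℕ} (hbW : ∀ i, b i ∈ restrictTotalDegree σ K c • W) (d : ℕ) :
    Fintype.card ι * monomialCount (Fintype.card σ) d ≤
      finrank K (restrictTotalDegree σ K (d + c) • W : Submodule K M) := by
  let f : (ι → restrictTotalDegree σ K d) →ₗ[K] M :=
    (Fintype.linearCombination (MvPolynomial σ K) b).restrictScalars K ∘ₗ
      LinearMap.compLeft (restrictTotalDegree σ K d).subtype ι
  have hf : Function.Injective f :=
    hb.fintypeLinearCombination_injective.comp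
      fun p p' h => funext fun i => Subtype.ext (congrFun h i)
  have hrange : LinearMap.range f ≤ restrictTotalDegree σ K (d + c) • W := by
    rintro _ ⟨p, rfl⟩
    exact sum_mem fun i _ => restrictTotalDegree_smul_smul_le d c W
      (Submodule.smul_mem_smul (p i).2 (hbW i))
  have := (finrank_smul_le (restrictTotalDegree σ K (d + c)) W).1
  have hle := Submodule.finrank_mono hrange
  rw [LinearMap.finrank_range_of_inj hf, finrank_pi_fintype, Finset.sum_const,
    Finset.card_univ, smul_eq_mul] at hle
  rw [← finrank_restrictTotalDegree (K := K)]
  exact_mod_cast hle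

theorem finrank_le_card_mul_monomialCount {ι : Type*} [Fintype ι] {b : ι → M}
    {W : Submodule K M} {g : MvPolynomial σ K} (hg : Function.Injective fun m : M => g • m)
    {c : ℕ} (hgW : ∀ w ∈ W, g • w ∈ restrictTotalDegree σ K c • Submodule.span K (Set.range b))
    (d : ℕ) :
    finrank K (restrictTotalDegree σ K d • W : Submodule K M) ≤
      Fintype.card ι * monomialCount (Fintype.card σ) (d + c) := by
  have hmap : (restrictTotalDegree σ K d • W).map (Algebra.lsmul K K M g) ≤
      restrictTotalDegree σ K (d + c) • Submodule.span K (Set.range b) := by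
    rw [Submodule.map_le_iff_le_comap, Submodule.smul_le]
    intro p hp w hw
    have hcomm : Algebra.lsmul K K M g (p • w) = p • g • w := smul_comm g p w
    rw [Submodule.mem_comap, hcomm]
    exact restrictTotalDegree_smul_smul_le d c _ (Submodule.smul_mem_smul hp (hgW w hw))
  have : FiniteDimensional K (Submodule.span K (Set.range b)) :=
    .span_of_finite K (Set.finite_range b)
  obtain ⟨_, hle⟩ := finrank_smul_le (restrictTotalDegree σ K (d + c))
    (Submodule.span K (Set.range b))
  have hfin := (Submodule.finrank_mono hmap).trans (hle.trans
    (Nat.mul_le_mul_left _ (finrank_range_le_card b)))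
  rw [← (Submodule.equivMapOfInjective (Algebra.lsmul K K M g) hg _).finrank_eq, mul_comm] at hfin
  rw [← finrank_restrictTotalDegree (K := K)]
  exact_mod_cast hfin

theorem tendsto_div_monomialCount {f : ℕ → ℝ} {r : ℝ} {p c e : ℕ}
    (hlower : ∀ d, r * monomialCount p d ≤ f (d + c))
    (hupper : ∀ d, f d ≤ r * monomialCount p (d + e)) :
    Tendsto (fun d => f d / monomialCount p d) atTop (𝓝 r) := by
  have hlow := ((tendsto_monomialCount_add_div p c).inv₀ one_ne_zero).const_mul r
  have hup := ((tendsto_monomialCount_add_div p e).comp (tendsto_add_atTop_nat c)).const_mul r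
  rw [inv_one, mul_one] at hlow
  rw [mul_one] at hup
  refine (tendsto_add_atTop_iff_nat c).mp
    (tendsto_of_tendsto_of_tendsto_of_le_of_le hlow hup (fun d => ?_) fun d => ?_)
  · simp only [inv_div, ← mul_div_assoc]
    exact div_le_div_of_nonneg_right (hlower d) (monomialCount_pos ..).le
  · simp only [Function.comp_apply, ← mul_div_assoc]
    exact div_le_div_of_nonneg_right (hupper _) (monomialCount_pos ..).le

theorem tendsto_finrank_smul_div [Module.IsTorsionFree (MvPolynomial σ K) M] {W : Submodule K M}
    [FiniteDimensional K W] (hW : Submodule.span (MvPolynomial σ K) (W : Set M) = ⊤) :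
    Tendsto (fun d => finrank K (restrictTotalDegree σ K d • W : Submodule K M) /
      monomialCount (Fintype.card σ) d) atTop (𝓝 (finrank (MvPolynomial σ K) M)) := by
  have hfg : W.FG := Module.Finite.iff_fg.mp inferInstance
  have : Module.Finite (MvPolynomial σ K) M := by
    obtain ⟨s, hs⟩ := hfg
    exact ⟨s, by rw [← hW, ← hs, Submodule.span_span_of_tower]⟩
  obtain ⟨b, hb, g, hg, hgb⟩ := exists_linearIndependent_smul_mem_span (MvPolynomial σ K) M
  obtain ⟨c, hc⟩ := exists_le_restrictTotalDegree_smul (σ := σ)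
    (Submodule.fg_span (R := K) (Set.finite_range b)) (W := W) fun m _ => hW ▸ Submodule.mem_top
  obtain ⟨e, he⟩ := exists_le_restrictTotalDegree_smul (σ := σ)
    (hfg.map (Algebra.lsmul K K M g)) (W := Submodule.span K (Set.range b)) <| by
      rintro _ ⟨w, -, rfl⟩
      rw [Submodule.span_span_of_tower]
      exact hgb w
  have hlower := card_mul_monomialCount_le_finrank hb (c := c) fun i =>
    hc (Submodule.subset_span ⟨i, rfl⟩)
  have hupper := finrank_le_card_mul_monomialCount (b := b) (c := e) (W := W)
    (smul_right_injective M hg) fun w hw => he ⟨w, hw, rfl⟩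
  rw [Fintype.card_fin] at hlower hupper
  exact tendsto_div_monomialCount hlower hupper

theorem finrank_smul_le_of_annihilated {h : MvPolynomial σ K} (hh : h ≠ 0)
    (hann : ∀ m : M, h • m = 0) (W : Submodule K M) [FiniteDimensional K W] (d : ℕ) :
    finrank K (restrictTotalDegree σ K (d + h.totalDegree) • W : Submodule K M) ≤
      (monomialCount (Fintype.card σ) (d + h.totalDegree) - monomialCount (Fintype.card σ) d) *
        finrank K W := by
  set P := restrictTotalDegree σ K (d + h.totalDegree)
  set Q := (restrictTotalDegree σ K d).map (LinearMap.mulLeft K h)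
  have hQP : Q ≤ P := by
    rintro _ ⟨p, hp, rfl⟩
    rw [mem_restrictTotalDegree, add_comm]
    exact (totalDegree_mul h p).trans
      (Nat.add_le_add_left ((mem_restrictTotalDegree ..).mp hp) _)
  have hQ : finrank K Q = finrank K (restrictTotalDegree σ K d) :=
    (Submodule.equivMapOfInjective _ (mul_right_injective₀ hh) _).finrank_eq.symm
  obtain ⟨D, hD⟩ := Q.exists_isCompl
  set C := D ⊓ P
  have hsup : Q ⊔ C = P := by
    rw [← sup_inf_assoc_of_le D hQP, hD.sup_eq_top, top_inf_eq]
  have hinf : Q ⊓ C = ⊥ := (hD.disjoint.mono_right inf_le_left).eq_bot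
  have hPW : P • W = C • W := by
    rw [← hsup, Submodule.sup_smul, sup_eq_right]
    refine Submodule.smul_le.mpr ?_
    rintro _ ⟨p, -, rfl⟩ w -
    rw [LinearMap.mulLeft_apply, mul_smul, hann]
    exact zero_mem _
  have : FiniteDimensional K C := Submodule.finiteDimensional_of_le inf_le_right
  have hadd := Submodule.finrank_sup_add_finrank_inf_eq Q C
  rw [hsup, hinf, finrank_bot, add_zero, hQ] at hadd
  have hC : (finrank K C : ℝ) = monomialCount (Fintype.card σ) (d + h.totalDegree) -
      monomialCount (Fintype.card σ) d := by
    rw [← finrank_restrictTotalDegree (K := K), ← finrank_restrictTotalDegree (K := K), hadd]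
    push_cast
    ring
  rw [hPW, ← hC]
  exact_mod_cast (finrank_smul_le C W).2

theorem tendsto_finrank_smul_div_zero {h : MvPolynomial σ K} (hh : h ≠ 0)
    (hann : ∀ m : M, h • m = 0) (W : Submodule K M) [FiniteDimensional K W] :
    Tendsto (fun d => finrank K (restrictTotalDegree σ K d • W : Submodule K M) /
      monomialCount (Fintype.card σ) d) atTop (𝓝 0) := by
  have hlim := (((tendsto_monomialCount_add_div (Fintype.card σ) h.totalDegree).inv₀
    one_ne_zero).const_sub 1).mul_const (finrank K W : ℝ)
  rw [inv_one, sub_self, zero_mul] at hlim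
  refine (tendsto_add_atTop_iff_nat h.totalDegree).mp
    (squeeze_zero
      (fun d => div_nonneg (Nat.cast_nonneg _) (monomialCount_pos ..).le) (fun d => ?_) hlim)
  refine (div_le_div_of_nonneg_right (finrank_smul_le_of_annihilated hh hann W d)
    (monomialCount_pos ..).le).trans_eq ?_
  rw [inv_div, one_sub_div (monomialCount_pos ..).ne', div_mul_eq_mul_div]

end ModuleGrowth

section OddGrowth

open Filter Module MvPolynomial Topology

theorem prod_mem_prod_submodule {ι K R : Type*} [CommSemiring K] [CommSemiring R] [Algebra K R]
    {s : Finset ι} {x : ι → R} {S : ι → Submodule K R} (hx : ∀ i ∈ s, x i ∈ S i) :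
    ∏ i ∈ s, x i ∈ ∏ i ∈ s, S i := by
  classical
  induction s using Finset.induction_on with
  | empty => exact Submodule.one_le.mp le_rfl
  | insert i s hi ih =>
    rw [Finset.prod_insert hi, Finset.prod_insert hi]
    exact Submodule.mul_mem_mul (hx i (Finset.mem_insert_self i s))
      (ih fun j hj => hx j (Finset.mem_insert_of_mem hj))

theorem tendsto_add_div_monomialCount {f : ℕ → ℝ} {p : ℕ} {r : ℝ}
    (hf : Tendsto (fun d => f d / monomialCount p d) atTop (𝓝 r)) (c : ℕ) :
    Tendsto (fun d => f (c + d) / monomialCount p d) atTop (𝓝 r) := by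
  have hmul := ((tendsto_add_atTop_iff_nat c).mpr hf).mul (tendsto_monomialCount_add_div p c)
  rw [mul_one] at hmul
  refine hmul.congr fun d => ?_
  rw [div_mul_div_cancel₀ (monomialCount_pos ..).ne', add_comm]

variable {σ K R : Type*} [CommRing R] [Field K] [Algebra K R]

theorem exists_mem_pow_of_mem_adjoin {S : Submodule K R} (hone : 1 ∈ S)
    {x : R} (hx : x ∈ Algebra.adjoin K (S : Set R)) : ∃ d, x ∈ S ^ d := by
  have hpow : Monotone (S ^ ·) := fun _ _ h => pow_le_pow_right₀ (Submodule.one_le.mpr hone) h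
  induction hx using Algebra.adjoin_induction with
  | mem x hx => exact ⟨1, by simpa using hx⟩
  | algebraMap r => exact ⟨0, by rw [pow_zero]; exact Submodule.algebraMap_mem r⟩
  | add x y _ _ hx hy =>
    obtain ⟨⟨d, hd⟩, e, he⟩ := hx, hy
    exact ⟨max d e, add_mem (hpow (le_max_left d e) hd) (hpow (le_max_right d e) he)⟩
  | mul x y _ _ hx hy =>
    obtain ⟨⟨d, hd⟩, e, he⟩ := hx, hy
    exact ⟨d + e, pow_add S d e ▸ Submodule.mul_mem_mul hd he⟩

variable [Algebra (MvPolynomial σ K) R] [IsScalarTower K (MvPolynomial σ K) R]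

theorem algebraMap_mem_pow {S : Submodule K R} (hone : 1 ∈ S)
    (hX : ∀ i : σ, algebraMap (MvPolynomial σ K) R (X i) ∈ S) {p : MvPolynomial σ K} {m : ℕ}
    (hp : p.totalDegree ≤ m) : algebraMap (MvPolynomial σ K) R p ∈ S ^ m := by
  have haeval : algebraMap (MvPolynomial σ K) R p =
      aeval (fun i => algebraMap (MvPolynomial σ K) R (X i)) p :=
    DFunLike.congr_fun (aeval_unique (IsScalarTower.toAlgHom K (MvPolynomial σ K) R)) p
  rw [haeval, p.as_sum, map_sum]
  refine sum_mem fun s hs =>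
    pow_le_pow_right₀ (Submodule.one_le.mpr hone) ((le_totalDegree hs).trans hp) ?_
  rw [aeval_monomial, ← Algebra.smul_def, Finsupp.prod, Finsupp.sum, ← Finset.prod_pow_eq_pow_sum]
  exact Submodule.smul_mem _ _
    (prod_mem_prod_submodule fun i _ => Submodule.pow_mem_pow _ (hX i) _)

theorem pow_add_eq_restrictTotalDegree_smul {S : Submodule K R} (hone : 1 ∈ S)
    (hX : ∀ i : σ, algebraMap (MvPolynomial σ K) R (X i) ∈ S) {d : ℕ}
    (hfin : S ^ (d + 1) ≤ restrictTotalDegree σ K 1 • S ^ d) (m : ℕ) :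
    S ^ (d + m) = restrictTotalDegree σ K m • S ^ d := by
  refine le_antisymm ?_ (Submodule.smul_le.mpr fun p hp x hx => ?_)
  · induction m with
    | zero =>
      refine fun x hx => one_smul (MvPolynomial σ K) x ▸ Submodule.smul_mem_smul ?_ hx
      simp [mem_restrictTotalDegree]
    | succ m ih =>
      calc S ^ (d + m + 1)
          ≤ (restrictTotalDegree σ K m • S ^ d) • S := by
            rw [pow_succ]; exact Submodule.smul_mono_left ih
        _ = restrictTotalDegree σ K m • S ^ (d + 1) := by
            rw [Submodule.smul_assoc, smul_eq_mul, ← pow_succ]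
        _ ≤ restrictTotalDegree σ K m • restrictTotalDegree σ K 1 • S ^ d :=
            Submodule.smul_mono le_rfl hfin
        _ ≤ restrictTotalDegree σ K (m + 1) • S ^ d := restrictTotalDegree_smul_smul_le ..
  · rw [add_comm, pow_add, Algebra.smul_def]
    exact Submodule.mul_mem_mul
      (algebraMap_mem_pow hone hX ((mem_restrictTotalDegree ..).mp hp)) hx

theorem span_pow_eq_top {S : Submodule K R} (hone : 1 ∈ S)
    (hgen : Algebra.adjoin K (S : Set R) = ⊤)
    (hX : ∀ i : σ, algebraMap (MvPolynomial σ K) R (X i) ∈ S) {d : ℕ}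
    (hfin : S ^ (d + 1) ≤ restrictTotalDegree σ K 1 • S ^ d) :
    Submodule.span (MvPolynomial σ K) ((S ^ d : Submodule K R) : Set R) = ⊤ := by
  refine eq_top_iff.mpr fun x _ => ?_
  have hx : x ∈ Algebra.adjoin K (S : Set R) := by rw [hgen]; exact Algebra.mem_top
  obtain ⟨m, hx⟩ := exists_mem_pow_of_mem_adjoin hone hx
  replace hx : x ∈ S ^ (d + m) :=
    pow_le_pow_right₀ (Submodule.one_le.mpr hone) (Nat.le_add_left m d) hx
  rw [pow_add_eq_restrictTotalDegree_smul hone hX hfin] at hx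
  have hle : restrictTotalDegree σ K m • S ^ d ≤
      (Submodule.span (MvPolynomial σ K) ((S ^ d : Submodule K R) : Set R)).restrictScalars K :=
    Submodule.smul_le.mpr fun p _ w hw => Submodule.smul_mem _ p (Submodule.subset_span hw)
  exact hle hx

variable [Fintype σ] [IsDomain R]

theorem finrank_eq_of_tendsto_finrank_smul_div {W : Submodule K R} [FiniteDimensional K W]
    (hW : Submodule.span (MvPolynomial σ K) (W : Set R) = ⊤) {r : ℕ} (hr : r ≠ 0)
    (hgrowth : Tendsto (fun d => finrank K (restrictTotalDegree σ K d • W : Submodule K R) /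
      monomialCount (Fintype.card σ) d) atTop (𝓝 r)) :
    finrank (MvPolynomial σ K) R = r := by
  have hinj : Function.Injective (algebraMap (MvPolynomial σ K) R) := by
    rw [injective_iff_map_eq_zero]
    by_contra! ⟨h, hker, hh⟩
    refine hr (Nat.cast_injective (R := ℝ) ?_)
    rw [Nat.cast_zero]
    exact tendsto_nhds_unique hgrowth
      (tendsto_finrank_smul_div_zero hh (fun m => by rw [Algebra.smul_def, hker, zero_mul]) W)
  have : FaithfulSMul (MvPolynomial σ K) R := (faithfulSMul_iff_algebraMap_injective ..).mpr hinj
  have : Module.IsTorsionFree (MvPolynomial σ K) R := inferInstance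
  exact_mod_cast tendsto_nhds_unique (tendsto_finrank_smul_div hW) hgrowth

theorem exists_algHom_real_of_odd_growth {R : Type*} [CommRing R] [IsDomain R] [Algebra ℝ R]
    [Algebra (MvPolynomial σ ℝ) R] [IsScalarTower ℝ (MvPolynomial σ ℝ) R]
    {S : Submodule ℝ R} [FiniteDimensional ℝ S] (hone : 1 ∈ S)
    (hgen : Algebra.adjoin ℝ (S : Set R) = ⊤)
    (hX : ∀ i : σ, algebraMap (MvPolynomial σ ℝ) R (X i) ∈ S) {d : ℕ}
    (hfin : S ^ (d + 1) ≤ restrictTotalDegree σ ℝ 1 • S ^ d) {r : ℕ} (hr : Odd r)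
    (hgrowth : Tendsto (fun d => finrank ℝ (S ^ d : Submodule ℝ R) /
      monomialCount (Fintype.card σ) d) atTop (𝓝 r)) :
    ∃ g : MvPolynomial σ ℝ, g ≠ 0 ∧ ∀ y : σ → ℝ, eval y g ≠ 0 →
      ∃ χ : R →ₐ[ℝ] ℝ, ∀ i, χ (algebraMap (MvPolynomial σ ℝ) R (X i)) = y i := by
  have hfg : (S ^ d).FG := (Module.Finite.iff_fg.mp ‹_›).pow d
  have : FiniteDimensional ℝ (S ^ d : Submodule ℝ R) := Module.Finite.iff_fg.mpr hfg
  have htop := span_pow_eq_top hone hgen hX hfin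
  have : Module.Finite (MvPolynomial σ ℝ) R := by
    obtain ⟨s, hs⟩ := hfg
    exact ⟨s, by rw [← htop, ← hs, Submodule.span_span_of_tower]⟩
  have hrank : finrank (MvPolynomial σ ℝ) R = r := by
    refine finrank_eq_of_tendsto_finrank_smul_div htop hr.pos.ne' ?_
    refine (tendsto_add_div_monomialCount (f := fun m => finrank ℝ (S ^ m : Submodule ℝ R))
      hgrowth d).congr fun m => ?_
    rw [pow_add_eq_restrictTotalDegree_smul hone hX hfin]
  obtain ⟨g, hg, hχ⟩ := exists_algHom_real_comp_eq (A := MvPolynomial σ ℝ) (R := R)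
    (hrank.symm ▸ hr)
  refine ⟨g, hg, fun y hy => ?_⟩
  obtain ⟨χ, hχ⟩ := hχ (aeval y) (by rwa [aeval_eq_eval])
  exact ⟨χ, fun i => by rw [hχ, aeval_X]⟩

theorem exists_algHom_adjoin_real_of_odd_growth {R : Type*} [CommRing R] [IsDomain R]
    [Algebra ℝ R] {S : Submodule ℝ R} [FiniteDimensional ℝ S] (hone : 1 ∈ S) {lam : σ → R}
    (hlam : ∀ i, lam i ∈ S) {d : ℕ}
    (hfin : S ^ (d + 1) ≤ Submodule.span ℝ (insert 1 (Set.range lam)) * S ^ d)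
    {r : ℕ} (hr : Odd r)
    (hgrowth : Tendsto (fun d => finrank ℝ (S ^ d : Submodule ℝ R) /
      monomialCount (Fintype.card σ) d) atTop (𝓝 r)) :
    ∃ g : MvPolynomial σ ℝ, g ≠ 0 ∧ ∀ y : σ → ℝ, eval y g ≠ 0 →
      ∃ χ : Algebra.adjoin ℝ (S : Set R) →ₐ[ℝ] ℝ,
        ∀ i, χ ⟨lam i, Algebra.subset_adjoin (hlam i)⟩ = y i := by
  set R' := Algebra.adjoin ℝ (S : Set R)
  set S' : Submodule ℝ R' := S.comap R'.val.toLinearMap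
  let lam' (i : σ) : R' := ⟨lam i, Algebra.subset_adjoin (hlam i)⟩
  let _ : Algebra (MvPolynomial σ ℝ) R' := (aeval lam').toAlgebra
  have : IsScalarTower ℝ (MvPolynomial σ ℝ) R' := .of_algHom (aeval lam')
  have hX (i : σ) : algebraMap (MvPolynomial σ ℝ) R' (X i) = lam' i := aeval_X lam' i
  have hinj : Function.Injective R'.val.toLinearMap := Subtype.val_injective
  have hmap : S'.map R'.val.toLinearMap = S :=
    Submodule.map_comap_eq_of_le fun x hx => ⟨⟨x, Algebra.subset_adjoin hx⟩, rfl⟩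
  have hmap_pow (m : ℕ) : (S' ^ m).map R'.val.toLinearMap = S ^ m := by
    rw [Submodule.map_pow, hmap]
  have hspan : Submodule.span ℝ (insert 1 (Set.range lam')) ≤ restrictTotalDegree σ ℝ 1 • 1 := by
    rw [Submodule.span_le]
    rintro _ (rfl | ⟨i, rfl⟩)
    · exact one_smul (MvPolynomial σ ℝ) (1 : R') ▸
        Submodule.smul_mem_smul (by simp [mem_restrictTotalDegree]) (Submodule.one_le.mp le_rfl)
    · rw [← hX, Algebra.algebraMap_eq_smul_one]
      exact Submodule.smul_mem_smul (by simp [mem_restrictTotalDegree]) (Submodule.one_le.mp le_rfl)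
  have : FiniteDimensional ℝ S' := Module.Finite.iff_fg.mpr <|
    Submodule.fg_of_fg_map_injective _ hinj (hmap ▸ Module.Finite.iff_fg.mp ‹_›)
  have key := exists_algHom_real_of_odd_growth (S := S') (σ := σ) (d := d) hone
    Algebra.adjoin_adjoin_coe_preimage (fun i => hX i ▸ hlam i) ?_ hr ?_
  · simpa only [hX] using key
  · rw [← one_mul (S' ^ d), ← smul_eq_mul, ← Submodule.smul_assoc]
    refine le_trans ?_ (Submodule.smul_mono_left hspan)
    rw [← Submodule.map_le_map_iff_of_injective hinj, hmap_pow, smul_eq_mul, Submodule.map_mul,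
      hmap_pow, Submodule.map_span, Set.image_insert_eq, ← Set.range_comp]
    exact hfin
  · exact hgrowth.congr fun m => by
      rw [← hmap_pow, (Submodule.equivMapOfInjective _ hinj _).finrank_eq]

end OddGrowth

section Sl2

variable {K V : Type*} [Field K] [AddCommGroup V] [Module K V] {E F H : Module.End K V}

theorem weight_pow_raising_apply (hHE : ∀ v, H (E v) = E (H v) + (2 : K) • E v) {μ : K} {w : V}
    (hw : H w = μ • w) (m : ℕ) : H ((E ^ m) w) = (μ + 2 * m) • (E ^ m) w := by
  induction m with
  | zero => simpa using hw
  | succ m ih =>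
    rw [pow_succ', Module.End.mul_apply, hHE, ih, map_smul]
    push_cast
    module

theorem lowering_pow_raising_apply (hEF : ∀ v, E (F v) = F (E v) + H v)
    (hHE : ∀ v, H (E v) = E (H v) + (2 : K) • E v) {μ : K} {w : V} (hw : H w = μ • w)
    (hEFw : E (F w) = 0) (m : ℕ) :
    F ((E ^ (m + 1)) w) = -((m + 1) * (μ + m)) • (E ^ m) w := by
  induction m with
  | zero =>
    have hcomm := hEF w
    rw [hEFw, hw] at hcomm
    simpa using (eq_neg_of_add_eq_zero_left hcomm.symm)
  | succ m ih =>
    have hE (j : ℕ) : E ((E ^ j) w) = (E ^ (j + 1)) w := by rw [pow_succ', Module.End.mul_apply]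
    have hcomm := hEF ((E ^ (m + 1)) w)
    rw [ih, map_smul, weight_pow_raising_apply hHE hw, hE, hE] at hcomm
    rw [eq_sub_of_add_eq hcomm.symm]
    push_cast
    module

theorem eq_zero_of_raising_lowering_apply_eq_zero [CharZero K]
    (hEF : ∀ v, E (F v) = F (E v) + H v) (hHE : ∀ v, H (E v) = E (H v) + (2 : K) • E v)
    {μ : ℕ} (hμ : μ ≠ 0) {w : V} (hw : H w = (μ : K) • w) (hEFw : E (F w) = 0)
    {m : ℕ} (hm : (E ^ m) w = 0) : w = 0 := by
  induction m with
  | zero => simpa using hm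
  | succ m ih =>
    have hlower := lowering_pow_raising_apply hEF hHE hw hEFw m
    rw [hm, map_zero, eq_comm, smul_eq_zero, neg_eq_zero] at hlower
    exact ih (hlower.resolve_left (by norm_cast; positivity))

end Sl2

section WeightedDerivations

open MvPolynomial

variable {σ K M : Type*} [Field K]

theorem isWeightedHomogeneous_mkDerivation [AddCommMonoid M] {w : σ → M} {δ : M}
    {f : σ → MvPolynomial σ K} (hf : ∀ i, IsWeightedHomogeneous w (f i) (w i + δ))
    {p : MvPolynomial σ K} {m : M} (hp : IsWeightedHomogeneous w p m) :
    IsWeightedHomogeneous w (mkDerivation K f p) (m + δ) := by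
  induction hp using IsWeightedHomogeneous.induction_on with
  | zero => rw [map_zero]; exact isWeightedHomogeneous_zero K w _
  | add p q hp hq ihp ihq => rw [map_add]; exact ihp.add ihq
  | monomial s r hs =>
    rw [mkDerivation_monomial]
    refine Submodule.smul_mem (weightedHomogeneousSubmodule K w _) r (sum_mem fun i hi => ?_)
    rw [← hs, ← Finsupp.weight_sub_single_add (Finsupp.mem_support_iff.mp hi), add_assoc]
    exact (isWeightedHomogeneous_monomial w _ _ rfl).mul (hf i)

theorem mkDerivation_smul_X_apply [AddCommMonoid M] (g : M →+ K) {w : σ → M}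
    {p : MvPolynomial σ K} {m : M} (hp : IsWeightedHomogeneous w p m) :
    mkDerivation K (fun i => g (w i) • X i) p = g m • p := by
  induction hp using IsWeightedHomogeneous.induction_on with
  | zero => simp
  | add p q hp hq ihp ihq => rw [map_add, ihp, ihq, smul_add]
  | monomial s r hs =>
    have hterm (i : σ) (hi : i ∈ s.support) :
        monomial (s - Finsupp.single i 1) (s i : K) • g (w i) • (X i : MvPolynomial σ K) =
          monomial s (g (s i • w i)) := by
      rw [smul_comm, X, smul_eq_mul, monomial_mul,
        Finsupp.sub_add_single_one_cancel (Finsupp.mem_support_iff.mp hi), smul_monomial, map_nsmul,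
        nsmul_eq_mul, mul_one, smul_eq_mul, mul_comm]
    have hweight : ∑ i ∈ s.support, s i • w i = m := by rw [← hs, Finsupp.weight_apply, Finsupp.sum]
    rw [mkDerivation_monomial, Finsupp.sum, Finset.sum_congr rfl hterm, ← map_sum, ← map_sum,
      hweight, smul_monomial, smul_monomial, smul_eq_mul, smul_eq_mul, mul_comm]

end WeightedDerivations

section GenericRankTwo

open MvPolynomial

variable (ι K : Type*) [Field K]

/-- The generic matrix `a cᵀ + b dᵀ` of rank at most two. The variables `a`, `b`, `c`, `d` are
indexed by the four elements of `Fin 4`, in this order. -/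
noncomputable def genericRankTwo : Matrix ι ι (MvPolynomial (Fin 4 × ι) K) :=
  of fun i j => X (0, i) * X (2, j) + X (1, i) * X (3, j)

/-- The linear span of the entries of `genericRankTwo`: its `d`-th power is the degree-`d` part of
the coordinate ring of the variety of matrices of rank at most two. -/
noncomputable def entrySpan : Submodule K (MvPolynomial (Fin 4 × ι) K) :=
  Submodule.span K (Set.range fun p : ι × ι => genericRankTwo ι K p.1 p.2)

/-- The span of the `c`-th block of variables. -/
noncomputable def varSpan (c : Fin 4) : Submodule K (MvPolynomial (Fin 4 × ι) K) :=
  Submodule.span K (Set.range fun i => X (c, i))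

/-- The action of `E` for the `𝔰𝔩₂`-action under which `(a, b)` is a sum of standard
representations and `(c, d)` of dual ones; `genericRankTwo` is invariant. -/
noncomputable def raising :
    Derivation K (MvPolynomial (Fin 4 × ι) K) (MvPolynomial (Fin 4 × ι) K) :=
  mkDerivation K fun v => ![0, X (0, v.2), -X (3, v.2), 0] v.1

/-- The action of `F`, see `raising`. -/
noncomputable def lowering :
    Derivation K (MvPolynomial (Fin 4 × ι) K) (MvPolynomial (Fin 4 × ι) K) :=
  mkDerivation K fun v => ![X (1, v.2), 0, 0, -X (2, v.2)] v.1

/-- The degree in `(a, b)`, the degree in `(c, d)`, and the `𝔰𝔩₂`-weight of a variable. -/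
def sl2Weight (v : Fin 4 × ι) : ℕ × ℕ × ℤ :=
  ![(1, 0, 1), (1, 0, -1), (0, 1, -1), (0, 1, 1)] v.1

/-- The action of `H`, see `raising`. -/
noncomputable def weightDerivation :
    Derivation K (MvPolynomial (Fin 4 × ι) K) (MvPolynomial (Fin 4 × ι) K) :=
  mkDerivation K fun v => ((sl2Weight ι v).2.2 : K) • X v

/-- The polynomials of degree `d` in `(a, b)`, degree `d` in `(c, d)` and `𝔰𝔩₂`-weight `h`. -/
noncomputable def weightSpace (d : ℕ) (h : ℤ) : Submodule K (MvPolynomial (Fin 4 × ι) K) :=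
  weightedHomogeneousSubmodule K (sl2Weight ι) (d, d, h)

variable {ι K}

theorem X_mem_varSpan (c : Fin 4) (i : ι) : X (c, i) ∈ varSpan ι K c :=
  Submodule.subset_span ⟨i, rfl⟩

theorem raising_lowering_apply (p : MvPolynomial (Fin 4 × ι) K) :
    raising ι K (lowering ι K p) = lowering ι K (raising ι K p) + weightDerivation ι K p := by
  have hlie : ⁅raising ι K, lowering ι K⁆ = weightDerivation ι K := derivation_ext <| by
    rintro ⟨c, i⟩
    fin_cases c <;>
      simp [Derivation.commutator_apply, raising, lowering, weightDerivation, sl2Weight]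
  rw [← hlie, Derivation.commutator_apply, add_sub_cancel]

theorem weightDerivation_raising_apply (p : MvPolynomial (Fin 4 × ι) K) :
    weightDerivation ι K (raising ι K p) =
      raising ι K (weightDerivation ι K p) + (2 : K) • raising ι K p := by
  have hlie : ⁅weightDerivation ι K, raising ι K⁆ = (2 : K) • raising ι K := derivation_ext <| by
    rintro ⟨c, i⟩
    fin_cases c <;>
      simp [Derivation.commutator_apply, raising, weightDerivation, sl2Weight, two_smul,
        sub_eq_add_neg]
  rw [← Derivation.smul_apply, ← hlie, Derivation.commutator_apply, add_sub_cancel]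

theorem raising_mem_weightSpace {d : ℕ} {h : ℤ} {p : MvPolynomial (Fin 4 × ι) K}
    (hp : p ∈ weightSpace ι K d h) : raising ι K p ∈ weightSpace ι K d (h + 2) := by
  refine isWeightedHomogeneous_mkDerivation (δ := (0, 0, 2)) ?_ hp
  rintro ⟨c, i⟩
  fin_cases c
  · exact isWeightedHomogeneous_zero K _ _
  · exact isWeightedHomogeneous_X K (sl2Weight ι) (0, i)
  · exact (isWeightedHomogeneous_X K (sl2Weight ι) (3, i)).neg
  · exact isWeightedHomogeneous_zero K _ _

theorem lowering_mem_weightSpace {d : ℕ} {h : ℤ} {p : MvPolynomial (Fin 4 × ι) K}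
    (hp : p ∈ weightSpace ι K d h) : lowering ι K p ∈ weightSpace ι K d (h - 2) := by
  refine isWeightedHomogeneous_mkDerivation (δ := (0, 0, -2)) ?_ hp
  rintro ⟨c, i⟩
  fin_cases c
  · exact isWeightedHomogeneous_X K (sl2Weight ι) (1, i)
  · exact isWeightedHomogeneous_zero K _ _
  · exact isWeightedHomogeneous_zero K _ _
  · exact (isWeightedHomogeneous_X K (sl2Weight ι) (2, i)).neg

theorem weightDerivation_apply {d : ℕ} {h : ℤ} {p : MvPolynomial (Fin 4 × ι) K}
    (hp : p ∈ weightSpace ι K d h) : weightDerivation ι K p = (h : K) • p :=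
  mkDerivation_smul_X_apply ((Int.castAddHom K).comp
    ((AddMonoidHom.snd ℕ ℤ).comp (AddMonoidHom.snd ℕ (ℕ × ℤ)))) hp

theorem raising_genericRankTwo (i j : ι) : raising ι K (genericRankTwo ι K i j) = 0 := by
  simp [raising, genericRankTwo, mul_comm]

theorem lowering_genericRankTwo (i j : ι) : lowering ι K (genericRankTwo ι K i j) = 0 := by
  simp [lowering, genericRankTwo, mul_comm]

theorem span_pow_le_toSubmodule_adjoin {R A : Type*} [CommSemiring R] [Semiring A] [Algebra R A]
    (s : Set A) (d : ℕ) :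
    Submodule.span R s ^ d ≤ Subalgebra.toSubmodule (Algebra.adjoin R s) := by
  induction d with
  | zero => exact Submodule.one_le.mpr (one_mem (Algebra.adjoin R s))
  | succ d ih =>
    rw [pow_succ, ← (Subalgebra.isIdempotentElem_toSubmodule _).eq]
    exact mul_le_mul' ih (Algebra.span_le_adjoin R s)

theorem derivation_apply_eq_zero_of_mem_pow {R : Type*} [CommRing R] [Algebra K R]
    {D : Derivation K R R} {s : Set R} (hD : ∀ x ∈ s, D x = 0) {d : ℕ} {x : R}
    (hx : x ∈ Submodule.span K s ^ d) : D x = 0 :=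
  Derivation.eqOn_adjoin (D2 := 0) hD (span_pow_le_toSubmodule_adjoin s d hx)

theorem entrySpan_le_weightSpace : entrySpan ι K ≤ weightSpace ι K 1 0 := by
  have hX := isWeightedHomogeneous_X K (sl2Weight ι)
  rw [entrySpan, Submodule.span_le]
  rintro _ ⟨⟨i, j⟩, rfl⟩
  exact ((hX (0, i)).mul (hX (2, j))).add ((hX (1, i)).mul (hX (3, j)))

theorem pow_le_weightedHomogeneousSubmodule {σ M : Type*} [AddCommMonoid M] {w : σ → M}
    {S : Submodule K (MvPolynomial σ K)} {m : M} (hS : S ≤ weightedHomogeneousSubmodule K w m)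
    (d : ℕ) : S ^ d ≤ weightedHomogeneousSubmodule K w (d • m) := by
  induction d with
  | zero =>
    rw [pow_zero, zero_smul, Submodule.one_le]
    exact isWeightedHomogeneous_one K w
  | succ d ih =>
    rw [pow_succ, succ_nsmul]
    exact (mul_le_mul' ih hS).trans (weightedHomogeneousSubmodule_mul w _ _)

theorem entrySpan_pow_le_weightSpace (d : ℕ) : entrySpan ι K ^ d ≤ weightSpace ι K d 0 := by
  simpa [weightSpace] using pow_le_weightedHomogeneousSubmodule entrySpan_le_weightSpace d

theorem varSpan_le_weightedHomogeneousSubmodule (c : Fin 4) (i : ι) :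
    varSpan ι K c ≤ weightedHomogeneousSubmodule K (sl2Weight ι) (sl2Weight ι (c, i)) := by
  rw [varSpan, Submodule.span_le]
  rintro _ ⟨j, rfl⟩
  exact isWeightedHomogeneous_X K (sl2Weight ι) (c, j)

theorem mul_mul_X_mem_weightSpace {d : ℕ} {u v : MvPolynomial (Fin 4 × ι) K}
    (hu : u ∈ varSpan ι K 0 ^ (d + 1)) (hv : v ∈ varSpan ι K 2 ^ d) (k : ι) :
    u * v * X (3, k) ∈ weightSpace ι K (d + 1) 2 := by
  have hu' := pow_le_weightedHomogeneousSubmodule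
    (varSpan_le_weightedHomogeneousSubmodule 0 k) _ hu
  have hv' := pow_le_weightedHomogeneousSubmodule
    (varSpan_le_weightedHomogeneousSubmodule 2 k) _ hv
  convert (IsWeightedHomogeneous.mul hu' hv').mul (isWeightedHomogeneous_X K (sl2Weight ι) (3, k))
    using 1
  simp [weightSpace, sl2Weight]

end GenericRankTwo

section WeightDecomposition

open Module MvPolynomial

variable {ι K : Type*} [Field K]

/-- The degree of a monomial in each block of variables. -/
def blockDegree {κ : Type*} [Fintype ι] (s : κ × ι →₀ ℕ) (c : κ) : ℕ := ∑ i, s (c, i)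

theorem weight_sl2Weight [Fintype ι] (s : Fin 4 × ι →₀ ℕ) :
    Finsupp.weight (sl2Weight ι) s =
      (blockDegree s 0 + blockDegree s 1, blockDegree s 2 + blockDegree s 3,
        (blockDegree s 0 - blockDegree s 1 - blockDegree s 2 + blockDegree s 3 : ℤ)) := by
  have hsum : Finsupp.weight (sl2Weight ι) s =
      ∑ c, blockDegree s c •
        (![(1, 0, 1), (1, 0, -1), (0, 1, -1), (0, 1, 1)] c : ℕ × ℕ × ℤ) := by
    rw [Finsupp.weight_apply, Finsupp.sum_fintype _ _ (by simp), Fintype.sum_prod_type]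
    simp only [blockDegree, Finset.sum_smul, sl2Weight]
  rw [hsum, Fin.sum_univ_four]
  simp [sub_eq_add_neg]

theorem weightSpace_eq_bot [Finite ι] {d : ℕ} {h : ℤ} (hd : 2 * d < h) :
    weightSpace ι K d h = ⊥ := by
  have := Fintype.ofFinite ι
  refine (Submodule.eq_bot_iff _).mpr fun p hp => MvPolynomial.ext _ _ fun s => ?_
  by_contra hs
  have hweight := hp hs
  simp only [weight_sl2Weight, Prod.mk.injEq] at hweight
  omega

theorem raising_pow_mem_weightSpace {d : ℕ} {h : ℤ} {p : MvPolynomial (Fin 4 × ι) K}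
    (hp : p ∈ weightSpace ι K d h) (m : ℕ) :
    ((raising ι K).toLinearMap ^ m : Module.End K _) p ∈ weightSpace ι K d (h + 2 * m) := by
  induction m with
  | zero => simpa using hp
  | succ m ih =>
    rw [pow_succ', Module.End.mul_apply]
    have hweight : h + 2 * (m + 1 : ℕ) = h + 2 * m + 2 := by push_cast; ring
    exact hweight ▸ raising_mem_weightSpace ih

theorem eq_zero_of_raising_lowering_eq_zero [Finite ι] [CharZero K] {d : ℕ}
    {w : MvPolynomial (Fin 4 × ι) K} (hw : w ∈ weightSpace ι K d 2)
    (hEF : raising ι K (lowering ι K w) = 0) : w = 0 := by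
  refine eq_zero_of_raising_lowering_apply_eq_zero (E := (raising ι K).toLinearMap)
    (F := (lowering ι K).toLinearMap) (H := (weightDerivation ι K).toLinearMap) (μ := 2) (m := d)
    raising_lowering_apply weightDerivation_raising_apply two_ne_zero
    (by simpa using weightDerivation_apply hw) hEF ?_
  have hmem := raising_pow_mem_weightSpace hw d
  rwa [weightSpace_eq_bot (by omega)] at hmem

variable (ι K) in
/-- The span of the monomials `aᵢ cⱼ` and `bᵢ dⱼ`. -/
noncomputable def weightZeroSpan : Submodule K (MvPolynomial (Fin 4 × ι) K) :=
  varSpan ι K 0 * varSpan ι K 2 ⊔ varSpan ι K 1 * varSpan ι K 3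

theorem monomial_mem_prod_varSpan_pow [Fintype ι] (s : Fin 4 × ι →₀ ℕ) :
    monomial s (1 : K) ∈ ∏ c, varSpan ι K c ^ blockDegree s c := by
  rw [monomial_eq, map_one, one_mul, Finsupp.prod_fintype _ _ (by simp), Fintype.prod_prod_type]
  refine prod_mem_prod_submodule fun c _ => ?_
  rw [blockDegree, ← Finset.prod_pow_eq_pow_sum]
  exact prod_mem_prod_submodule fun i _ => Submodule.pow_mem_pow _ (X_mem_varSpan c i) _

theorem weightSpace_zero_le_weightZeroSpan_pow [Finite ι] (d : ℕ) :
    weightSpace ι K d 0 ≤ weightZeroSpan ι K ^ d := by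
  have := Fintype.ofFinite ι
  intro p hp
  rw [p.as_sum]
  refine sum_mem fun s hs => ?_
  have hweight := hp (mem_support_iff.mp hs)
  simp only [weight_sl2Weight, Prod.mk.injEq] at hweight
  have h2 : blockDegree s 2 = blockDegree s 0 := by omega
  have h3 : blockDegree s 3 = blockDegree s 1 := by omega
  have hle : ∏ c, varSpan ι K c ^ blockDegree s c ≤ weightZeroSpan ι K ^ d := calc
    ∏ c, varSpan ι K c ^ blockDegree s c
      = (varSpan ι K 0 * varSpan ι K 2) ^ blockDegree s 0 *
          (varSpan ι K 1 * varSpan ι K 3) ^ blockDegree s 1 := by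
        rw [Fin.prod_univ_four, h2, h3, mul_pow, mul_pow]
        ring
    _ ≤ weightZeroSpan ι K ^ blockDegree s 0 * weightZeroSpan ι K ^ blockDegree s 1 :=
        mul_le_mul' (pow_le_pow_left' le_sup_left _) (pow_le_pow_left' le_sup_right _)
    _ = weightZeroSpan ι K ^ d := by rw [← pow_add, hweight.1]
  rw [← mul_one (coeff s p), ← smul_eq_mul, ← smul_monomial]
  exact Submodule.smul_mem _ _ (hle (monomial_mem_prod_varSpan_pow s))

theorem weightZeroSpan_le : weightZeroSpan ι K ≤ entrySpan ι K ⊔ varSpan ι K 0 * varSpan ι K 2 := by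
  refine sup_le le_sup_right ?_
  rw [varSpan.eq_def ι K 1, varSpan.eq_def ι K 3, Submodule.span_mul_span, Submodule.span_le]
  rintro _ ⟨_, ⟨i, rfl⟩, _, ⟨j, rfl⟩, rfl⟩
  have hentry : X (1, i) * X (3, j) = genericRankTwo ι K i j - X (0, i) * X (2, j) := by
    rw [genericRankTwo, of_apply, add_sub_cancel_left]
  simp only [SetLike.mem_coe, hentry]
  exact sub_mem (Submodule.mem_sup_left (Submodule.subset_span ⟨(i, j), rfl⟩))
    (Submodule.mem_sup_right (Submodule.mul_mem_mul (X_mem_varSpan _ _) (X_mem_varSpan _ _)))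

theorem pow_succ_le_mul_pow_sup_pow {R : Type*} [CommSemiring R] [Algebra K R]
    {U V W : Submodule K R} (hU : U ≤ V ⊔ W) (hW : W ≤ U) (d : ℕ) :
    U ^ (d + 1) ≤ V * U ^ d ⊔ W ^ (d + 1) := by
  induction d with
  | zero => simpa using hU
  | succ d ih => calc
    U ^ (d + 2) ≤ (V ⊔ W) * U ^ (d + 1) := pow_succ' U (d + 1) ▸ mul_le_mul' hU le_rfl
    _ = V * U ^ (d + 1) ⊔ W * U ^ (d + 1) := Submodule.sup_mul ..
    _ ≤ V * U ^ (d + 1) ⊔ (V * (W * U ^ d) ⊔ W ^ (d + 2)) := by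
      refine sup_le_sup le_rfl ((mul_le_mul' le_rfl ih).trans_eq ?_)
      rw [Submodule.mul_sup, mul_left_comm, pow_succ' W (d + 1)]
    _ ≤ V * U ^ (d + 1) ⊔ W ^ (d + 2) := by
      refine sup_le le_sup_left (sup_le_sup (mul_le_mul' le_rfl ?_) le_rfl)
      exact pow_succ' U d ▸ mul_le_mul' hW le_rfl

theorem lowering_mul_X_add_mem_entrySpan {u : MvPolynomial (Fin 4 × ι) K} (hu : u ∈ varSpan ι K 0)
    (k : ι) : lowering ι K u * X (3, k) + u * X (2, k) ∈ entrySpan ι K := by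
  suffices hle : varSpan ι K 0 ≤ (entrySpan ι K).comap
      (LinearMap.mulRight K (X (3, k)) ∘ₗ (lowering ι K).toLinearMap +
        LinearMap.mulRight K (X (2, k))) from hle hu
  rw [varSpan, Submodule.span_le]
  rintro _ ⟨i, rfl⟩
  exact Submodule.subset_span ⟨(i, k), by simp [genericRankTwo, lowering, add_comm]⟩

theorem lowering_mul_X_add_mem {e : ℕ} {u : MvPolynomial (Fin 4 × ι) K}
    (hu : u ∈ varSpan ι K 0 ^ (e + 1)) (k : ι) :
    lowering ι K u * X (3, k) + ((e : MvPolynomial (Fin 4 × ι) K) + 1) * u * X (2, k) ∈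
      entrySpan ι K * varSpan ι K 0 ^ e := by
  induction e generalizing u with
  | zero => simpa using lowering_mul_X_add_mem_entrySpan (by simpa using hu) k
  | succ e ih =>
    rw [pow_succ] at hu
    induction hu using Submodule.mul_induction_on' with
    | mem_mul_mem a ha b hb =>
      have hleft := Submodule.mul_mem_mul (ih ha) hb
      have hright := Submodule.mul_mem_mul (lowering_mul_X_add_mem_entrySpan hb k) ha
      rw [mul_assoc, ← pow_succ] at hleft
      convert add_mem hleft hright using 1
      rw [Derivation.leibniz, smul_eq_mul, smul_eq_mul]
      push_cast
      ring
    | add x _ y _ hx hy =>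
      rw [map_add]
      convert add_mem hx hy using 1
      ring

theorem lowering_apply_eq_zero_of_mem_varSpan_pow {d : ℕ} {v : MvPolynomial (Fin 4 × ι) K}
    (hv : v ∈ varSpan ι K 2 ^ d) : lowering ι K v = 0 := by
  refine derivation_apply_eq_zero_of_mem_pow ?_ hv
  rintro _ ⟨i, rfl⟩
  simp [lowering]

theorem mul_mul_X_mem_sup [CharZero K] {d : ℕ} {u v : MvPolynomial (Fin 4 × ι) K}
    (hu : u ∈ varSpan ι K 0 ^ (d + 1)) (hv : v ∈ varSpan ι K 2 ^ d) (k : ι) :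
    u * v * X (2, k) ∈ entrySpan ι K * weightZeroSpan ι K ^ d ⊔
      (weightSpace ι K (d + 1) 2).map (lowering ι K).toLinearMap := by
  have hle : entrySpan ι K * varSpan ι K 0 ^ d * varSpan ι K 2 ^ d ≤
      entrySpan ι K * weightZeroSpan ι K ^ d := by
    rw [mul_assoc, ← mul_pow]
    exact mul_le_mul' le_rfl (pow_le_pow_left' le_sup_left _)
  have hentry := hle (Submodule.mul_mem_mul (lowering_mul_X_add_mem hu k) hv)
  have hlower := Submodule.mem_map_of_mem (f := (lowering ι K).toLinearMap)
    (mul_mul_X_mem_weightSpace hu hv k)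
  have hvalue : lowering ι K (u * v * X (3, k)) =
      lowering ι K u * v * X (3, k) - u * v * X (2, k) := by
    have hX : lowering ι K (X (3, k)) = -X (2, k) := by simp [lowering]
    rw [Derivation.leibniz, Derivation.leibniz, lowering_apply_eq_zero_of_mem_varSpan_pow hv, hX]
    simp only [smul_eq_mul]
    ring
  have hd : ((d + 2 : ℕ) : K) ≠ 0 := Nat.cast_ne_zero.mpr (by omega)
  refine (Submodule.smul_mem_iff _ hd).mp ?_
  convert sub_mem (Submodule.mem_sup_left hentry) (Submodule.mem_sup_right hlower) using 1
  rw [Derivation.coeFn_coe, hvalue, Nat.cast_smul_eq_nsmul, nsmul_eq_mul]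
  push_cast
  ring

theorem varSpan_mul_varSpan_pow_le [CharZero K] (d : ℕ) :
    (varSpan ι K 0 * varSpan ι K 2) ^ (d + 1) ≤ entrySpan ι K * weightZeroSpan ι K ^ d ⊔
      (weightSpace ι K (d + 1) 2).map (lowering ι K).toLinearMap := by
  rw [mul_pow, pow_succ (varSpan ι K 2), ← mul_assoc, Submodule.mul_le]
  intro p hp x hx
  induction hx using Submodule.span_induction with
  | mem x hx =>
    obtain ⟨k, rfl⟩ := hx
    induction hp using Submodule.mul_induction_on' with
    | mem_mul_mem u hu v hv => exact mul_mul_X_mem_sup hu hv k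
    | add p _ q _ hp hq => rw [add_mul]; exact add_mem hp hq
  | zero => simp
  | add x y _ _ hx hy => rw [mul_add]; exact add_mem hx hy
  | smul c x _ hx => rw [mul_smul_comm]; exact Submodule.smul_mem _ _ hx

theorem entrySpan_mul_map_lowering_le (d : ℕ) :
    entrySpan ι K * (weightSpace ι K d 2).map (lowering ι K).toLinearMap ≤
      (weightSpace ι K (d + 1) 2).map (lowering ι K).toLinearMap := by
  rw [Submodule.mul_le]
  rintro x hx _ ⟨w, hw, rfl⟩
  have hxw : x * w ∈ weightSpace ι K (d + 1) 2 := by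
    convert (entrySpan_le_weightSpace hx).mul hw using 1
    simp [weightSpace, add_comm]
  have hx0 : lowering ι K x = 0 := by
    refine derivation_apply_eq_zero_of_mem_pow (d := 1) ?_ ((pow_one (entrySpan ι K)).symm ▸ hx)
    rintro _ ⟨⟨i, j⟩, rfl⟩
    exact lowering_genericRankTwo i j
  exact ⟨x * w, hxw, by simp [hx0]⟩

theorem weightZeroSpan_pow_le [CharZero K] (d : ℕ) :
    weightZeroSpan ι K ^ d ≤
      entrySpan ι K ^ d ⊔ (weightSpace ι K d 2).map (lowering ι K).toLinearMap := by
  induction d with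
  | zero => simp
  | succ d ih =>
    have hentry : entrySpan ι K * weightZeroSpan ι K ^ d ≤ entrySpan ι K ^ (d + 1) ⊔
        (weightSpace ι K (d + 1) 2).map (lowering ι K).toLinearMap := by
      refine (mul_le_mul' le_rfl ih).trans ?_
      rw [Submodule.mul_sup, ← pow_succ']
      exact sup_le_sup le_rfl (entrySpan_mul_map_lowering_le d)
    refine (pow_succ_le_mul_pow_sup_pow weightZeroSpan_le le_sup_left d).trans (sup_le hentry ?_)
    exact (varSpan_mul_varSpan_pow_le d).trans (sup_le hentry le_sup_right)

theorem weightSpace_zero_eq_sup [Finite ι] [CharZero K] (d : ℕ) :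
    weightSpace ι K d 0 =
      entrySpan ι K ^ d ⊔ (weightSpace ι K d 2).map (lowering ι K).toLinearMap := by
  refine le_antisymm ((weightSpace_zero_le_weightZeroSpan_pow d).trans (weightZeroSpan_pow_le d))
    (sup_le (entrySpan_pow_le_weightSpace d) ?_)
  rintro _ ⟨w, hw, rfl⟩
  simpa using lowering_mem_weightSpace hw

theorem disjoint_entrySpan_pow_map_lowering [Finite ι] [CharZero K] (d : ℕ) :
    Disjoint (entrySpan ι K ^ d) ((weightSpace ι K d 2).map (lowering ι K).toLinearMap) := by
  rw [Submodule.disjoint_def]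
  rintro _ hx ⟨w, hw, rfl⟩
  have hraise : raising ι K (lowering ι K w) = 0 := by
    refine derivation_apply_eq_zero_of_mem_pow ?_ hx
    rintro _ ⟨⟨i, j⟩, rfl⟩
    exact raising_genericRankTwo i j
  rw [eq_zero_of_raising_lowering_eq_zero hw hraise, map_zero]

theorem finrank_entrySpan_pow_add [Finite ι] [CharZero K] (d : ℕ)
    [FiniteDimensional K (weightSpace ι K d 0)] :
    finrank K (entrySpan ι K ^ d : Submodule K _) + finrank K (weightSpace ι K d 2) =
      finrank K (weightSpace ι K d 0) := by
  have hinj : Function.Injective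
      ((lowering ι K).toLinearMap.domRestrict (weightSpace ι K d 2)) := by
    refine LinearMap.ker_eq_bot.mp ((Submodule.eq_bot_iff _).mpr fun w hker => Subtype.ext ?_)
    exact eq_zero_of_raising_lowering_eq_zero w.2
      ((congrArg (raising ι K) (LinearMap.mem_ker.mp hker)).trans (map_zero _))
  have hdisj := disjoint_entrySpan_pow_map_lowering (ι := ι) (K := K) d
  have hsup := weightSpace_zero_eq_sup (ι := ι) (K := K) d
  have := Submodule.finiteDimensional_of_le (hsup ▸ le_sup_left : entrySpan ι K ^ d ≤ _)
  have := Submodule.finiteDimensional_of_le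
    (hsup ▸ le_sup_right : (weightSpace ι K d 2).map (lowering ι K).toLinearMap ≤ _)
  have hdim := Submodule.finrank_sup_add_finrank_inf_eq (entrySpan ι K ^ d)
    ((weightSpace ι K d 2).map (lowering ι K).toLinearMap)
  rw [hdisj.eq_bot, finrank_bot, add_zero, ← hsup] at hdim
  rw [hdim, ← LinearMap.finrank_range_of_inj hinj, LinearMap.range_domRestrict]

end WeightDecomposition

section HilbertFunction

open Finset Module MvPolynomial

variable {ι κ K : Type*} [Field K]

section Counting

variable [Fintype ι] [Fintype κ]

open Classical in
/-- The exponents with prescribed degree in each block of variables. -/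
noncomputable def blockAntidiag (ι : Type*) [Fintype ι] (t : κ → ℕ) : Finset (κ × ι →₀ ℕ) :=
  (Fintype.piFinset fun c => (univ : Finset ι).finsuppAntidiag (t c)).map
    (Finsupp.curryEquiv.trans Finsupp.equivFunOnFinite).symm.toEmbedding

theorem mem_blockAntidiag {t : κ → ℕ} {s : κ × ι →₀ ℕ} :
    s ∈ blockAntidiag ι t ↔ blockDegree s = t := by
  simp only [blockAntidiag, mem_map_equiv, Fintype.mem_piFinset, mem_finsuppAntidiag]
  exact ⟨fun h => funext fun c => (h c).1, fun h c => ⟨congrFun h c, subset_univ _⟩⟩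

theorem card_blockAntidiag (t : κ → ℕ) :
    #(blockAntidiag ι t) = ∏ c, (Fintype.card ι).multichoose (t c) := by
  simp [blockAntidiag, card_finsuppAntidiag_nat_eq_multichoose]

theorem setOf_blockDegree_mem [DecidableEq (κ × ι →₀ ℕ)] (T : Finset (κ → ℕ)) :
    {s : κ × ι →₀ ℕ | blockDegree s ∈ T} = T.biUnion (blockAntidiag ι) := by
  ext s
  simp [mem_blockAntidiag]

theorem ncard_setOf_blockDegree_mem (T : Finset (κ → ℕ)) :
    {s : κ × ι →₀ ℕ | blockDegree s ∈ T}.ncard =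
      ∑ t ∈ T, ∏ c, (Fintype.card ι).multichoose (t c) := by
  classical
  have hdisj : (T : Set (κ → ℕ)).PairwiseDisjoint (blockAntidiag ι) := fun t _ t' _ hne =>
    disjoint_left.mpr fun s hs hs' =>
      hne ((mem_blockAntidiag.mp hs).symm.trans (mem_blockAntidiag.mp hs'))
  rw [setOf_blockDegree_mem, Set.ncard_coe_finset, card_biUnion hdisj]
  exact sum_congr rfl fun t _ => card_blockAntidiag t

end Counting

theorem weightSpace_eq_restrictSupport [Fintype ι] {d : ℕ} {h : ℤ} {T : Finset (Fin 4 → ℕ)}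
    (hT : ∀ t : Fin 4 → ℕ, t ∈ T ↔
      t 0 + t 1 = d ∧ t 2 + t 3 = d ∧ (t 0 - t 1 - t 2 + t 3 : ℤ) = h) :
    weightSpace ι K d h = restrictSupport K {s | blockDegree s ∈ T} := by
  simp only [weightSpace, weightedHomogeneousSubmodule_eq_finsupp_supported, weight_sl2Weight, hT,
    Prod.mk.injEq, restrictSupport]

theorem finrank_weightSpace [Fintype ι] {d : ℕ} {h : ℤ} {T : Finset (Fin 4 → ℕ)}
    (hT : ∀ t : Fin 4 → ℕ, t ∈ T ↔
      t 0 + t 1 = d ∧ t 2 + t 3 = d ∧ (t 0 - t 1 - t 2 + t 3 : ℤ) = h) :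
    finrank K (weightSpace ι K d h) = ∑ t ∈ T, ∏ c, (Fintype.card ι).multichoose (t c) := by
  rw [weightSpace_eq_restrictSupport hT, finrank_eq_nat_card_basis (basisRestrictSupport K _),
    Nat.card_coe_set_eq, ncard_setOf_blockDegree_mem]

theorem mem_image_antidiagonal_zero {d : ℕ} (t : Fin 4 → ℕ) :
    t ∈ (antidiagonal d).image (fun x => ![x.1, x.2, x.1, x.2]) ↔
      t 0 + t 1 = d ∧ t 2 + t 3 = d ∧ (t 0 - t 1 - t 2 + t 3 : ℤ) = 0 := by
  simp only [mem_image, HasAntidiagonal.mem_antidiagonal]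
  constructor
  · rintro ⟨x, hx, rfl⟩
    simp [hx]
  · rintro ⟨h01, h23, hh⟩
    refine ⟨(t 0, t 1), h01, funext fun c => ?_⟩
    fin_cases c <;> simp <;> omega

theorem mem_image_antidiagonal_two {d : ℕ} (t : Fin 4 → ℕ) :
    t ∈ (antidiagonal d).image (fun x => ![x.1 + 1, x.2, x.1, x.2 + 1]) ↔
      t 0 + t 1 = d + 1 ∧ t 2 + t 3 = d + 1 ∧ (t 0 - t 1 - t 2 + t 3 : ℤ) = 2 := by
  simp only [mem_image, HasAntidiagonal.mem_antidiagonal]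
  constructor
  · rintro ⟨x, hx, rfl⟩
    simp
    omega
  · rintro ⟨h01, h23, hh⟩
    refine ⟨(t 2, t 1), by dsimp only; omega, funext fun c => ?_⟩
    fin_cases c <;> simp <;> omega

instance finiteDimensional_weightSpace_zero [Finite ι] (d : ℕ) :
    FiniteDimensional K (weightSpace ι K d 0) := by
  classical
  have := Fintype.ofFinite ι
  rw [weightSpace_eq_restrictSupport mem_image_antidiagonal_zero, setOf_blockDegree_mem]
  exact Module.Finite.of_basis (basisRestrictSupport K _)

theorem finrank_entrySpan_pow_succ [Fintype ι] [CharZero K] {n : ℕ}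
    (hι : Fintype.card ι = n + 1) (d : ℕ) :
    (finrank K (entrySpan ι K ^ (d + 1) : Submodule K _) : ℝ) =
      ∑ x ∈ antidiagonal (d + 1), monomialCount n x.1 ^ 2 * monomialCount n x.2 ^ 2 -
        ∑ x ∈ antidiagonal d, monomialCount n x.1 * monomialCount n (x.1 + 1) *
          (monomialCount n x.2 * monomialCount n (x.2 + 1)) := by
  have hmultichoose (e : ℕ) : ((n + 1).multichoose e : ℝ) = monomialCount n e := by
    rw [Nat.multichoose_eq, monomialCount, Nat.choose_symm_add, add_right_comm, Nat.add_sub_cancel]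
  have hdim := finrank_entrySpan_pow_add (ι := ι) (K := K) (d + 1)
  rw [finrank_weightSpace mem_image_antidiagonal_zero,
    finrank_weightSpace mem_image_antidiagonal_two, hι] at hdim
  rw [sum_image, sum_image] at hdim
  · rw [eq_sub_iff_add_eq]
    have hcast := congrArg (Nat.cast : ℕ → ℝ) hdim
    simp only [Nat.cast_add, Nat.cast_sum, Nat.cast_mul, hmultichoose, Fin.prod_univ_four,
      Matrix.cons_val] at hcast
    convert hcast using 1
    · exact congrArg _ (sum_congr rfl fun x _ => by ring)
    · exact sum_congr rfl fun x _ => by ring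
  · exact fun x _ y _ h => Prod.ext (congrFun h 0) (congrFun h 1)
  · exact fun x _ y _ h => Prod.ext (congrFun h 2) (congrFun h 1)

end HilbertFunction

section ConvolutionGrowth

open Asymptotics Filter Finset Topology

theorem sum_antidiagonal_monomialCount (p q s : ℕ) :
    ∑ x ∈ antidiagonal s, monomialCount p x.1 * monomialCount q x.2 =
      monomialCount (p + q + 1) s := by
  have hpow : PowerSeries.mk (1 : ℕ → ℝ) ^ (p + 1) * PowerSeries.mk (1 : ℕ → ℝ) ^ (q + 1) =
      PowerSeries.mk (1 : ℕ → ℝ) ^ (p + q + 1 + 1) := by ring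
  simp only [PowerSeries.mk_one_pow_eq_mk_choose_add] at hpow
  simpa [PowerSeries.coeff_mul, monomialCount] using congrArg (PowerSeries.coeff s) hpow

theorem monomialCount_succ_mul (p d : ℕ) :
    monomialCount (p + 1) d * (p + 1) = (p + d + 1) * monomialCount p d := by
  have h := Nat.add_one_mul_choose_eq (p + d) p
  unfold monomialCount
  rw [add_right_comm p 1 d]
  exact_mod_cast h.symm

theorem tendsto_monomialCount_div_pow (p : ℕ) :
    Tendsto (fun d : ℕ => monomialCount p d / (d : ℝ) ^ p) atTop (𝓝 (p.factorial : ℝ)⁻¹) := by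
  induction p with
  | zero => simp [monomialCount]
  | succ p ih =>
    have hratio : Tendsto (fun d : ℕ => 1 + ((p : ℝ) + 1) / d) atTop (𝓝 (1 + 0)) :=
      (tendsto_const_nhds.div_atTop tendsto_natCast_atTop_atTop).const_add 1
    have hmul := (ih.mul hratio).div_const ((p : ℝ) + 1)
    have hp : (p : ℝ) + 1 ≠ 0 := by positivity
    rw [add_zero, mul_one, div_eq_mul_inv, ← mul_inv, mul_comm, ← Nat.cast_add_one, ← Nat.cast_mul,
      ← Nat.factorial_succ] at hmul
    refine hmul.congr' ?_
    filter_upwards [eventually_gt_atTop 0] with d hd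
    have hrec := monomialCount_succ_mul p d
    push_cast
    field_simp
    linear_combination -(d : ℝ) ^ (p + 1) * hrec

theorem isLittleO_monomialCount {p q : ℕ} (hpq : q < p) :
    monomialCount q =o[atTop] monomialCount p := by
  have hpow : Tendsto (fun d : ℕ => (d : ℝ) ^ q / (d : ℝ) ^ p) atTop (𝓝 0) :=
    (tendsto_pow_div_pow_atTop_zero hpq).comp tendsto_natCast_atTop_atTop
  have hlim := ((tendsto_monomialCount_div_pow q).mul hpow).div (tendsto_monomialCount_div_pow p)
    (by positivity)
  rw [mul_zero, zero_div] at hlim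
  refine (isLittleO_iff_tendsto fun d hd => absurd hd (monomialCount_pos p d).ne').mpr
    (hlim.congr' ?_)
  filter_upwards [eventually_gt_atTop 0] with d hd
  have := (monomialCount_pos p d).ne'
  simp only [Pi.div_apply]
  field_simp

theorem abs_sum_antidiagonal_mul_le {p q k : ℕ} {u v : ℕ → ℝ} {ε C : ℝ} (hε : 0 ≤ ε)
    (hu : ∀ i ≥ k, |u i| ≤ ε * monomialCount p i) (hv : ∀ j, |v j| ≤ C * monomialCount q j)
    (s : ℕ) :
    |∑ x ∈ antidiagonal s, u x.1 * v x.2| ≤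
      ε * C * monomialCount (p + q + 1) s + (∑ i ∈ range k, |u i|) * (C * monomialCount q s) := by
  have hC : 0 ≤ C := nonneg_of_mul_nonneg_left ((abs_nonneg _).trans (hv 0)) (monomialCount_pos q 0)
  have hp (i : ℕ) := (monomialCount_pos p i).le
  have hq (i : ℕ) := (monomialCount_pos q i).le
  have hterm (i : ℕ) : |u i * v (s - i)| ≤
      ε * C * (monomialCount p i * monomialCount q (s - i)) +
        (if i < k then |u i| else 0) * (C * monomialCount q s) := by
    have hmono : monomialCount q (s - i) ≤ monomialCount q s :=
      monomialCount_mono q (Nat.sub_le s i)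
    rw [abs_mul]
    split_ifs with hi
    · calc |u i| * |v (s - i)| ≤ |u i| * (C * monomialCount q s) := by
            gcongr; exact (hv _).trans (by gcongr)
        _ ≤ _ := le_add_of_nonneg_left (by have := hp i; have := hq (s - i); positivity)
    · calc |u i| * |v (s - i)| ≤ ε * monomialCount p i * (C * monomialCount q (s - i)) := by
            have := hp i
            gcongr
            exacts [hu i (not_lt.mp hi), hv _]
        _ = _ := by ring
  rw [← sum_antidiagonal_monomialCount, mul_sum, Nat.sum_antidiagonal_eq_sum_range_succ_mk,
    Nat.sum_antidiagonal_eq_sum_range_succ_mk]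
  refine (abs_sum_le_sum_abs _ _).trans ((sum_le_sum fun i _ => hterm i).trans ?_)
  rw [sum_add_distrib, ← sum_mul, ← sum_filter]
  have := hq s
  gcongr
  exact fun i hi => mem_range.mpr (mem_filter.mp hi).2

theorem isLittleO_sum_antidiagonal {p q : ℕ} {u v : ℕ → ℝ} {C : ℝ}
    (hu : u =o[atTop] monomialCount p) (hv : ∀ j, |v j| ≤ C * monomialCount q j) :
    (fun s => ∑ x ∈ antidiagonal s, u x.1 * v x.2) =o[atTop] monomialCount (p + q + 1) := by
  have hC : 0 ≤ C := nonneg_of_mul_nonneg_left ((abs_nonneg _).trans (hv 0)) (monomialCount_pos q 0)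
  refine isLittleO_iff.mpr fun c hc => ?_
  obtain ⟨ε, hε, hεC⟩ : ∃ ε > 0, ε * C ≤ c / 2 :=
    ⟨c / 2 / (C + 1), by positivity, by
      rw [div_mul_eq_mul_div, div_le_iff₀ (by positivity)]; nlinarith⟩
  obtain ⟨k, hk⟩ := eventually_atTop.mp (isLittleO_iff.mp hu hε)
  have hu' (i : ℕ) (hi : i ≥ k) : |u i| ≤ ε * monomialCount p i := by
    simpa [abs_of_pos (monomialCount_pos p i)] using hk i hi
  have hsmall := ((isLittleO_monomialCount (p := p + q + 1) (q := q) (by omega)).const_mul_left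
    ((∑ i ∈ range k, |u i|) * C))
  filter_upwards [isLittleO_iff.mp hsmall (half_pos hc)] with s hs
  have hpos := monomialCount_pos (p + q + 1) s
  rw [Real.norm_eq_abs, Real.norm_of_nonneg hpos.le] at hs ⊢
  calc _ ≤ _ := abs_sum_antidiagonal_mul_le hε.le hu' hv s
    _ ≤ c / 2 * monomialCount (p + q + 1) s + c / 2 * monomialCount (p + q + 1) s := by
      rw [← mul_assoc (∑ i ∈ range k, |u i|)]
      exact add_le_add (mul_le_mul_of_nonneg_right hεC hpos.le) ((le_abs_self _).trans hs)
    _ = c * monomialCount (p + q + 1) s := by ring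

theorem exists_abs_le_mul_monomialCount {p : ℕ} {u : ℕ → ℝ} {A : ℝ}
    (hu : Tendsto (fun i => u i / monomialCount p i) atTop (𝓝 A)) :
    ∃ C, ∀ i, |u i| ≤ C * monomialCount p i := by
  obtain ⟨C, hC⟩ := hu.norm.bddAbove_range
  refine ⟨C, fun i => ?_⟩
  have : ‖u i / monomialCount p i‖ ≤ C := hC ⟨i, rfl⟩
  rwa [norm_div, Real.norm_of_nonneg (monomialCount_pos p i).le,
    div_le_iff₀ (monomialCount_pos p i)] at this

theorem isLittleO_sub_mul_monomialCount {p : ℕ} {u : ℕ → ℝ} {A : ℝ} :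
    (fun i => u i - A * monomialCount p i) =o[atTop] monomialCount p ↔
      Tendsto (fun i => u i / monomialCount p i) atTop (𝓝 A) := by
  have hpos (i : ℕ) := (monomialCount_pos p i).ne'
  rw [isLittleO_iff_tendsto fun i hi => absurd hi (hpos i),
    ← tendsto_sub_nhds_zero_iff (u := fun i => u i / monomialCount p i)]
  exact tendsto_congr fun i => by rw [sub_div, mul_div_cancel_right₀ _ (hpos i)]

theorem tendsto_sum_antidiagonal_div_monomialCount {p q : ℕ} {u v : ℕ → ℝ} {A B : ℝ}
    (hu : Tendsto (fun i => u i / monomialCount p i) atTop (𝓝 A))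
    (hv : Tendsto (fun i => v i / monomialCount q i) atTop (𝓝 B)) :
    Tendsto (fun s => (∑ x ∈ antidiagonal s, u x.1 * v x.2) / monomialCount (p + q + 1) s) atTop
      (𝓝 (A * B)) := by
  obtain ⟨C, hC⟩ := exists_abs_le_mul_monomialCount hv
  have hleft := isLittleO_sum_antidiagonal (isLittleO_sub_mul_monomialCount.mpr hu) hC
  have hright := (isLittleO_sum_antidiagonal (v := monomialCount p)
    (isLittleO_sub_mul_monomialCount.mpr hv) (C := 1)
    fun i => by rw [one_mul, abs_of_pos (monomialCount_pos p i)]).const_mul_left A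
  rw [add_comm q p] at hright
  refine isLittleO_sub_mul_monomialCount.mp ((hleft.add hright).congr_left fun s => ?_)
  rw [← Nat.sum_antidiagonal_swap (f := fun x => (v x.1 - B * monomialCount q x.1) * _),
    ← sum_antidiagonal_monomialCount, mul_sum, mul_sum, ← sum_add_distrib, ← sum_sub_distrib]
  exact sum_congr rfl fun x _ => by simp only [Prod.fst_swap, Prod.snd_swap]; ring

theorem tendsto_pow_mul_monomialCount_sq_div (m e : ℕ) :
    Tendsto (fun i : ℕ => ((i : ℝ) ^ e * monomialCount m i ^ 2) / monomialCount (2 * m + e) i) atTop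
      (𝓝 ((2 * m + e).factorial / (m.factorial : ℝ) ^ 2)) := by
  have hlim := ((tendsto_monomialCount_div_pow m).pow 2).div
    (tendsto_monomialCount_div_pow (2 * m + e)) (by positivity)
  rw [inv_pow, inv_div_inv] at hlim
  refine hlim.congr' ?_
  filter_upwards [eventually_gt_atTop 0] with i hi
  have := (monomialCount_pos (2 * m + e) i).ne'
  simp only [Pi.div_apply]
  field_simp
  ring

end ConvolutionGrowth

section DegreeOfRankTwo

open Filter Finset Topology

/-- The degree of the projective variety of complex matrices of size `m + 2` and rank at most two,
identified with the leading coefficient of its Hilbert polynomial in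
`tendsto_finrank_entrySpan_pow_div`. -/
def rankTwoDegree (m : ℕ) : ℕ := (2 * m + 1).choose m * catalan m

theorem odd_choose_two_pow_sub_one {a j : ℕ} (hj : j < 2 ^ a) : Odd ((2 ^ a - 1).choose j) := by
  induction j with
  | zero => simp
  | succ j ih =>
    have heven : 2 ∣ (2 ^ a).choose (j + 1) := Nat.prime_two.dvd_choose_pow (by omega) hj.ne
    obtain ⟨b, hb⟩ := Nat.exists_eq_add_of_le' (Nat.one_le_two_pow (n := a))
    rw [hb, Nat.choose_succ_succ, ← even_iff_two_dvd, Nat.even_add'] at heven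
    rw [hb, Nat.add_sub_cancel] at ih ⊢
    exact heven.mp (ih (by omega))

theorem choose_two_mul_add_one (m : ℕ) : (2 * m + 1).choose m = (2 * m + 1) * catalan m := by
  have hmul := Nat.add_one_mul_choose_eq (2 * m) m
  rw [← Nat.choose_symm_half, ← Nat.centralBinom_eq_two_mul_choose,
    ← succ_mul_catalan_eq_centralBinom] at *
  exact Nat.eq_of_mul_eq_mul_right (Nat.add_one_pos m) (by rw [← hmul]; ring)

theorem odd_rankTwoDegree {k m : ℕ} (hm : m + 1 = 2 ^ k) : Odd (rankTwoDegree m) := by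
  have hchoose : Odd ((2 * m + 1).choose m) := by
    have := odd_choose_two_pow_sub_one (a := k + 1) (j := m) (by rw [pow_succ]; omega)
    rwa [pow_succ, ← hm, show (m + 1) * 2 - 1 = 2 * m + 1 by omega] at this
  exact hchoose.mul (Nat.odd_mul.mp (choose_two_mul_add_one m ▸ hchoose)).2

theorem cast_rankTwoDegree (m : ℕ) :
    (rankTwoDegree m : ℝ) =
      (2 * m).factorial * (2 * m + 1).factorial / ((m + 1).factorial * m.factorial) ^ 2 := by
  have hcatalan : catalan m * m.factorial * (m + 1).factorial = (2 * m).factorial := by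
    have h := Nat.choose_mul_factorial_mul_factorial (show m ≤ 2 * m by omega)
    rw [two_mul, Nat.add_sub_cancel, ← two_mul, ← Nat.centralBinom_eq_two_mul_choose,
      ← succ_mul_catalan_eq_centralBinom] at h
    rw [← h, Nat.factorial_succ]
    ring
  rw [eq_div_iff (by positivity), Nat.factorial_succ (2 * m), ← hcatalan, rankTwoDegree,
    choose_two_mul_add_one]
  push_cast
  ring

theorem monomialCount_succ (m i : ℕ) :
    monomialCount (m + 1) i = (m + i + 1) * monomialCount m i / (m + 1) := by
  rw [eq_div_iff (by positivity), monomialCount_succ_mul]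

theorem monomialCount_succ_eq_shift (m i : ℕ) :
    monomialCount (m + 1) i = (i + 1 : ℕ) * monomialCount m (i + 1) / (m + 1) := by
  rw [eq_div_iff (by positivity), monomialCount_succ_mul, ← monomialCount_add_one_mul]
  push_cast
  ring

theorem sum_antidiagonal_eq_zero_of_swap {f : ℕ × ℕ → ℝ} (hf : ∀ x, f x.swap = -f x) (s : ℕ) :
    ∑ x ∈ antidiagonal s, f x = 0 := by
  have h := Nat.sum_antidiagonal_swap (n := s) (f := f)
  simp only [hf, sum_neg_distrib] at h
  linarith

variable (ι K : Type*) [Fintype ι] [Field K] [CharZero K] {m : ℕ}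

theorem finrank_entrySpan_pow_eq_sub_div (hι : Fintype.card ι = m + 2) (d : ℕ) :
    (Module.finrank K ↥(entrySpan ι K ^ (d + 1)) : ℝ) =
      (∑ x ∈ antidiagonal (d + 2), (((x.1 : ℝ) ^ 0 * monomialCount m x.1 ^ 2) *
          ((x.2 : ℝ) ^ 2 * monomialCount m x.2 ^ 2)) -
        ∑ x ∈ antidiagonal (d + 2), (((x.1 : ℝ) ^ 1 * monomialCount m x.1 ^ 2) *
          ((x.2 : ℝ) ^ 1 * monomialCount m x.2 ^ 2))) / ((m : ℝ) + 1) ^ 2 := by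
  set g : ℕ → ℝ := fun i => i * monomialCount m i / (m + 1) with hg
  have hg_zero : g 0 = 0 := by simp [hg]
  have hg_succ (i : ℕ) : g (i + 1) = monomialCount (m + 1) i :=
    (monomialCount_succ_eq_shift m i).symm
  have hfirst : ∑ x ∈ antidiagonal (d + 1),
      monomialCount (m + 1) x.1 ^ 2 * monomialCount (m + 1) x.2 ^ 2 =
      ∑ x ∈ antidiagonal (d + 2), monomialCount (m + 1) x.1 ^ 2 * g x.2 ^ 2 := by
    rw [Nat.sum_antidiagonal_succ' (n := d + 1)]
    simp [hg_zero, hg_succ]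
  have hsecond : ∑ x ∈ antidiagonal d, monomialCount (m + 1) x.1 * monomialCount (m + 1) (x.1 + 1) *
      (monomialCount (m + 1) x.2 * monomialCount (m + 1) (x.2 + 1)) =
      ∑ x ∈ antidiagonal (d + 2),
        g x.1 * monomialCount (m + 1) x.1 * (g x.2 * monomialCount (m + 1) x.2) := by
    rw [Nat.sum_antidiagonal_succ' (n := d + 1), Nat.sum_antidiagonal_succ (n := d)]
    simp only [hg_zero, hg_succ, mul_zero, zero_mul, zero_add]
  have hanti := sum_antidiagonal_eq_zero_of_swap
    (f := fun x => ((x.1 : ℝ) * x.2 ^ 2 - x.1 ^ 2 * x.2) *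
      (monomialCount m x.1 ^ 2 * monomialCount m x.2 ^ 2) / (m + 1) ^ 3)
    (fun x => by simp only [Prod.fst_swap, Prod.snd_swap]; ring) (d + 2)
  rw [finrank_entrySpan_pow_succ hι, hfirst, hsecond, ← sum_sub_distrib, ← sum_sub_distrib, sum_div,
    ← sub_eq_zero, ← sum_sub_distrib, ← hanti]
  refine sum_congr rfl fun x _ => ?_
  simp only [monomialCount_succ, hg]
  field_simp
  ring

theorem tendsto_finrank_entrySpan_pow_div (hι : Fintype.card ι = m + 2) :
    Tendsto (fun d => (Module.finrank K ↥(entrySpan ι K ^ d) : ℝ) / monomialCount (4 * m + 3) d)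
      atTop (𝓝 (rankTwoDegree m)) := by
  have hlim (e : ℕ) := tendsto_pow_mul_monomialCount_sq_div m e
  have hfirst := tendsto_sum_antidiagonal_div_monomialCount (hlim 0) (hlim 2)
  have hsecond := tendsto_sum_antidiagonal_div_monomialCount (hlim 1) (hlim 1)
  rw [show 2 * m + 0 + (2 * m + 2) + 1 = 4 * m + 3 by ring] at hfirst
  rw [show 2 * m + 1 + (2 * m + 1) + 1 = 4 * m + 3 by ring] at hsecond
  have hshift := (((hfirst.sub hsecond).div_const (((m : ℝ) + 1) ^ 2)).comp
    (tendsto_add_atTop_nat 1)).mul (tendsto_monomialCount_add_div (4 * m + 3) 1)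
  have hconst : ((2 * m + 0).factorial / (m.factorial : ℝ) ^ 2 *
      ((2 * m + 2).factorial / (m.factorial : ℝ) ^ 2) -
      (2 * m + 1).factorial / (m.factorial : ℝ) ^ 2 *
      ((2 * m + 1).factorial / (m.factorial : ℝ) ^ 2)) / ((m : ℝ) + 1) ^ 2 * 1 =
      rankTwoDegree m := by
    rw [cast_rankTwoDegree, add_zero, Nat.factorial_succ (2 * m + 1), Nat.factorial_succ (2 * m),
      Nat.factorial_succ m]
    push_cast
    field_simp
    ring
  rw [hconst] at hshift
  refine hshift.congr' ?_
  filter_upwards [eventually_gt_atTop 0] with d hd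
  obtain ⟨d, rfl⟩ := Nat.exists_eq_add_of_le' hd
  have hpos := (monomialCount_pos (4 * m + 3) (d + 2)).ne'
  rw [finrank_entrySpan_pow_eq_sub_div ι K hι]
  simp only [Function.comp]
  field_simp

theorem tendsto_sum_finrank_entrySpan_pow_div (hι : Fintype.card ι = m + 2) :
    Tendsto (fun d => (∑ e ∈ range (d + 1), (Module.finrank K ↥(entrySpan ι K ^ e) : ℝ)) /
      monomialCount (4 * (m + 1)) d) atTop (𝓝 (rankTwoDegree m)) := by
  have hone : Tendsto (fun i => (fun _ : ℕ => (1 : ℝ)) i / monomialCount 0 i) atTop (𝓝 1) := by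
    simp [monomialCount]
  have h := tendsto_sum_antidiagonal_div_monomialCount
    (tendsto_finrank_entrySpan_pow_div ι K hι) hone
  rw [mul_one] at h
  refine h.congr fun d => ?_
  rw [Nat.sum_antidiagonal_eq_sum_range_succ_mk]
  simp [show 4 * m + 3 + 0 + 1 = 4 * (m + 1) by ring]

end DegreeOfRankTwo

section TotallyReal

open Module TensorProduct

variable {V : Type*} [AddCommGroup V] [Module ℂ V] {_ : Module ℝ V}

/-- A real subspace `M` of a complex vector space with `M ∩ iM = 0`, so that the complex span of
`M` is its complexification. -/
def IsTotallyReal (M : Submodule ℝ V) : Prop :=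
  ∀ v ∈ M, Complex.I • v ∈ M → v = 0

theorem IsTotallyReal.mono {M N : Submodule ℝ V} (hM : IsTotallyReal M) (hNM : N ≤ M) :
    IsTotallyReal N :=
  fun v hv hIv => hM v (hNM hv) (hNM hIv)

theorem IsTotallyReal.eq_zero_of_add_I_smul_eq_zero {M : Submodule ℝ V} (hM : IsTotallyReal M)
    {u v : V} (hu : u ∈ M) (hv : v ∈ M) (huv : u + Complex.I • v = 0) : u = 0 ∧ v = 0 := by
  obtain rfl : v = 0 := hM v hv (eq_neg_of_add_eq_zero_right huv ▸ M.neg_mem hu)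
  exact ⟨by simpa using huv, rfl⟩

variable [IsScalarTower ℝ ℂ V]

theorem smul_eq_re_smul_add_I_smul (c : ℂ) (v : V) :
    c • v = c.re • v + Complex.I • c.im • v := by
  rw [← algebraMap_smul ℂ c.re v, ← algebraMap_smul ℂ c.im v, smul_smul, ← add_smul, mul_comm]
  exact congrArg (· • v) (Complex.re_add_im c).symm

theorem exists_eq_add_I_smul_of_mem_span {M : Submodule ℝ V} {x : V}
    (hx : x ∈ Submodule.span ℂ (M : Set V)) : ∃ u ∈ M, ∃ v ∈ M, x = u + Complex.I • v := by
  induction hx using Submodule.span_induction with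
  | mem x hx => exact ⟨x, hx, 0, M.zero_mem, by simp⟩
  | zero => exact ⟨0, M.zero_mem, 0, M.zero_mem, by simp⟩
  | add x y _ _ hx hy =>
    obtain ⟨u, hu, v, hv, rfl⟩ := hx
    obtain ⟨u', hu', v', hv', rfl⟩ := hy
    exact ⟨u + u', M.add_mem hu hu', v + v', M.add_mem hv hv', by rw [smul_add]; abel⟩
  | smul c x _ hx =>
    obtain ⟨u, hu, v, hv, rfl⟩ := hx
    refine ⟨c.re • u - c.im • v, M.sub_mem (M.smul_mem _ hu) (M.smul_mem _ hv),
      c.re • v + c.im • u, M.add_mem (M.smul_mem _ hv) (M.smul_mem _ hu), ?_⟩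
    rw [smul_add, smul_comm c, smul_eq_re_smul_add_I_smul c u, smul_eq_re_smul_add_I_smul c v,
      smul_add Complex.I, smul_smul Complex.I Complex.I, Complex.I_mul_I, neg_one_smul, smul_add]
    abel

theorem IsTotallyReal.mem_of_mem_span {M N : Submodule ℝ V} (hM : IsTotallyReal M) (hNM : N ≤ M)
    {x : V} (hxM : x ∈ M) (hx : x ∈ Submodule.span ℂ (N : Set V)) : x ∈ N := by
  obtain ⟨u, hu, v, hv, rfl⟩ := exists_eq_add_I_smul_of_mem_span hx
  obtain rfl : v = 0 := hM v (hNM hv) ((M.add_mem_iff_right (hNM hu)).mp hxM)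
  simpa using hu

theorem IsTotallyReal.linearIndependent {M : Submodule ℝ V} (hM : IsTotallyReal M) {κ : Type*}
    [Finite κ] {b : κ → V} (hb : ∀ i, b i ∈ M) (hli : LinearIndependent ℝ b) :
    LinearIndependent ℂ b := by
  cases nonempty_fintype κ
  rw [Fintype.linearIndependent_iff] at hli ⊢
  intro c hc
  have hsum : ∑ i, (c i).re • b i + Complex.I • ∑ i, (c i).im • b i = 0 := by
    simpa only [smul_eq_re_smul_add_I_smul (c _), Finset.sum_add_distrib, ← Finset.smul_sum]
      using hc
  obtain ⟨hre, him⟩ := hM.eq_zero_of_add_I_smul_eq_zero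
    (M.sum_mem fun i _ => M.smul_mem _ (hb i)) (M.sum_mem fun i _ => M.smul_mem _ (hb i)) hsum
  exact fun i => Complex.ext (hli _ hre i) (hli _ him i)

theorem IsTotallyReal.finrank_span {M : Submodule ℝ V} [Module.Finite ℝ M]
    (hM : IsTotallyReal M) : finrank ℂ (Submodule.span ℂ (M : Set V)) = finrank ℝ M := by
  set b := finBasis ℝ M
  have hli : LinearIndependent ℝ fun i => (b i : V) :=
    b.linearIndependent.map' M.subtype M.ker_subtype
  have hspan : Submodule.span ℝ (Set.range fun i => (b i : V)) = M := by
    have := congrArg (Submodule.map M.subtype) b.span_eq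
    rwa [Submodule.map_span, Submodule.map_top, Submodule.range_subtype, ← Set.range_comp] at this
  have hcard := finrank_span_eq_card (hM.linearIndependent (fun i => (b i).2) hli)
  rwa [← Submodule.span_span_of_tower ℝ ℂ, hspan, Fintype.card_fin] at hcard

variable {A : Type*} [CommRing A] [Algebra ℂ A] [Algebra ℝ A] [IsScalarTower ℝ ℂ A]

theorem IsTotallyReal.injective_lift {B : Subalgebra ℝ A}
    (hB : IsTotallyReal (Subalgebra.toSubmodule B)) :
    Function.Injective (Algebra.TensorProduct.lift (Algebra.ofId ℂ A) B.val
      fun _ _ => Commute.all _ _) := by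
  have hsplit (x : ℂ ⊗[ℝ] B) : ∃ u v : B, x = 1 ⊗ₜ u + Complex.I ⊗ₜ v := by
    induction x using TensorProduct.induction_on with
    | zero => exact ⟨0, 0, by simp⟩
    | tmul c b =>
      refine ⟨c.re • b, c.im • b, ?_⟩
      rw [← TensorProduct.smul_tmul, ← TensorProduct.smul_tmul, ← TensorProduct.add_tmul]
      rw [Complex.real_smul, Complex.real_smul, mul_one, Complex.re_add_im]
    | add x y hx hy =>
      obtain ⟨u, v, rfl⟩ := hx
      obtain ⟨u', v', rfl⟩ := hy
      exact ⟨u + u', v + v', by rw [TensorProduct.tmul_add, TensorProduct.tmul_add]; abel⟩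
  refine (injective_iff_map_eq_zero _).mpr fun x hx => ?_
  obtain ⟨u, v, rfl⟩ := hsplit x
  rw [map_add, Algebra.TensorProduct.lift_tmul, Algebra.TensorProduct.lift_tmul, map_one, one_mul,
    Algebra.ofId_apply, ← Algebra.smul_def] at hx
  obtain ⟨hu, hv⟩ := hB.eq_zero_of_add_I_smul_eq_zero u.2 v.2 hx
  simp_all

theorem IsTotallyReal.exists_algHom_extension {B : Subalgebra ℝ A}
    (hB : IsTotallyReal (Subalgebra.toSubmodule B)) (χ : B →ₐ[ℝ] ℝ) :
    ∃ χ' : Algebra.adjoin ℂ (B : Set A) →ₐ[ℂ] ℂ,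
      ∀ b : B, χ' ⟨b, Algebra.subset_adjoin b.2⟩ = χ b := by
  set φ := Algebra.TensorProduct.lift (Algebra.ofId ℂ A) B.val fun _ _ => Commute.all _ _
  have hφ (b : B) : φ (1 ⊗ₜ b) = b := by simp [φ]
  have hrange : Algebra.adjoin ℂ (B : Set A) ≤ φ.range :=
    Algebra.adjoin_le fun b hb => ⟨1 ⊗ₜ ⟨b, hb⟩, hφ ⟨b, hb⟩⟩
  set e := AlgEquiv.ofInjective φ hB.injective_lift
  refine ⟨((Algebra.TensorProduct.lift (AlgHom.id ℂ ℂ) (Complex.ofRealAm.comp χ)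
    fun _ _ => Commute.all _ _).comp e.symm.toAlgHom).comp (Subalgebra.inclusion hrange),
    fun b => ?_⟩
  have he : e.symm ⟨b, hrange (Algebra.subset_adjoin b.2)⟩ = 1 ⊗ₜ b :=
    e.symm_apply_eq.mpr (Subtype.ext (hφ b).symm)
  simp [Subalgebra.inclusion, he]

end TotallyReal

section CumulativePowers

open Module MvPolynomial

theorem one_sup_pow_succ {R A : Type*} [CommSemiring R] [Semiring A] [Algebra R A]
    (M : Submodule R A) (d : ℕ) : (1 ⊔ M) ^ (d + 1) = (1 ⊔ M) ^ d ⊔ M ^ (d + 1) := by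
  refine le_antisymm ?_ (sup_le (pow_le_pow_right₀ le_sup_left d.le_succ)
    (pow_le_pow_left' le_sup_right _))
  induction d with
  | zero => simp
  | succ d ih =>
    calc (1 ⊔ M) ^ (d + 2)
        = (1 ⊔ M) ^ (d + 1) ⊔ (1 ⊔ M) ^ (d + 1) * M := by
          rw [pow_succ _ (d + 1), Submodule.mul_sup, mul_one]
      _ ≤ (1 ⊔ M) ^ (d + 1) ⊔ ((1 ⊔ M) ^ d * (1 ⊔ M) ⊔ M ^ (d + 1) * M) := by
          refine sup_le_sup_left ((mul_le_mul' ih le_rfl).trans ?_) _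
          rw [Submodule.sup_mul]
          exact sup_le_sup_right (mul_le_mul' le_rfl le_sup_right) _
      _ = (1 ⊔ M) ^ (d + 1) ⊔ M ^ (d + 2) := by
          rw [← pow_succ, ← pow_succ, ← sup_assoc, sup_idem]

theorem finite_one_sup_pow {R A : Type*} [CommSemiring R] [Semiring A] [Algebra R A]
    (M : Submodule R A) [Module.Finite R M] (d : ℕ) : Module.Finite R ↥((1 ⊔ M) ^ d) := by
  have hM : M.FG := Module.Finite.iff_fg.mp inferInstance
  exact Module.Finite.iff_fg.mpr (((pow_zero M ▸ hM.pow 0).sup hM).pow d)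

variable {σ K : Type*} [Field K] {M : Submodule K (MvPolynomial σ K)} {m : ℕ}

theorem one_sup_pow_le_restrictTotalDegree (hM : M ≤ homogeneousSubmodule σ K m) (d : ℕ) :
    (1 ⊔ M) ^ d ≤ restrictTotalDegree σ K (d * m) := by
  induction d with
  | zero => simp [Submodule.one_le, mem_restrictTotalDegree]
  | succ d ih =>
    rw [one_sup_pow_succ]
    refine sup_le (fun x hx => ?_) fun x hx => ?_ <;> rw [mem_restrictTotalDegree]
    · exact ((mem_restrictTotalDegree _ _ _).mp (ih hx)).trans (by gcongr; exact d.le_succ)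
    · exact (show x.IsHomogeneous _ from
        pow_le_weightedHomogeneousSubmodule hM (d + 1) hx).totalDegree_le

theorem finrank_one_sup_pow [FiniteDimensional K M] (hM : M ≤ homogeneousSubmodule σ K m)
    (hm : 0 < m) (d : ℕ) :
    finrank K ↥((1 ⊔ M) ^ d) = ∑ e ∈ Finset.range (d + 1), finrank K ↥(M ^ e) := by
  induction d with
  | zero => rw [Finset.sum_range_one, pow_zero, pow_zero]
  | succ d ih =>
    have hdisj : (1 ⊔ M) ^ d ⊓ M ^ (d + 1) = ⊥ := by
      refine eq_bot_iff.mpr fun x ⟨hxle, hxeq⟩ => by_contra fun hx => ?_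
      have hlt := (mem_restrictTotalDegree _ _ _).mp (one_sup_pow_le_restrictTotalDegree hM d hxle)
      have heq : x.IsHomogeneous _ := pow_le_weightedHomogeneousSubmodule hM (d + 1) hxeq
      rw [heq.totalDegree hx, smul_eq_mul, add_mul] at hlt
      omega
    have : FiniteDimensional K ↥(M ^ (d + 1)) :=
      Module.Finite.iff_fg.mpr ((Module.Finite.iff_fg.mp ‹_›).pow _)
    have := finite_one_sup_pow M d
    rw [one_sup_pow_succ, Finset.sum_range_succ, ← ih, ← Submodule.finrank_sup_add_finrank_inf_eq,
      hdisj, finrank_bot, add_zero]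

end CumulativePowers

section TraceForm

variable {ι K A B : Type*} [Fintype ι] [CommSemiring K] [Semiring A] [Algebra K A]
  [Semiring B] [Algebra K B]

/-- The linear form `C ↦ tr (C Z)` on matrices over `K`, where `Z` has entries in a
`K`-algebra. -/
def traceForm (Z : Matrix ι ι A) : Matrix ι ι K →ₗ[K] A where
  toFun C := ∑ i, ∑ j, C i j • Z j i
  map_add' C D := by simp only [Matrix.add_apply, add_smul, Finset.sum_add_distrib]
  map_smul' c C := by simp only [Matrix.smul_apply, smul_assoc, Finset.smul_sum, RingHom.id_apply]

theorem traceForm_apply (Z : Matrix ι ι A) (C : Matrix ι ι K) :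
    traceForm Z C = ∑ i, ∑ j, C i j • Z j i :=
  rfl

theorem traceForm_self (Z C : Matrix ι ι K) : traceForm Z C = trace (C * Z) := by
  simp only [traceForm_apply, trace, diag_apply, mul_apply, smul_eq_mul]

theorem traceForm_single [DecidableEq ι] (Z : Matrix ι ι A) (i j : ι) (c : K) :
    traceForm Z (single i j c) = c • Z j i := by
  simp [traceForm_apply, single_apply, ite_and]

theorem map_traceForm (f : A →ₐ[K] B) (Z : Matrix ι ι A) (C : Matrix ι ι K) :
    f (traceForm Z C) = traceForm (Z.map f) C := by
  simp only [traceForm_apply, map_sum, map_smul, map_apply]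

theorem range_traceForm (Z : Matrix ι ι A) :
    LinearMap.range (traceForm (K := K) Z) =
      Submodule.span K (Set.range fun p : ι × ι => Z p.1 p.2) := by
  classical
  refine le_antisymm ?_ (Submodule.span_le.mpr ?_)
  · rintro _ ⟨C, rfl⟩
    exact Submodule.sum_mem _ fun i _ => Submodule.sum_mem _ fun j _ =>
      Submodule.smul_mem _ _ (Submodule.subset_span ⟨(j, i), rfl⟩)
  · rintro _ ⟨⟨i, j⟩, rfl⟩
    exact ⟨single j i 1, by rw [traceForm_single, one_smul]⟩

theorem range_traceForm_genericRankTwo (ι K : Type*) [Fintype ι] [Field K] :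
    LinearMap.range (traceForm (K := K) (genericRankTwo ι K)) = entrySpan ι K :=
  range_traceForm _

end TraceForm

section RealForm

open Module MvPolynomial Filter Topology
open scoped ComplexConjugate

variable (ι : Type*)

/-- The conjugate-linear involution exchanging `a`, `b` with `c`, `d`; it sends the generic matrix
of rank two to its transpose, so it is the real structure whose real points are the Hermitian
matrices. -/
noncomputable def conjSwap : MvPolynomial (Fin 4 × ι) ℂ →ₐ[ℝ] MvPolynomial (Fin 4 × ι) ℂ :=
  ((rename fun v => ((![2, 3, 0, 1] : Fin 4 → Fin 4) v.1, v.2)).restrictScalars ℝ).comp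
    (mapAlgHom Complex.conjAe.toAlgHom)

variable {ι}

theorem conjSwap_smul (c : ℂ) (p : MvPolynomial (Fin 4 × ι) ℂ) :
    conjSwap ι (c • p) = conj c • conjSwap ι p := by
  rw [smul_eq_C_mul, map_mul, smul_eq_C_mul]
  congr 1
  simp [conjSwap]

theorem conjSwap_genericRankTwo (i j : ι) :
    conjSwap ι (genericRankTwo ι ℂ i j) = genericRankTwo ι ℂ j i := by
  simp [conjSwap, genericRankTwo, mul_comm]

theorem conjSwap_traceForm [Fintype ι] (C : Matrix ι ι ℂ) :
    conjSwap ι (traceForm (genericRankTwo ι ℂ) C) = traceForm (genericRankTwo ι ℂ) Cᴴ := by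
  simp only [traceForm_apply, map_sum, conjSwap_smul, conjSwap_genericRankTwo,
    conjTranspose_apply]
  exact Finset.sum_comm

theorem isTotallyReal_equalizer_conjSwap :
    IsTotallyReal (Subalgebra.toSubmodule
      (AlgHom.equalizer (conjSwap ι) (AlgHom.id ℝ _))) := by
  intro v (hv : conjSwap ι v = v) (hIv : conjSwap ι (Complex.I • v) = Complex.I • v)
  rw [conjSwap_smul, hv, Complex.conj_I, neg_smul, eq_comm, self_eq_neg] at hIv
  exact (smul_eq_zero.mp hIv).resolve_left Complex.I_ne_zero

theorem entrySpan_le_homogeneousSubmodule (K : Type*) [Field K] :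
    entrySpan ι K ≤ homogeneousSubmodule (Fin 4 × ι) K 2 := by
  rw [entrySpan, Submodule.span_le]
  rintro _ ⟨⟨i, j⟩, rfl⟩
  exact ((isHomogeneous_X K _).mul (isHomogeneous_X K _)).add
    ((isHomogeneous_X K _).mul (isHomogeneous_X K _))

variable (ι) [Fintype ι]

/-- The real span of the coordinates, in a real basis of the Hermitian matrices, of the generic
Hermitian matrix of rank two. -/
noncomputable def hermitianSpan : Submodule ℝ (MvPolynomial (Fin 4 × ι) ℂ) :=
  (selfAdjoint.submodule ℝ (Matrix ι ι ℂ)).map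
    ((traceForm (genericRankTwo ι ℂ)).restrictScalars ℝ)

instance : FiniteDimensional ℝ (hermitianSpan ι) := by
  unfold hermitianSpan; infer_instance

variable {ι}

theorem traceForm_mem_hermitianSpan {C : Matrix ι ι ℂ} (hC : C.IsHermitian) :
    traceForm (genericRankTwo ι ℂ) C ∈ hermitianSpan ι :=
  ⟨C, hC, rfl⟩

theorem span_hermitianSpan :
    Submodule.span ℂ (hermitianSpan ι : Set (MvPolynomial (Fin 4 × ι) ℂ)) = entrySpan ι ℂ := by
  have hcoe : (hermitianSpan ι : Set (MvPolynomial (Fin 4 × ι) ℂ)) =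
      traceForm (K := ℂ) (genericRankTwo ι ℂ) '' (selfAdjoint (Matrix ι ι ℂ)) := rfl
  rw [hcoe, Submodule.span_image, span_selfAdjoint, Submodule.map_top,
    range_traceForm_genericRankTwo]

theorem adjoin_hermitianSpan_le :
    Algebra.adjoin ℝ ((1 ⊔ hermitianSpan ι : Submodule ℝ _) : Set (MvPolynomial (Fin 4 × ι) ℂ)) ≤
      AlgHom.equalizer (conjSwap ι) (AlgHom.id ℝ _) := by
  suffices h : 1 ⊔ hermitianSpan ι ≤ Subalgebra.toSubmodule
    (AlgHom.equalizer (conjSwap ι) (AlgHom.id ℝ _)) from Algebra.adjoin_le h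
  refine sup_le (Submodule.one_le.mpr (one_mem (AlgHom.equalizer _ _))) ?_
  rintro _ ⟨C, hC : Cᴴ = C, rfl⟩
  change conjSwap ι (traceForm (genericRankTwo ι ℂ) C) = traceForm (genericRankTwo ι ℂ) C
  rw [conjSwap_traceForm, hC]

theorem isTotallyReal_adjoin_hermitianSpan (ι : Type*) [Fintype ι] :
    IsTotallyReal (Subalgebra.toSubmodule (Algebra.adjoin ℝ
      ((1 ⊔ hermitianSpan ι : Submodule ℝ _) : Set (MvPolynomial (Fin 4 × ι) ℂ)))) :=
  isTotallyReal_equalizer_conjSwap.mono adjoin_hermitianSpan_le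

theorem isTotallyReal_one_sup_hermitianSpan_pow (d : ℕ) :
    IsTotallyReal ((1 ⊔ hermitianSpan ι) ^ d) := by
  refine (isTotallyReal_adjoin_hermitianSpan ι).mono ?_
  conv_lhs => rw [← Submodule.span_eq (1 ⊔ hermitianSpan ι)]
  exact span_pow_le_toSubmodule_adjoin _ d

theorem span_pow_of_tower {R S A : Type*} [CommSemiring R] [CommSemiring S] [Algebra R S]
    [CommSemiring A] [Algebra R A] [Algebra S A] [IsScalarTower R S A] (M : Submodule R A)
    (d : ℕ) : Submodule.span S ((M ^ d : Submodule R A) : Set A) =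
      Submodule.span S (M : Set A) ^ d := by
  conv_lhs => rw [← Submodule.span_eq M, Submodule.span_pow, Submodule.span_span_of_tower]
  rw [Submodule.span_pow]

theorem span_one_sup_of_tower {R S A : Type*} [CommSemiring R] [CommSemiring S] [Algebra R S]
    [CommSemiring A] [Algebra R A] [Algebra S A] [IsScalarTower R S A] (M : Submodule R A) :
    Submodule.span S ((1 ⊔ M : Submodule R A) : Set A) = 1 ⊔ Submodule.span S (M : Set A) := by
  conv_lhs => rw [← Submodule.span_eq M, Submodule.one_eq_span, ← Submodule.span_insert,
    Submodule.span_span_of_tower]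
  rw [Submodule.span_insert, Submodule.one_eq_span]

theorem finrank_one_sup_hermitianSpan_pow (d : ℕ) :
    finrank ℝ ↥((1 ⊔ hermitianSpan ι) ^ d) =
      ∑ e ∈ Finset.range (d + 1), finrank ℂ ↥(entrySpan ι ℂ ^ e) := by
  have := finite_one_sup_pow (hermitianSpan ι) d
  have : FiniteDimensional ℂ (entrySpan ι ℂ) := .span_of_finite ℂ (Set.finite_range _)
  rw [← (isTotallyReal_one_sup_hermitianSpan_pow d).finrank_span, span_pow_of_tower,
    span_one_sup_of_tower, span_hermitianSpan,
    finrank_one_sup_pow (entrySpan_le_homogeneousSubmodule ℂ) two_pos]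

theorem tendsto_finrank_one_sup_hermitianSpan_pow_div {m : ℕ} (hι : Fintype.card ι = m + 2) :
    Tendsto (fun d => finrank ℝ ↥((1 ⊔ hermitianSpan ι) ^ d) / monomialCount (4 * (m + 1)) d)
      atTop (𝓝 (rankTwoDegree m)) := by
  simpa only [finrank_one_sup_hermitianSpan_pow, Nat.cast_sum] using
    tendsto_sum_finrank_entrySpan_pow_div ι ℂ hι

end RealForm

section HermitianPoints

open Module MvPolynomial

variable {ι σ : Type*}

/-- All `3 × 3` minors vanish; over a field this says that the rank is at most two, and it makes
sense over every commutative ring. -/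
def HasRankLeTwo {A : Type*} [CommRing A] (Z : Matrix ι ι A) : Prop :=
  ∀ r c : Fin 3 → ι, (Z.submatrix r c).det = 0

theorem HasRankLeTwo.map {A B : Type*} [CommRing A] [CommRing B] {Z : Matrix ι ι A}
    (hZ : HasRankLeTwo Z) (f : A →+* B) : HasRankLeTwo (Z.map f) := fun r c => by
  rw [submatrix_map, ← RingHom.mapMatrix_apply, ← RingHom.map_det, hZ r c, map_zero]

theorem HasRankLeTwo.of_map {A B : Type*} [CommRing A] [CommRing B] {Z : Matrix ι ι A}
    {f : A →+* B} (hf : Function.Injective f) (hZ : HasRankLeTwo (Z.map f)) : HasRankLeTwo Z :=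
  fun r c => hf <| by
    rw [map_zero, RingHom.map_det, RingHom.mapMatrix_apply, ← submatrix_map, hZ r c]

theorem hasRankLeTwo_genericRankTwo (ι K : Type*) [Field K] :
    HasRankLeTwo (genericRankTwo ι K) := fun r c => by
  rw [det_fin_three]
  simp only [genericRankTwo, submatrix_apply, of_apply]
  ring

/-- In degree `d + 1`, the coordinate ring of the matrices of rank at most two coincides with its
ideal generated by the linear forms `tr (C k * Z)`. By Noether normalisation this means that
`Z ↦ tr (C k * Z)` is a finite map. -/
def GeneratesInDegree {K : Type*} [Field K] [Fintype ι] (C : σ → Matrix ι ι K) (d : ℕ) : Prop :=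
  entrySpan ι K ^ (d + 1) ≤
    Submodule.span K (Set.range fun k => traceForm (genericRankTwo ι K) (C k)) * entrySpan ι K ^ d

theorem span_mul_of_tower {R S A : Type*} [CommSemiring R] [CommSemiring S] [Algebra R S]
    [CommSemiring A] [Algebra R A] [Algebra S A] [IsScalarTower R S A] (M N : Submodule R A) :
    Submodule.span S ((M * N : Submodule R A) : Set A) =
      Submodule.span S (M : Set A) * Submodule.span S (N : Set A) := by
  conv_lhs => rw [← Submodule.span_eq M, ← Submodule.span_eq N, Submodule.span_mul_span,
    Submodule.span_span_of_tower]
  rw [Submodule.span_mul_span]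

variable [Fintype ι] {C : σ → Matrix ι ι ℂ} {d : ℕ}

theorem GeneratesInDegree.one_sup_hermitianSpan_pow_succ_le (hgen : GeneratesInDegree C d)
    (hC : ∀ k, (C k).IsHermitian) :
    (1 ⊔ hermitianSpan ι) ^ (d + 1) ≤ Submodule.span ℝ
        (insert 1 (Set.range fun k => traceForm (genericRankTwo ι ℂ) (C k))) *
      (1 ⊔ hermitianSpan ι) ^ d := by
  set lam := fun k => traceForm (genericRankTwo ι ℂ) (C k)
  have hpow (e : ℕ) : hermitianSpan ι ^ e ≤ (1 ⊔ hermitianSpan ι) ^ e :=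
    pow_le_pow_left' le_sup_right e
  have hlam : Submodule.span ℝ (Set.range lam) ≤ hermitianSpan ι := by
    rw [Submodule.span_le]
    rintro _ ⟨k, rfl⟩
    exact traceForm_mem_hermitianSpan (hC k)
  have hreal : hermitianSpan ι ^ (d + 1) ≤
      Submodule.span ℝ (Set.range lam) * hermitianSpan ι ^ d := fun x hx => by
    refine (isTotallyReal_one_sup_hermitianSpan_pow (d + 1)).mem_of_mem_span ?_ (hpow _ hx) ?_
    · exact (mul_le_mul' hlam le_rfl).trans ((pow_succ' _ d).ge.trans (hpow _))
    · rw [span_mul_of_tower, span_pow_of_tower, Submodule.span_span_of_tower, span_hermitianSpan]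
      refine hgen ?_
      rw [← span_hermitianSpan, ← span_pow_of_tower]
      exact Submodule.subset_span hx
  rw [Submodule.span_insert, ← Submodule.one_eq_span, one_sup_pow_succ, Submodule.sup_mul, one_mul]
  exact sup_le_sup_left (hreal.trans (mul_le_mul' le_rfl (hpow d))) _

theorem isHermitian_of_forall_trace_mul {Z : Matrix ι ι ℂ}
    (hZ : ∀ C : Matrix ι ι ℂ, C.IsHermitian → star (trace (C * Z)) = trace (C * Z)) :
    Z.IsHermitian := by
  refine ext_iff_trace_mul_left.mpr fun C => ?_
  have hC : C ∈ Submodule.span ℂ (selfAdjoint (Matrix ι ι ℂ) : Set (Matrix ι ι ℂ)) :=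
    span_selfAdjoint (A := Matrix ι ι ℂ) ▸ Submodule.mem_top
  induction hC using Submodule.span_induction with
  | mem C hC =>
    rw [← hZ C hC, ← trace_conjTranspose, conjTranspose_mul, (show Cᴴ = C from hC), trace_mul_comm]
  | zero => simp
  | add C D _ _ hC hD => rw [add_mul, add_mul, trace_add, trace_add, hC, hD]
  | smul c C _ hC => rw [smul_mul, smul_mul, trace_smul, trace_smul, hC]

theorem traceForm_mem_adjoin {C : Matrix ι ι ℂ} (hC : C.IsHermitian) :
    traceForm (genericRankTwo ι ℂ) C ∈ Algebra.adjoin ℝ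
      ((1 ⊔ hermitianSpan ι : Submodule ℝ _) : Set (MvPolynomial (Fin 4 × ι) ℂ)) :=
  Algebra.subset_adjoin (Submodule.mem_sup_right (traceForm_mem_hermitianSpan hC))

theorem exists_isHermitian_of_algHom (χ : Algebra.adjoin ℝ
      ((1 ⊔ hermitianSpan ι : Submodule ℝ _) : Set (MvPolynomial (Fin 4 × ι) ℂ)) →ₐ[ℝ] ℝ) :
    ∃ Z : Matrix ι ι ℂ, Z.IsHermitian ∧ HasRankLeTwo Z ∧
      ∀ (C : Matrix ι ι ℂ) (hC : C.IsHermitian),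
        trace (C * Z) = χ ⟨_, traceForm_mem_adjoin hC⟩ := by
  obtain ⟨χ', hχ'⟩ := (isTotallyReal_adjoin_hermitianSpan ι).exists_algHom_extension χ
  have hmem (i j : ι) : genericRankTwo ι ℂ i j ∈ Algebra.adjoin ℂ (Algebra.adjoin ℝ
      ((1 ⊔ hermitianSpan ι : Submodule ℝ _) : Set (MvPolynomial (Fin 4 × ι) ℂ)) : Set _) := by
    have hspan : genericRankTwo ι ℂ i j ∈ entrySpan ι ℂ := Submodule.subset_span ⟨(i, j), rfl⟩
    rw [← span_hermitianSpan] at hspan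
    refine (Submodule.span_le.mpr fun x hx => ?_ :
      Submodule.span ℂ _ ≤ Subalgebra.toSubmodule (Algebra.adjoin ℂ _)) hspan
    exact Algebra.subset_adjoin (Algebra.subset_adjoin (Submodule.mem_sup_right hx))
  let Y : Matrix ι ι (Algebra.adjoin ℂ _) := of fun i j => ⟨genericRankTwo ι ℂ i j, hmem i j⟩
  have htrace (C : Matrix ι ι ℂ) (hC : C.IsHermitian) :
      trace (C * Y.map χ') = χ ⟨_, traceForm_mem_adjoin hC⟩ := by
    rw [← traceForm_self, ← map_traceForm, ← hχ']
    exact congrArg χ' (Subtype.ext (map_traceForm (Subalgebra.val _) Y C))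
  refine ⟨Y.map χ', isHermitian_of_forall_trace_mul fun C hC => ?_, ?_, htrace⟩
  · rw [htrace C hC]
    exact Complex.conj_ofReal _
  · have hY : HasRankLeTwo Y := .of_map (f := (Subalgebra.val _).toRingHom)
      Subtype.val_injective (hasRankLeTwo_genericRankTwo ι ℂ)
    exact hY.map χ'.toRingHom

variable [Fintype σ]

theorem GeneratesInDegree.exists_hermitian_trace_eq_of_eval_ne_zero {k : ℕ}
    (hgen : GeneratesInDegree C d) (hC : ∀ k, (C k).IsHermitian)
    (hι : Fintype.card ι = 2 ^ k + 1) (hσ : Fintype.card σ = 4 * 2 ^ k) :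
    ∃ g : MvPolynomial σ ℝ, g ≠ 0 ∧ ∀ y : σ → ℝ, eval y g ≠ 0 →
      ∃ Z : Matrix ι ι ℂ, Z.IsHermitian ∧ HasRankLeTwo Z ∧ ∀ k, trace (C k * Z) = y k := by
  obtain ⟨m, hm⟩ : ∃ m, m + 1 = 2 ^ k := ⟨_, Nat.sub_add_cancel Nat.one_le_two_pow⟩
  have : FiniteDimensional ℝ ↥(1 ⊔ hermitianSpan ι) :=
    pow_one (1 ⊔ hermitianSpan ι) ▸ finite_one_sup_pow (hermitianSpan ι) 1
  have hgrowth := tendsto_finrank_one_sup_hermitianSpan_pow_div (ι := ι) (m := m) (by omega)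
  rw [show 4 * (m + 1) = Fintype.card σ by omega] at hgrowth
  obtain ⟨g, hg, hχ⟩ := exists_algHom_adjoin_real_of_odd_growth
    (Submodule.mem_sup_left (Submodule.one_le.mp le_rfl))
    (fun k => Submodule.mem_sup_right (traceForm_mem_hermitianSpan (hC k)))
    (hgen.one_sup_hermitianSpan_pow_succ_le hC) (odd_rankTwoDegree hm) hgrowth
  refine ⟨g, hg, fun y hy => ?_⟩
  obtain ⟨χ, hχ⟩ := hχ y hy
  obtain ⟨Z, hZ, hZ', htrace⟩ := exists_isHermitian_of_algHom χ
  exact ⟨Z, hZ, hZ', fun k => by rw [htrace _ (hC k), hχ k]⟩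

end HermitianPoints

section Nullstellensatz

open MvPolynomial

variable {κ τ σ K : Type*} [Field K] {t : κ → MvPolynomial τ K} {m d : ℕ}

theorem map_aeval_homogeneousSubmodule (t : κ → MvPolynomial τ K) (d : ℕ) :
    (homogeneousSubmodule κ K d).map (aeval t).toLinearMap =
      Submodule.span K (Set.range t) ^ d := by
  rw [← homogeneousSubmodule_one_pow, homogeneousSubmodule_one_eq_span_X, Submodule.map_pow,
    Submodule.map_span, ← Set.range_comp]
  congr! 3
  ext1 i
  exact aeval_X t i

theorem homogeneousComponent_aeval_mul (ht : ∀ p, (t p).IsHomogeneous m) (hm : 0 < m)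
    (a l : MvPolynomial κ K) (hl : l.IsHomogeneous 1) :
    homogeneousComponent (m * (d + 1)) (aeval t (a * l)) =
      aeval t (homogeneousComponent d a) * aeval t l := by
  have hcomp (e : ℕ) : (aeval t (homogeneousComponent e a * l)).IsHomogeneous (m * (e + 1)) :=
    ((homogeneousComponent_isHomogeneous e a).mul hl).aeval t ht
  conv_lhs => rw [← sum_homogeneousComponent a, Finset.sum_mul, map_sum, map_sum]
  simp_rw [fun e => homogeneousComponent_of_mem (m := m * (d + 1)) (hcomp e),
    Nat.mul_right_inj hm.ne', Nat.add_right_cancel_iff]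
  rw [Finset.sum_ite_eq, ← map_mul, ite_eq_left_iff]
  intro hd
  rw [homogeneousComponent_eq_zero _ _ (by simpa using hd), zero_mul, map_zero]

theorem isHomogeneous_traceForm_mvPolynomialX {ι : Type*} [Fintype ι] (C : Matrix ι ι K) :
    (traceForm (mvPolynomialX ι ι K) C).IsHomogeneous 1 := by
  rw [traceForm_apply]
  exact IsHomogeneous.sum _ _ _ fun i _ => IsHomogeneous.sum _ _ _ fun j _ =>
    (homogeneousSubmodule _ K 1).smul_mem _ (isHomogeneous_X K _)

variable [IsAlgClosed K] [Finite κ]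

theorem exists_pow_idealOfVars_le {J : Ideal (MvPolynomial κ K)} (hJ : zeroLocus K J ⊆ {0}) :
    ∃ N, idealOfVars κ K ^ N ≤ J := by
  refine Ideal.exists_pow_le_of_le_radical_of_fg ?_ (idealOfVars_fg κ K)
  rw [← vanishingIdeal_zeroLocus_eq_radical (K := K), idealOfVars, Ideal.span_le]
  rintro _ ⟨p, rfl⟩ x hx
  rw [aeval_X, hJ hx, Pi.zero_apply]

theorem exists_span_range_pow_succ_le (ht : ∀ p, (t p).IsHomogeneous m) (hm : 0 < m) [Finite σ]
    {l : σ → MvPolynomial κ K} (hl : ∀ k, (l k).IsHomogeneous 1)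
    (hzero : ∀ x : κ → K, (∀ f : MvPolynomial κ K, aeval t f = 0 → aeval x f = 0) →
      (∀ k, aeval x (l k) = 0) → x = 0) :
    ∃ d, Submodule.span K (Set.range t) ^ (d + 1) ≤
      Submodule.span K (Set.range fun k => aeval t (l k)) * Submodule.span K (Set.range t) ^ d := by
  cases nonempty_fintype σ
  obtain ⟨d, hd⟩ := exists_pow_idealOfVars_le
    (J := RingHom.ker (aeval (R := K) t) ⊔ Ideal.span (Set.range l)) fun x hx =>
      hzero x (fun f hf => hx f (Ideal.mem_sup_left hf)) fun k =>
        hx _ (Ideal.mem_sup_right (Ideal.subset_span ⟨k, rfl⟩))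
  refine ⟨d, fun x hx => ?_⟩
  rw [← map_aeval_homogeneousSubmodule] at hx
  obtain ⟨f, hf, rfl⟩ := hx
  have hfJ := hd ((mem_pow_idealOfVars_iff' d f).mpr fun s hs =>
    IsHomogeneous.coeff_eq_zero hf (by omega))
  obtain ⟨g, hg, h, hh, hgh⟩ := Submodule.mem_sup.mp hfJ
  obtain ⟨a, ha⟩ := Ideal.mem_span_range_iff_exists_fun.mp hh
  have hsum : aeval t f = ∑ k, aeval t (homogeneousComponent d (a k)) * aeval t (l k) := by
    have hhom : (aeval t f).IsHomogeneous (m * (d + 1)) := hf.aeval t ht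
    have hfh : aeval t f = aeval t (∑ k, a k * l k) := by
      rw [ha, ← hgh, map_add, RingHom.mem_ker.mp hg, zero_add]
    rw [← homogeneousComponent_of_mem (m := m * (d + 1)) hhom |>.trans (if_pos rfl), hfh, map_sum,
      map_sum]
    exact Finset.sum_congr rfl fun k _ => homogeneousComponent_aeval_mul ht hm _ _ (hl k)
  change aeval t f ∈ _
  rw [hsum]
  refine Submodule.sum_mem _ fun k _ => ?_
  rw [mul_comm (aeval t _)]
  refine Submodule.mul_mem_mul (Submodule.subset_span ⟨k, rfl⟩) ?_
  rw [← map_aeval_homogeneousSubmodule]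
  exact ⟨_, homogeneousComponent_isHomogeneous d (a k), rfl⟩

theorem exists_generatesInDegree {ι : Type*} [Fintype ι] [Finite σ] {C : σ → Matrix ι ι K}
    (hC : ∀ Z : Matrix ι ι K, HasRankLeTwo Z → (∀ k, trace (C k * Z) = 0) → Z = 0) :
    ∃ d, GeneratesInDegree C d := by
  let t (p : ι × ι) := genericRankTwo ι K p.1 p.2
  let l (k : σ) := traceForm (mvPolynomialX ι ι K) (C k)
  have ht (p : ι × ι) : (t p).IsHomogeneous 2 :=
    entrySpan_le_homogeneousSubmodule K (Submodule.subset_span ⟨p, rfl⟩)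
  have hXt : (mvPolynomialX ι ι K).map (aeval t) = genericRankTwo ι K := by
    ext1 i j
    simp [t]
  obtain ⟨d, hd⟩ := exists_span_range_pow_succ_le (l := l) ht two_pos
    (fun k => isHomogeneous_traceForm_mvPolynomialX (C k)) fun x hker hlin => by
      have hXx : (mvPolynomialX ι ι K).map (aeval x) = of fun i j => x (i, j) := by
        ext1 i j
        simp
      have hZ : (of fun i j => x (i, j) : Matrix ι ι K) = 0 := by
        refine hC _ (fun r c => ?_) fun k => ?_
        · rw [← hXx, submatrix_map, ← AlgHom.mapMatrix_apply, ← AlgHom.map_det]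
          apply hker
          rw [AlgHom.map_det, AlgHom.mapMatrix_apply, ← submatrix_map, hXt]
          exact hasRankLeTwo_genericRankTwo ι K r c
        · rw [← traceForm_self, ← hXx, ← map_traceForm]
          exact hlin k
      exact funext fun p => congr_fun₂ hZ p.1 p.2
  refine ⟨d, ?_⟩
  simp only [l, map_traceForm, hXt] at hd
  exact hd

end Nullstellensatz

section Perturbation

variable {K V U A σ : Type*} [Field K] [AddCommGroup V] [Module K V] [AddCommGroup U] [Module K U]

theorem finite_setOf_not_le_range_add_smul {f g : V →ₗ[K] U} {W : Submodule K U}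
    [FiniteDimensional K W] (hf : LinearMap.range f ≤ W) (hg : W ≤ LinearMap.range g) :
    {μ : K | ¬ W ≤ LinearMap.range (f + μ • g)}.Finite := by
  obtain ⟨ρ, hρ⟩ := Module.projective_lifting_property g.rangeRestrict (Submodule.inclusion hg)
    g.surjective_rangeRestrict
  have hgρ (w : W) : g (ρ w) = w := congrArg Subtype.val (LinearMap.congr_fun hρ w)
  let e : Module.End K W := (f ∘ₗ ρ).codRestrict W fun w => hf ⟨ρ w, rfl⟩
  refine ((Module.End.finite_hasEigenvalue e).preimage neg_injective.injOn).subset fun μ hμ => ?_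
  by_contra hev
  have hinj : Function.Injective (e + μ • 1 : Module.End K W) := by
    refine LinearMap.ker_eq_bot.mp (LinearMap.ker_eq_bot'.mpr fun v hv => ?_)
    by_contra hv₀
    refine hev (Module.End.hasEigenvalue_of_hasEigenvector
      ⟨Module.End.mem_eigenspace_iff.mpr ?_, hv₀⟩)
    rw [neg_smul]
    exact eq_neg_of_add_eq_zero_left hv
  refine hμ fun w hw => ?_
  obtain ⟨v, hv⟩ := LinearMap.surjective_of_injective hinj ⟨w, hw⟩
  have hval : f (ρ v) + μ • (v : U) = w := congrArg Subtype.val hv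
  exact ⟨ρ v, by rw [← hval, LinearMap.add_apply, LinearMap.smul_apply, hgρ]⟩

variable [CommRing A] [Algebra K A] [Fintype σ]

/-- The `M`-linear combinations of the family `lam`. -/
def combination (lam : σ → A) (M : Submodule K A) : (σ → M) →ₗ[K] A :=
  ∑ k, LinearMap.mulLeft K (lam k) ∘ₗ M.subtype ∘ₗ LinearMap.proj k

theorem combination_apply (lam : σ → A) (M : Submodule K A) (b : σ → M) :
    combination lam M b = ∑ k, lam k * b k := by
  simp [combination]

theorem combination_add_smul (lam lam₀ : σ → A) (μ : K) (M : Submodule K A) :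
    combination (lam + μ • lam₀) M = combination lam M + μ • combination lam₀ M := by
  ext1 b
  simp only [combination_apply, LinearMap.add_apply, LinearMap.smul_apply, Pi.add_apply,
    Pi.smul_apply, add_mul, smul_mul_assoc, Finset.sum_add_distrib, Finset.smul_sum]

theorem range_combination (lam : σ → A) (M : Submodule K A) :
    LinearMap.range (combination lam M) = Submodule.span K (Set.range lam) * M := by
  refine le_antisymm ?_ (Submodule.mul_le.mpr fun x hx m hm => ?_)
  · rintro _ ⟨b, rfl⟩
    rw [combination_apply]
    exact Submodule.sum_mem _ fun k _ =>
      Submodule.mul_mem_mul (Submodule.subset_span ⟨k, rfl⟩) (b k).2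
  · obtain ⟨c, rfl⟩ := (Submodule.mem_span_range_iff_exists_fun K).mp hx
    refine ⟨fun k => c k • ⟨m, hm⟩, ?_⟩
    simp [combination_apply, Finset.sum_mul]

end Perturbation

theorem GeneratesInDegree.finite_setOf_not_add_smul {K ι σ : Type*} [Field K] [Fintype ι]
    [Finite σ] {C₀ : σ → Matrix ι ι K} {d : ℕ} (hC₀ : GeneratesInDegree C₀ d)
    (C : σ → Matrix ι ι K) : {μ : K | ¬ GeneratesInDegree (C + μ • C₀) d}.Finite := by
  cases nonempty_fintype σ
  let lam (C : σ → Matrix ι ι K) (k : σ) := traceForm (genericRankTwo ι K) (C k)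
  have hlam (μ : K) : lam (C + μ • C₀) = lam C + μ • lam C₀ := by
    ext1 k
    simp [lam]
  have hspan : Submodule.span K (Set.range (lam C)) ≤ entrySpan ι K := by
    rw [Submodule.span_le, ← range_traceForm_genericRankTwo]
    rintro _ ⟨k, rfl⟩
    exact ⟨C k, rfl⟩
  have hfin : FiniteDimensional K ↥(entrySpan ι K ^ (d + 1)) :=
    .of_fg ((Submodule.fg_span (Set.finite_range _)).pow _)
  convert finite_setOf_not_le_range_add_smul (f := combination (lam C) (entrySpan ι K ^ d))
    (g := combination (lam C₀) (entrySpan ι K ^ d)) (W := entrySpan ι K ^ (d + 1)) ?_ ?_ using 5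
  · rw [← combination_add_smul, range_combination, ← hlam]
    rfl
  · rw [range_combination, pow_succ']
    exact mul_le_mul' hspan le_rfl
  · rw [range_combination]
    exact hC₀

section AntidiagonalFrame

open Polynomial

variable {K : Type*} [Field K] {ι σ : Type*} {n : ℕ}

theorem HasRankLeTwo.exists_eq_vecMulVec_add_vecMulVec {Z : Matrix ι ι K} (hZ : HasRankLeTwo Z) :
    ∃ a α b β : ι → K, Z = vecMulVec a α + vecMulVec b β := by
  by_cases hminor : ∃ r s c d, Z r c * Z s d ≠ Z r d * Z s c
  · obtain ⟨r, s, c, d, hm⟩ := hminor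
    let δ := Z r c * Z s d - Z r d * Z s c
    have hδ : δ ≠ 0 := sub_ne_zero.mpr hm
    refine ⟨fun i => (Z i c * Z s d - Z i d * Z s c) / δ, Z r,
      fun i => (Z r c * Z i d - Z r d * Z i c) / δ, Z s, ?_⟩
    ext i j
    have hdet := hZ ![i, r, s] ![j, c, d]
    simp only [det_fin_three, submatrix_apply, cons_val] at hdet
    simp only [Matrix.add_apply, vecMulVec_apply]
    field_simp
    linear_combination hdet
  · push Not at hminor
    by_cases hne : ∃ k l, Z k l ≠ 0
    · obtain ⟨k, l, hkl⟩ := hne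
      refine ⟨fun i => Z i l / Z k l, Z k, 0, 0, ?_⟩
      ext i j
      simp only [Matrix.add_apply, vecMulVec_apply, Pi.zero_apply, mul_zero, add_zero]
      field_simp
      linear_combination hminor i k j l
    · push Not at hne
      exact ⟨0, 0, 0, 0, by ext i j; simp [hne i j]⟩

theorem exists_eq_mul_C_of_wronskian_eq_zero [CharZero K] {P Q : K[X]} (h : wronskian P Q = 0) :
    ∃ (g : K[X]) (u v : K), P = g * C u ∧ Q = g * C v := by
  classical
  let := EuclideanDomain.gcdMonoid K[X]
  obtain ⟨p, q, hp, hq, hunit⟩ := extract_gcd P Q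
  set g := gcd P Q
  by_cases hg : g = 0
  · exact ⟨0, 0, 0, by simp [hp, hg], by simp [hq, hg]⟩
  have hpq : g * g * wronskian p q = 0 := by
    rw [← h, hp, hq, wronskian, wronskian, derivative_mul, derivative_mul]
    ring
  have hwronskian := (mul_eq_zero.mp hpq).resolve_left (mul_ne_zero hg hg)
  obtain ⟨hp', hq'⟩ := ((gcd_isUnit_iff p q).mp hunit).wronskian_eq_zero_iff.mp hwronskian
  exact ⟨g, _, _, by rwa [← eq_C_of_derivative_eq_zero hp'],
    by rwa [← eq_C_of_derivative_eq_zero hq']⟩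

theorem coeff_mul_coeff_add_eq_zero [CharZero K] {P Q R S : K[X]} (hsum : P * Q + R * S = 0)
    (hwronskian : wronskian P Q + wronskian R S = 0) (i j : ℕ) :
    P.coeff i * Q.coeff j + R.coeff i * S.coeff j = 0 := by
  have hderiv : P * derivative Q + R * derivative S = 0 := by
    have hsum' := congrArg derivative hsum
    simp only [derivative_add, derivative_mul, derivative_zero] at hsum'
    rw [wronskian, wronskian] at hwronskian
    have htwo : 2 * (P * derivative Q + R * derivative S) = 0 := by
      linear_combination hsum' + hwronskian
    exact (mul_eq_zero.mp htwo).resolve_left two_ne_zero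
  by_cases hPR : P = 0 ∧ R = 0
  · simp [hPR]
  have hQS : wronskian Q S = 0 := by
    have hP : P * wronskian Q S = 0 := by
      rw [wronskian]
      linear_combination derivative S * hsum - S * hderiv
    have hR : R * wronskian Q S = 0 := by
      rw [wronskian]
      linear_combination Q * hderiv - derivative Q * hsum
    by_contra hne
    exact hPR ⟨(mul_eq_zero.mp hP).resolve_right hne, (mul_eq_zero.mp hR).resolve_right hne⟩
  obtain ⟨g, u, v, rfl, rfl⟩ := exists_eq_mul_C_of_wronskian_eq_zero hQS
  have hg : (P * C u + R * C v) * g = 0 := by linear_combination hsum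
  rcases mul_eq_zero.mp hg with hzero | rfl
  · have hi : P.coeff i * u + R.coeff i * v = 0 := by
      simpa only [coeff_add, coeff_mul_C, coeff_zero] using congrArg (coeff · i) hzero
    rw [coeff_mul_C, coeff_mul_C]
    linear_combination g.coeff j * hi
  · simp

/-- The matrix with entries `1` on the antidiagonal `i + j = s`. -/
def antidiagonalOnes (n s : ℕ) : Matrix (Fin n) (Fin n) ℂ :=
  of fun i j => if (i : ℕ) + j = s then 1 else 0

/-- The Hermitian matrix with entries `I * (i - j)` on the antidiagonal `i + j = s`. -/
noncomputable def antidiagonalSkew (n s : ℕ) : Matrix (Fin n) (Fin n) ℂ :=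
  of fun i j => if (i : ℕ) + j = s then Complex.I * (i - j) else 0

theorem isHermitian_antidiagonalOnes (n s : ℕ) : (antidiagonalOnes n s).IsHermitian := by
  ext i j
  simp [antidiagonalOnes, add_comm, apply_ite]

theorem isHermitian_antidiagonalSkew (n s : ℕ) : (antidiagonalSkew n s).IsHermitian := by
  ext i j
  rw [conjTranspose_apply, antidiagonalSkew, of_apply, of_apply, add_comm (j : ℕ), apply_ite star,
    star_zero]
  congr 1
  simp
  ring

theorem coeff_ofFn_mul_ofFn [DecidableEq K] (a α : Fin n → K) (s : ℕ) :
    (ofFn n a * ofFn n α).coeff s =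
      ∑ i : Fin n, ∑ j : Fin n, if (i : ℕ) + j = s then a i * α j else 0 := by
  simp only [ofFn_eq_sum_monomial, Finset.sum_mul_sum, monomial_mul_monomial, finsetSum_coeff,
    coeff_monomial]

theorem X_mul_derivative_ofFn [DecidableEq K] (a : Fin n → K) :
    X * derivative (ofFn n a) = ofFn n fun i => (i : K) * a i := by
  simp only [ofFn_eq_sum_monomial, map_sum, Finset.mul_sum]
  refine Finset.sum_congr rfl fun i _ => ?_
  rw [derivative_monomial]
  rcases Nat.eq_zero_or_pos (i : ℕ) with hi | hi
  · simp [hi]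
  · rw [X_mul_monomial, Nat.sub_add_cancel hi, mul_comm]

theorem trace_antidiagonalOnes_mul_vecMulVec (s : ℕ) (a α : Fin n → ℂ) :
    trace (antidiagonalOnes n s * vecMulVec a α) = (ofFn n a * ofFn n α).coeff s := by
  rw [coeff_ofFn_mul_ofFn, Finset.sum_comm]
  simp only [trace, diag_apply, mul_apply, antidiagonalOnes, of_apply, vecMulVec_apply, ite_mul,
    one_mul, zero_mul, add_comm]

theorem trace_antidiagonalSkew_mul_vecMulVec (s : ℕ) (a α : Fin n → ℂ) :
    trace (antidiagonalSkew n s * vecMulVec a α) =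
      Complex.I * (X * wronskian (ofFn n a) (ofFn n α)).coeff s := by
  have hX : X * wronskian (ofFn n a) (ofFn n α) =
      ofFn n a * ofFn n (fun i => (i : ℂ) * α i) - ofFn n (fun i => (i : ℂ) * a i) * ofFn n α := by
    rw [← X_mul_derivative_ofFn, ← X_mul_derivative_ofFn, wronskian]
    ring
  rw [hX, coeff_sub, coeff_ofFn_mul_ofFn, coeff_ofFn_mul_ofFn, ← Finset.sum_sub_distrib,
    Finset.mul_sum]
  simp only [trace, diag_apply, mul_apply, antidiagonalSkew, of_apply, vecMulVec_apply]
  rw [Finset.sum_comm]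
  refine Finset.sum_congr rfl fun i _ => ?_
  rw [← Finset.sum_sub_distrib, Finset.mul_sum]
  refine Finset.sum_congr rfl fun j _ => ?_
  rw [add_comm (j : ℕ)]
  split_ifs <;> ring

theorem antidiagonalOnes_eq_zero {s : ℕ} (hs : 2 * n ≤ s + 1) : antidiagonalOnes n s = 0 := by
  ext i j
  exact if_neg (by omega)

theorem antidiagonalSkew_eq_zero {s : ℕ} (hs : s = 0 ∨ 2 * n ≤ s + 2) :
    antidiagonalSkew n s = 0 := by
  ext i j
  rw [antidiagonalSkew, of_apply, Matrix.zero_apply, ite_eq_right_iff]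
  intro hij
  have heq : (i : ℕ) = j := by omega
  rw [heq, sub_self, mul_zero]

theorem HasRankLeTwo.eq_zero_of_trace_antidiagonal_eq_zero {Z : Matrix (Fin n) (Fin n) ℂ}
    (hZ : HasRankLeTwo Z) (hones : ∀ s, trace (antidiagonalOnes n s * Z) = 0)
    (hskew : ∀ s, trace (antidiagonalSkew n s * Z) = 0) : Z = 0 := by
  obtain ⟨a, α, b, β, rfl⟩ := hZ.exists_eq_vecMulVec_add_vecMulVec
  have hsum : ofFn n a * ofFn n α + ofFn n b * ofFn n β = 0 := by
    ext1 s
    rw [coeff_add, ← trace_antidiagonalOnes_mul_vecMulVec, ← trace_antidiagonalOnes_mul_vecMulVec,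
      ← trace_add, ← mul_add, hones, coeff_zero]
  have hwronskian : wronskian (ofFn n a) (ofFn n α) + wronskian (ofFn n b) (ofFn n β) = 0 := by
    refine (mul_eq_zero.mp (?_ : X * _ = 0)).resolve_left X_ne_zero
    ext1 s
    refine (mul_eq_zero.mp (?_ : Complex.I * _ = 0)).resolve_left Complex.I_ne_zero
    rw [mul_add, coeff_add, mul_add, ← trace_antidiagonalSkew_mul_vecMulVec,
      ← trace_antidiagonalSkew_mul_vecMulVec, ← trace_add, ← mul_add, hskew]
  ext i j
  have hij := coeff_mul_coeff_add_eq_zero hsum hwronskian i j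
  rwa [ofFn_coeff_eq_val_of_lt _ i.2, ofFn_coeff_eq_val_of_lt _ j.2, ofFn_coeff_eq_val_of_lt _ i.2,
    ofFn_coeff_eq_val_of_lt _ j.2] at hij

theorem exists_hermitian_forall_trace_eq_zero_imp [Fintype σ] (hn : n ≠ 0)
    (hσ : Fintype.card σ = 4 * n) : ∃ C : σ → Matrix (Fin (n + 1)) (Fin (n + 1)) ℂ,
      (∀ k, (C k).IsHermitian) ∧
      ∀ Z, HasRankLeTwo Z → (∀ k, trace (C k * Z) = 0) → Z = 0 := by
  let e : Fin (2 * n + 1) ⊕ Fin (2 * n - 1) ≃ σ := Fintype.equivOfCardEq <| by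
    rw [Fintype.card_sum, Fintype.card_fin, Fintype.card_fin, hσ]
    omega
  let C : Fin (2 * n + 1) ⊕ Fin (2 * n - 1) → Matrix (Fin (n + 1)) (Fin (n + 1)) ℂ :=
    Sum.elim (fun s => antidiagonalOnes (n + 1) s) fun s => antidiagonalSkew (n + 1) (s + 1)
  refine ⟨C ∘ e.symm, fun k => ?_, fun Z hZ htrace => ?_⟩
  · rcases h : e.symm k with s | s <;> rw [Function.comp_apply, h]
    exacts [isHermitian_antidiagonalOnes _ _, isHermitian_antidiagonalSkew _ _]
  have hC (k) : trace (C k * Z) = 0 := by simpa using htrace (e k)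
  refine hZ.eq_zero_of_trace_antidiagonal_eq_zero (fun s => ?_) fun s => ?_
  · by_cases hs : s < 2 * n + 1
    · exact hC (Sum.inl ⟨s, hs⟩)
    · rw [antidiagonalOnes_eq_zero (by omega), zero_mul, trace_zero]
  · by_cases hs : 0 < s ∧ s < 2 * n
    · have hval : s - 1 + 1 = s := by omega
      have := hC (Sum.inr ⟨s - 1, by omega⟩)
      rw [← hval]
      exact this
    · rw [antidiagonalSkew_eq_zero (by omega), zero_mul, trace_zero]

end AntidiagonalFrame

section Cone

open Filter Topology

variable {E F : Type*} [NormedAddCommGroup E] [NormedSpace ℝ E] [NormedAddCommGroup F]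
  [NormedSpace ℝ F] {V : Set E}

theorem mul_norm_le_norm_add_smul {f g : E →L[ℝ] F} {m μ : ℝ} {x : E} (hx : m * ‖x‖ ≤ ‖f x‖)
    (hμ : |μ| * ‖g‖ ≤ m / 2) : m / 2 * ‖x‖ ≤ ‖f x + μ • g x‖ := by
  have hg : ‖μ • g x‖ ≤ m / 2 * ‖x‖ := calc
    ‖μ • g x‖ = |μ| * ‖g x‖ := by rw [norm_smul, Real.norm_eq_abs]
    _ ≤ |μ| * (‖g‖ * ‖x‖) := by gcongr; exact g.le_opNorm x
    _ = |μ| * ‖g‖ * ‖x‖ := by ring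
    _ ≤ m / 2 * ‖x‖ := by gcongr
  have hadd : ‖f x‖ ≤ ‖f x + μ • g x‖ + ‖μ • g x‖ := by
    simpa using norm_sub_le (f x + μ • g x) (μ • g x)
  linarith

variable [FiniteDimensional ℝ E]

theorem exists_pos_forall_mul_norm_pow_le {d : ℕ} (hd : d ≠ 0) (hV : IsClosed V)
    (hsmul : ∀ x ∈ V, ∀ a : ℝ, 0 ≤ a → a • x ∈ V) {φ : E → ℝ} (hφ : Continuous φ)
    (hhom : ∀ (a : ℝ) (x : E), 0 ≤ a → φ (a • x) = a ^ d * φ x)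
    (hpos : ∀ x ∈ V, x ≠ 0 → 0 < φ x) : ∃ m > 0, ∀ x ∈ V, m * ‖x‖ ^ d ≤ φ x := by
  have hcompact : IsCompact (Metric.sphere 0 1 ∩ V) := (isCompact_sphere 0 1).inter_right hV
  obtain ⟨m, hm, hmin⟩ := hcompact.exists_forall_le' hφ.continuousOn fun x hx =>
    hpos x hx.2 (ne_zero_of_mem_unit_sphere ⟨x, hx.1⟩)
  refine ⟨m, hm, fun x hx => ?_⟩
  rcases eq_or_ne x 0 with rfl | hx₀
  · have h₀ := hhom 0 0 le_rfl
    rw [zero_smul, zero_pow hd, zero_mul] at h₀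
    rw [norm_zero, zero_pow hd, mul_zero, h₀]
  have hunit := hmin (‖x‖⁻¹ • x) ⟨by simp [norm_smul, hx₀], hsmul x hx _ (by positivity)⟩
  rwa [hhom _ _ (by positivity), inv_pow, inv_mul_eq_div, le_div_iff₀ (by positivity)] at hunit

theorem exists_pos_forall_mul_norm_le (hV : IsClosed V)
    (hsmul : ∀ x ∈ V, ∀ a : ℝ, 0 ≤ a → a • x ∈ V) {f : E →L[ℝ] F}
    (hf : ∀ x ∈ V, f x = 0 → x = 0) : ∃ m > 0, ∀ x ∈ V, m * ‖x‖ ≤ ‖f x‖ := by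
  simpa only [pow_one] using exists_pos_forall_mul_norm_pow_le one_ne_zero hV hsmul
    (φ := fun x => ‖f x‖) (by fun_prop)
    (fun a x ha => by rw [map_smul, norm_smul, Real.norm_of_nonneg ha, pow_one])
    (fun x hx hx₀ => norm_pos_iff.mpr (mt (hf x hx) hx₀))

theorem isClosed_setOf_exists_mem_eq {X Y Z : Type*} [TopologicalSpace X] [TopologicalSpace Y]
    [TopologicalSpace Z] [T2Space Z] {K : Set Y} (hK : IsCompact K) {φ : X → Y → Z}
    (hφ : Continuous fun p : X × Y => φ p.1 p.2) :
    IsClosed {p : X × Z | ∃ y ∈ K, φ p.1 y = p.2} := by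
  have := isCompact_iff_compactSpace.mp hK
  convert isClosedMap_fst_of_compactSpace (Y := K)
    {p : (X × Z) × K | φ p.1.1 p.2 = p.1.2} (isClosed_eq ?_ (by fun_prop)) using 1
  · ext p
    simp [Prod.exists]
  · exact hφ.comp (by fun_prop : Continuous fun p : (X × Z) × K => (p.1.1, (p.2 : Y)))

/-- Preimages of points near `y` under the perturbed maps stay in a fixed ball, because `f` is
bounded below on the cone `V`; hence they accumulate. -/
theorem mem_image_of_frequently_mem_closure (hV : IsClosed V)
    (hsmul : ∀ x ∈ V, ∀ a : ℝ, 0 ≤ a → a • x ∈ V) {f g : E →L[ℝ] F}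
    (hf : ∀ x ∈ V, f x = 0 → x = 0) {y : F}
    (hy : ∃ᶠ μ in 𝓝 (0 : ℝ), y ∈ closure ((fun x => f x + μ • g x) '' V)) : y ∈ f '' V := by
  obtain ⟨m, hm, hmin⟩ := exists_pos_forall_mul_norm_le hV hsmul hf
  set R := (‖y‖ + 1) / (m / 2)
  have hcompact : IsCompact (Metric.closedBall 0 R ∩ V) :=
    (isCompact_closedBall 0 R).inter_right hV
  have hclosed := isClosed_setOf_exists_mem_eq hcompact (X := ℝ) (φ := fun μ x => f x + μ • g x)
    (by fun_prop)
  suffices hmem : ((0 : ℝ), y) ∈ closure _ by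
    obtain ⟨x, hx, hxy⟩ := hclosed.closure_subset hmem
    exact ⟨x, hx.2, by simpa using hxy⟩
  refine Metric.mem_closure_iff.mpr fun δ hδ => ?_
  have hsmall : ∀ᶠ μ in 𝓝 (0 : ℝ), |μ| * ‖g‖ ≤ m / 2 :=
    (by fun_prop : Continuous fun μ : ℝ => |μ| * ‖g‖).tendsto 0 |>.eventually_le_const
      (by simpa using hm)
  obtain ⟨μ, hμy, hμg, hμδ⟩ :=
    (hy.and_eventually (hsmall.and (Metric.ball_mem_nhds 0 hδ))).exists
  obtain ⟨_, ⟨x, hx, rfl⟩, hdist⟩ := Metric.mem_closure_iff.mp hμy (min δ 1) (by positivity)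
  rw [lt_min_iff] at hdist
  refine ⟨(μ, f x + μ • g x), ⟨x, ⟨?_, hx⟩, rfl⟩, ?_⟩
  · rw [mem_closedBall_zero_iff, le_div_iff₀' (half_pos hm)]
    refine (mul_norm_le_norm_add_smul (hmin x hx) hμg).trans ?_
    have hlt := hdist.2
    rw [dist_comm, dist_eq_norm] at hlt
    linarith [norm_le_norm_add_norm_sub' (f x + μ • g x) y]
  · rw [Prod.dist_eq, max_lt_iff, dist_comm]
    exact ⟨hμδ, hdist.1⟩

theorem comap_nhds_inf_principal_le_nhds (hV : IsClosed V)
    (hsmul : ∀ x ∈ V, ∀ a : ℝ, 0 ≤ a → a • x ∈ V) {f : E →L[ℝ] F}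
    (hf : ∀ x ∈ V, f x = 0 → x = 0) {x₀ : E} (hx₀ : ∀ x ∈ V, f x = f x₀ → x = x₀) :
    comap f (𝓝 (f x₀)) ⊓ 𝓟 V ≤ 𝓝 x₀ := by
  obtain ⟨m, hm, hmin⟩ := exists_pos_forall_mul_norm_le hV hsmul hf
  have hcompact : IsCompact (Metric.closedBall 0 ((‖f x₀‖ + 1) / m) ∩ V) :=
    (isCompact_closedBall 0 _).inter_right hV
  refine hcompact.le_nhds_of_unique_clusterPt (mem_inf_principal.mpr ?_) fun x hx hcluster => ?_
  · have hnorm : ∀ᶠ y in 𝓝 (f x₀), ‖y‖ ≤ ‖f x₀‖ + 1 :=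
      (continuous_norm.tendsto _).eventually_le_const (lt_add_one _)
    filter_upwards [preimage_mem_comap hnorm] with x hfx hx
    refine ⟨?_, hx⟩
    rw [mem_closedBall_zero_iff, le_div_iff₀' hm]
    exact (hmin x hx).trans hfx
  · have hfx : ClusterPt (f x) (𝓝 (f x₀)) :=
      hcluster.of_inf_left.map f.continuous.continuousAt tendsto_comap
    exact hx₀ x hx.2 (eq_of_nhds_neBot hfx)

end Cone

theorem dense_setOf_eval_ne_zero {σ : Type*} [Finite σ] {g : MvPolynomial σ ℝ} (hg : g ≠ 0) :
    Dense {y | MvPolynomial.eval y g ≠ 0} := by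
  cases nonempty_fintype σ
  refine Metric.dense_iff.mpr fun y δ hδ => ?_
  by_contra! hempty
  refine hg (MvPolynomial.funext_set (fun k => Metric.ball (y k) δ)
    (fun k => ?_) fun z hz => ?_)
  · rw [Real.ball_eq_Ioo]
    exact Set.Ioo_infinite (by linarith)
  · have hball : z ∈ Metric.ball y δ := by rwa [ball_pi y hδ]
    rw [map_zero]
    by_contra hne
    exact hempty.subset ⟨hball, hne⟩

section Surjectivity

open Filter Topology
open scoped Matrix.Norms.Elementwise

variable {ι σ : Type*}

/-- The real-linear map whose coordinates are the real functionals `Z ↦ Re tr (C k * Z)`. -/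
noncomputable def reTrace [Fintype ι] (C : σ → Matrix ι ι ℂ) : Matrix ι ι ℂ →ₗ[ℝ] σ → ℝ :=
  LinearMap.pi fun k => Complex.reLm ∘ₗ traceLinearMap ι ℝ ℂ ∘ₗ LinearMap.mulLeft ℝ (C k)

theorem reTrace_apply [Fintype ι] (C : σ → Matrix ι ι ℂ) (Z : Matrix ι ι ℂ) (k : σ) :
    reTrace C Z k = (trace (C k * Z)).re := rfl

theorem reTrace_add_smul [Fintype ι] (C C₀ : σ → Matrix ι ι ℂ) (μ : ℝ) (Z : Matrix ι ι ℂ) :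
    reTrace (C + (μ : ℂ) • C₀) Z = reTrace C Z + μ • reTrace C₀ Z := by
  ext k
  simp [reTrace_apply, add_mul]

theorem exists_forall_eq_re_trace [Fintype ι] (ℓ : Matrix ι ι ℂ →ₗ[ℝ] ℝ) :
    ∃ B, ∀ Z, ℓ Z = (trace (B * Z)).re := by
  classical
  let g : Module.Dual ℂ (Matrix ι ι ℂ) := Module.Dual.extendRCLike ℓ
  refine ⟨of fun j i => g (single i j 1), fun Z => ?_⟩
  have hg : g Z = trace (of (fun j i => g (single i j 1)) * Z) := by
    conv_lhs => rw [matrix_eq_sum_single Z]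
    simp only [map_sum, trace, diag_apply, mul_apply, of_apply]
    rw [Finset.sum_comm]
    refine Finset.sum_congr rfl fun j _ => Finset.sum_congr rfl fun i _ => ?_
    rw [mul_comm, ← smul_eq_mul, ← map_smul, smul_single, smul_eq_mul, mul_one]
  rw [← hg]
  exact (Module.Dual.re_extendRCLike_apply (𝕜 := ℂ) ℓ Z).symm

theorem re_trace_conjTranspose_mul [Fintype ι] {Z : Matrix ι ι ℂ} (hZ : Z.IsHermitian)
    (B : Matrix ι ι ℂ) : (trace (Bᴴ * Z)).re = (trace (B * Z)).re := by
  conv_lhs => rw [← hZ.eq, ← conjTranspose_mul, trace_conjTranspose, trace_mul_comm]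
  exact Complex.conj_re _

theorem exists_isHermitian_forall_eq_re_trace [Fintype ι] (ℓ : Matrix ι ι ℂ →ₗ[ℝ] ℝ) :
    ∃ C : Matrix ι ι ℂ, C.IsHermitian ∧ ∀ Z, Z.IsHermitian → ℓ Z = (trace (C * Z)).re := by
  obtain ⟨B, hB⟩ := exists_forall_eq_re_trace ℓ
  refine ⟨(2⁻¹ : ℝ) • (B + Bᴴ), ?_, fun Z hZ => ?_⟩
  · exact (isHermitian_add_transpose_self B).smul (.all _)
  · rw [smul_mul, trace_smul, Complex.smul_re, add_mul, trace_add, Complex.add_re,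
      re_trace_conjTranspose_mul hZ, hB, smul_eq_mul]
    ring

theorem exists_isHermitian_forall_eq_reTrace [Fintype ι] (Λ : Matrix ι ι ℂ →ₗ[ℝ] σ → ℝ) :
    ∃ C : σ → Matrix ι ι ℂ, (∀ k, (C k).IsHermitian) ∧ ∀ Z, Z.IsHermitian → Λ Z = reTrace C Z := by
  choose C hC hΛ using fun k => exists_isHermitian_forall_eq_re_trace (LinearMap.proj k ∘ₗ Λ)
  exact ⟨C, hC, fun Z hZ => funext fun k => hΛ k Z hZ⟩

theorem isClosed_setOf_isHermitian_and_hasRankLeTwo (ι : Type*) :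
    IsClosed {Z : Matrix ι ι ℂ | Z.IsHermitian ∧ HasRankLeTwo Z} := by
  have hdet (r c : Fin 3 → ι) : IsClosed {Z : Matrix ι ι ℂ | (Z.submatrix r c).det = 0} :=
    isClosed_eq (continuous_id.matrix_submatrix r c).matrix_det continuous_const
  simp only [HasRankLeTwo, Set.ofPred_and, Set.ofPred_forall]
  exact (isClosed_eq continuous_id.matrix_conjTranspose continuous_id).inter
    (isClosed_iInter fun r => isClosed_iInter (hdet r))

theorem HasRankLeTwo.smul {A : Type*} [CommRing A] {Z : Matrix ι ι A} (hZ : HasRankLeTwo Z)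
    (a : A) : HasRankLeTwo (a • Z) := fun r c => by
  rw [submatrix_smul, Pi.smul_apply, Pi.smul_apply, det_smul, hZ r c, mul_zero]

theorem exists_isHermitian_hasRankLeTwo_eq [Fintype σ] {k n : ℕ} (hn : n = 2 ^ k)
    (hσ : Fintype.card σ = 4 * n)
    {Λ : Matrix (Fin (n + 1)) (Fin (n + 1)) ℂ →ₗ[ℝ] σ → ℝ}
    (hΛ : ∀ Z, Z.IsHermitian → HasRankLeTwo Z → Λ Z = 0 → Z = 0) (y : σ → ℝ) :
    ∃ Z, Z.IsHermitian ∧ HasRankLeTwo Z ∧ Λ Z = y := by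
  obtain ⟨C, hC, hΛC⟩ := exists_isHermitian_forall_eq_reTrace Λ
  obtain ⟨C₀, hC₀, hinj⟩ := exists_hermitian_forall_trace_eq_zero_imp (hn ▸ by positivity) hσ
  obtain ⟨d, hd⟩ := exists_generatesInDegree hinj
  have hfin : {μ : ℝ | ¬ GeneratesInDegree (C + (μ : ℂ) • C₀) d}.Finite :=
    (hd.finite_setOf_not_add_smul C).preimage Complex.ofReal_injective.injOn
  have hgen : ∃ᶠ μ : ℝ in 𝓝 0, GeneratesInDegree (C + (μ : ℂ) • C₀) d :=
    ((eventually_cofinite.mpr hfin).filter_mono (nhdsNE_le_cofinite 0)).frequently.filter_mono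
      nhdsWithin_le_nhds
  let V : Set (Matrix (Fin (n + 1)) (Fin (n + 1)) ℂ) := {Z | Z.IsHermitian ∧ HasRankLeTwo Z}
  suffices y ∈ (reTrace C).toContinuousLinearMap '' V by
    obtain ⟨Z, ⟨hZ, hZ₂⟩, rfl⟩ := this
    exact ⟨Z, hZ, hZ₂, hΛC Z hZ⟩
  refine mem_image_of_frequently_mem_closure (V := V) (g := (reTrace C₀).toContinuousLinearMap)
    (isClosed_setOf_isHermitian_and_hasRankLeTwo _)
    (fun Z hZ a _ => ⟨hZ.1.smul (.all a), hZ.2.smul (a : ℂ)⟩)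
    (fun Z hZ h => hΛ Z hZ.1 hZ.2 ((hΛC Z hZ.1).trans h)) (hgen.mono fun μ hμ => ?_)
  obtain ⟨g, hg, hZ⟩ := hμ.exists_hermitian_trace_eq_of_eval_ne_zero
    (fun k => (hC k).add ((hC₀ k).smul (.all μ))) (by simp [hn]) (hn ▸ hσ)
  refine (dense_setOf_eval_ne_zero hg).mono (fun y hy => ?_) y
  obtain ⟨Z, hZ, hZ₂, htrace⟩ := hZ y hy
  refine ⟨Z, ⟨hZ, hZ₂⟩, funext fun k => ?_⟩
  rw [← Complex.ofReal_re (y k), ← htrace k, ← reTrace_apply, reTrace_add_smul]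
  rfl

end Surjectivity

section RankTwoHermitian

variable {ι : Type*}

theorem isHermitian_vecMulVec_star (c : ι → ℂ) : (vecMulVec c (star c)).IsHermitian := by
  rw [IsHermitian, conjTranspose_vecMulVec, star_star]

theorem exists_eq_smul_vecMulVec_star {Q : Matrix ι ι ℂ} (hQ : Q.IsHermitian)
    (hminor : ∀ i j i' j', Q i j * Q i' j' = Q i j' * Q i' j) :
    ∃ (σ : ℝ) (c : ι → ℂ), Q = σ • vecMulVec c (star c) := by
  by_cases hdiag : ∃ m, Q m m ≠ 0
  · obtain ⟨m, hm⟩ := hdiag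
    refine ⟨(Q m m).re⁻¹, fun i => Q i m, ?_⟩
    ext i j
    simp only [Matrix.smul_apply, vecMulVec_apply, Pi.star_apply, hQ.apply, Complex.real_smul,
      Complex.ofReal_inv, show ((Q m m).re : ℂ) = Q m m from hQ.coe_re_apply_self m]
    rw [inv_mul_eq_div, eq_div_iff hm, hminor]
  · push Not at hdiag
    refine ⟨0, 0, ?_⟩
    ext i j
    have hnorm := hminor i j j i
    rw [hdiag, zero_mul, ← hQ.apply j i, Complex.star_def, Complex.mul_conj,
      Complex.ofReal_eq_zero, Complex.normSq_eq_zero] at hnorm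
    simpa using hnorm

theorem HasRankLeTwo.exists_eq_schur {Z : Matrix ι ι ℂ} (hrank : HasRankLeTwo Z)
    (hZ : Z.IsHermitian) {m : ι} (hm : Z m m ≠ 0) :
    ∃ (σ : ℝ) (c : ι → ℂ), c m = 0 ∧
      Z = (Z m m).re⁻¹ • vecMulVec (Z.col m) (star (Z.col m)) + σ • vecMulVec c (star c) := by
  set Q := Z - (Z m m).re⁻¹ • vecMulVec (Z.col m) (star (Z.col m)) with hQ_def
  have hQ : Q.IsHermitian := hZ.sub ((isHermitian_vecMulVec_star _).smul (.all _))
  have hQ_apply (i j) : Q i j = Z i j - (Z m m)⁻¹ * (Z i m * Z m j) := by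
    simp only [hQ_def, Matrix.sub_apply, Matrix.smul_apply, vecMulVec_apply, Pi.star_apply,
      col_apply, hZ.apply, Complex.real_smul, Complex.ofReal_inv,
      show ((Z m m).re : ℂ) = Z m m from hZ.coe_re_apply_self m]
  obtain ⟨σ, c, hσc⟩ := exists_eq_smul_vecMulVec_star hQ fun i j i' j' => by
    have hdet := hrank ![m, i, i'] ![m, j, j']
    simp only [det_fin_three, submatrix_apply, cons_val] at hdet
    simp only [hQ_apply]
    field_simp
    linear_combination Z m m * hdet
  have hcm : σ • (c m * star (c m)) = 0 := by
    rw [← Pi.star_apply, ← vecMulVec_apply, ← Matrix.smul_apply, ← hσc, hQ_apply]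
    field_simp
    ring
  rcases smul_eq_zero.mp hcm with rfl | hcm
  · exact ⟨0, 0, rfl, by simpa using sub_eq_iff_eq_add'.mp hσc⟩
  · exact ⟨σ, c, by simpa using hcm, sub_eq_iff_eq_add'.mp hσc⟩

theorem HasRankLeTwo.exists_eq_of_diag_eq_zero {Z : Matrix ι ι ℂ} (hrank : HasRankLeTwo Z)
    (hZ : Z.IsHermitian) (hdiag : ∀ i, Z i i = 0) :
    ∃ (σ τ : ℝ) (a b : ι → ℂ), Z = σ • vecMulVec a (star a) + τ • vecMulVec b (star b) := by
  by_cases hzero : ∀ i j, Z i j = 0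
  · exact ⟨0, 0, 0, 0, by ext; simp [hzero]⟩
  push Not at hzero
  obtain ⟨p, r, hpr⟩ := hzero
  have hrp : Z r p ≠ 0 := by rwa [← hZ.apply, star_ne_zero]
  have hkey (i j) : Z i j = Z i p * Z r j / Z r p + Z i r * Z p j / Z p r := by
    have hdet := hrank ![i, p, r] ![j, p, r]
    simp only [det_fin_three, submatrix_apply, cons_val, hdiag] at hdet
    field_simp
    linear_combination -hdet
  refine ⟨1 / 2, -1 / 2, fun i => Z i p / Z r p + Z i r, fun i => Z i p / Z r p - Z i r, ?_⟩
  ext i j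
  simp only [Matrix.add_apply, Matrix.smul_apply, vecMulVec_apply, Pi.star_apply, star_add,
    star_sub, star_div₀, hZ.apply, Complex.real_smul]
  rw [hkey i j]
  push_cast
  field_simp
  ring

theorem HasRankLeTwo.exists_eq_smul_add_smul {Z : Matrix ι ι ℂ} (hrank : HasRankLeTwo Z)
    (hZ : Z.IsHermitian) :
    ∃ (σ τ : ℝ) (a b : ι → ℂ), Z = σ • vecMulVec a (star a) + τ • vecMulVec b (star b) := by
  by_cases hdiag : ∀ i, Z i i = 0
  · exact hrank.exists_eq_of_diag_eq_zero hZ hdiag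
  · push Not at hdiag
    obtain ⟨m, hm⟩ := hdiag
    obtain ⟨σ, c, -, hZ'⟩ := hrank.exists_eq_schur hZ hm
    exact ⟨_, σ, _, c, hZ'⟩

end RankTwoHermitian

section HermitianForm

variable {ι : Type*} [Fintype ι]

/-- The real quadratic form `x ↦ x* Z x` of a Hermitian matrix `Z`. -/
def hermForm (Z : Matrix ι ι ℂ) (x : ι → ℂ) : ℝ :=
  (star x ⬝ᵥ Z *ᵥ x).re

theorem hermForm_add (Z W : Matrix ι ι ℂ) (x : ι → ℂ) :
    hermForm (Z + W) x = hermForm Z x + hermForm W x := by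
  simp [hermForm, add_mulVec]

theorem hermForm_sub (Z W : Matrix ι ι ℂ) (x : ι → ℂ) :
    hermForm (Z - W) x = hermForm Z x - hermForm W x := by
  simp [hermForm, sub_mulVec]

theorem hermForm_smul (a : ℝ) (Z : Matrix ι ι ℂ) (x : ι → ℂ) :
    hermForm (a • Z) x = a * hermForm Z x := by
  simp [hermForm, smul_mulVec]

theorem hermForm_vecMulVec_star (c x : ι → ℂ) :
    hermForm (vecMulVec c (star c)) x = Complex.normSq (star c ⬝ᵥ x) := by
  rw [hermForm, vecMulVec_mulVec, op_smul_eq_smul, dotProduct_smul, smul_eq_mul, ← star_star c,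
    star_dotProduct_star, star_star, dotProduct_comm, Complex.star_def, Complex.mul_conj,
    Complex.ofReal_re]

/-- The form of `Z` is semidefinite, of either sign, on some complex hyperplane; for Hermitian `Z`
this says that `Z` has at most one positive or at most one negative eigenvalue. The degenerate
choice `v = 0`, which gives the whole space, only strengthens the condition. -/
def IsSemidefiniteOnHyperplane (Z : Matrix ι ι ℂ) : Prop :=
  ∃ v : ι → ℂ, (∀ x, star v ⬝ᵥ x = 0 → 0 ≤ hermForm Z x) ∨
    ∀ x, star v ⬝ᵥ x = 0 → hermForm Z x ≤ 0

/-- Among the signs of `σ`, `τ` and `-1` two agree, so removing one of the three vectors leaves a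
semidefinite form. -/
theorem HasRankLeTwo.isSemidefiniteOnHyperplane_sub {Z : Matrix ι ι ℂ} (hrank : HasRankLeTwo Z)
    (hZ : Z.IsHermitian) (e : ι → ℂ) :
    IsSemidefiniteOnHyperplane (Z - vecMulVec e (star e)) := by
  obtain ⟨σ, τ, a, b, rfl⟩ := hrank.exists_eq_smul_add_smul hZ
  have hform (x) : hermForm (σ • vecMulVec a (star a) + τ • vecMulVec b (star b) -
      vecMulVec e (star e)) x = σ * Complex.normSq (star a ⬝ᵥ x) +
        τ * Complex.normSq (star b ⬝ᵥ x) - Complex.normSq (star e ⬝ᵥ x) := by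
    simp only [hermForm_sub, hermForm_add, hermForm_smul, hermForm_vecMulVec_star]
  have hnonneg (c x : ι → ℂ) : 0 ≤ Complex.normSq (star c ⬝ᵥ x) := Complex.normSq_nonneg _
  rcases le_total 0 τ with hτ | hτ
  · rcases le_total 0 σ with hσ | hσ
    · refine ⟨e, Or.inl fun x hx => ?_⟩
      rw [hform, hx, map_zero]
      linarith [mul_nonneg hσ (hnonneg a x), mul_nonneg hτ (hnonneg b x)]
    · refine ⟨b, Or.inr fun x hx => ?_⟩
      rw [hform, hx, map_zero]
      linarith [mul_nonpos_of_nonpos_of_nonneg hσ (hnonneg a x), hnonneg e x]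
  · refine ⟨a, Or.inr fun x hx => ?_⟩
    rw [hform, hx, map_zero]
    linarith [mul_nonpos_of_nonpos_of_nonneg hτ (hnonneg b x), hnonneg e x]

theorem HasRankLeTwo.isSemidefiniteOnHyperplane {Z : Matrix ι ι ℂ} (hrank : HasRankLeTwo Z)
    (hZ : Z.IsHermitian) : IsSemidefiniteOnHyperplane Z := by
  simpa using hrank.isSemidefiniteOnHyperplane_sub hZ 0

end HermitianForm

section Separation

open scoped ComplexOrder Matrix.Norms.Elementwise

theorem exists_forall_eq_zero_and_forall_pos {F : Type*} [NormedAddCommGroup F] [NormedSpace ℝ F]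
    {D : Set F} (hconvex : Convex ℝ D) (hcompact : IsCompact D) {T : Submodule ℝ F}
    (hT : IsClosed (T : Set F)) (hdisjoint : Disjoint D T) :
    ∃ ψ : F →L[ℝ] ℝ, (∀ y ∈ T, ψ y = 0) ∧ ∀ x ∈ D, 0 < ψ x := by
  obtain ⟨f, a, b, hD, hab, hT'⟩ :=
    geometric_hahn_banach_compact_closed hconvex hcompact T.convex hT hdisjoint
  have hb : b < 0 := by simpa using hT' 0 T.zero_mem
  have hzero (y) (hy : y ∈ T) : f y = 0 := by
    by_contra hne
    have hlt := hT' ((b / f y) • y) (T.smul_mem _ hy)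
    rw [map_smul, smul_eq_mul, div_mul_cancel₀ _ hne] at hlt
    exact lt_irrefl _ hlt
  refine ⟨-f, fun y hy => by simp [hzero y hy], fun x hx => ?_⟩
  simpa using (hD x hx).trans (hab.trans hb)

variable {ι : Type*}

/-- The differential at `e` of `c ↦ c c*`; its range is the tangent space of the Hermitian matrices
of rank one at `e e*`. -/
def rankOneTangent (e : ι → ℂ) : (ι → ℂ) →ₗ[ℝ] Matrix ι ι ℂ where
  toFun w := vecMulVec w (star e) + vecMulVec e (star w)
  map_add' v w := by
    rw [star_add, add_vecMulVec, vecMulVec_add]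
    abel
  map_smul' a w := by
    simp [smul_vecMulVec, vecMulVec_smul]

theorem isHermitian_rankOneTangent (e w : ι → ℂ) : (rankOneTangent e w).IsHermitian := by
  simp [IsHermitian, rankOneTangent, conjTranspose_vecMulVec, add_comm]

variable [Fintype ι]

theorem continuous_hermForm (x : ι → ℂ) : Continuous fun Z : Matrix ι ι ℂ => hermForm Z x :=
  Complex.continuous_re.comp
    (continuous_const.dotProduct (continuous_id.matrix_mulVec continuous_const))

theorem posSemidef_iff_hermForm {P : Matrix ι ι ℂ} :
    P.PosSemidef ↔ P.IsHermitian ∧ ∀ x, 0 ≤ hermForm P x := by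
  rw [posSemidef_iff_dotProduct_mulVec]
  refine and_congr_right fun hP => forall_congr' fun x => ?_
  rw [hermForm, Complex.nonneg_iff, and_iff_left_iff_imp]
  exact fun _ => (hP.im_star_dotProduct_mulVec_self x).symm

theorem isClosed_setOf_posSemidef (κ : Type*) [Finite κ] :
    IsClosed {P : Matrix κ κ ℂ | P.PosSemidef} := by
  have := Fintype.ofFinite κ
  simp only [posSemidef_iff_hermForm, Set.ofPred_and, Set.ofPred_forall]
  exact (isClosed_eq continuous_id.matrix_conjTranspose continuous_id).inter
    (isClosed_iInter fun x => isClosed_le continuous_const (continuous_hermForm x))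

theorem re_trace_pos {P : Matrix ι ι ℂ} (hP : P.PosSemidef) (hne : P ≠ 0) : 0 < P.trace.re := by
  have hpos := hP.trace_nonneg.lt_of_ne' (mt hP.trace_eq_zero_iff.mp hne)
  exact (Complex.pos_iff.mp hpos).1

/-- The base of the face of the positive semidefinite cone that is orthogonal to `e`, cut out by
the trace. -/
def psdFaceBase (e : ι → ℂ) : Set (Matrix ι ι ℂ) :=
  {P | P.PosSemidef ∧ hermForm P e = 0 ∧ P.trace.re = 1}

theorem convex_psdFaceBase (e : ι → ℂ) : Convex ℝ (psdFaceBase e) := by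
  rintro P ⟨hP, hPe, hPtr⟩ Q ⟨hQ, hQe, hQtr⟩ a b ha hb hab
  refine ⟨(hP.smul ha).add (hQ.smul hb), ?_, ?_⟩
  · rw [hermForm_add, hermForm_smul, hermForm_smul, hPe, hQe, mul_zero, mul_zero, add_zero]
  · simp [trace_add, trace_smul, hPtr, hQtr, hab]

theorem isCompact_psdFaceBase (e : ι → ℂ) : IsCompact (psdFaceBase e) := by
  have hcont : Continuous fun P : Matrix ι ι ℂ => P.trace.re :=
    Complex.continuous_re.comp continuous_id.matrix_trace
  obtain ⟨m, hm, hbound⟩ := exists_pos_forall_mul_norm_pow_le one_ne_zero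
    (isClosed_setOf_posSemidef ι) (fun P hP a ha => hP.smul ha) hcont
    (fun a P _ => by simp [trace_smul]) (fun P hP hne => re_trace_pos hP hne)
  refine (isCompact_closedBall 0 m⁻¹).of_isClosed_subset ?_ ?_
  · exact (isClosed_setOf_posSemidef ι).inter
      ((isClosed_eq (continuous_hermForm e) continuous_const).inter
        (isClosed_eq hcont continuous_const))
  · rintro P ⟨hP, -, htr⟩
    have hle := hbound P hP
    rw [pow_one, htr, ← le_inv_mul_iff₀ hm, mul_one] at hle
    exact mem_closedBall_zero_iff.mpr hle

theorem inv_smul_vecMulVec_star_mem_psdFaceBase {e u : ι → ℂ} (hu : star e ⬝ᵥ u = 0)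
    (hne : u ≠ 0) :
    (vecMulVec u (star u)).trace.re⁻¹ • vecMulVec u (star u) ∈ psdFaceBase e := by
  have hpos : 0 < (vecMulVec u (star u)).trace.re :=
    re_trace_pos (posSemidef_vecMulVec_self_star u) (by simpa using hne)
  refine ⟨(posSemidef_vecMulVec_self_star u).smul (inv_nonneg.mpr hpos.le), ?_, ?_⟩
  · rw [hermForm_smul, hermForm_vecMulVec_star, star_dotProduct, hu]
    simp
  · rw [trace_smul, Complex.smul_re, smul_eq_mul, inv_mul_cancel₀ hpos.ne']

theorem hermForm_rankOneTangent (e w x : ι → ℂ) :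
    hermForm (rankOneTangent e w) x = 2 * ((star e ⬝ᵥ x) * (star x ⬝ᵥ w)).re := by
  have hstar : (star w ⬝ᵥ x) * (star x ⬝ᵥ e) = star ((star e ⬝ᵥ x) * (star x ⬝ᵥ w)) := by
    rw [star_mul', ← star_dotProduct, ← star_dotProduct, mul_comm]
  simp only [hermForm, rankOneTangent, LinearMap.coe_mk, AddHom.coe_mk, add_mulVec,
    vecMulVec_mulVec, op_smul_eq_smul, dotProduct_add, dotProduct_smul, smul_eq_mul, hstar,
    Complex.add_re, Complex.star_def, Complex.conj_re, two_mul]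

theorem re_trace_rankOneTangent (e w : ι → ℂ) :
    (rankOneTangent e w).trace.re = 2 * (star e ⬝ᵥ w).re := by
  have hstar : star w ⬝ᵥ e = star (star e ⬝ᵥ w) := star_dotProduct w e
  simp only [rankOneTangent, LinearMap.coe_mk, AddHom.coe_mk, trace_add, trace_vecMulVec,
    dotProduct_comm _ (star _), hstar, Complex.add_re, Complex.star_def, Complex.conj_re, two_mul]

theorem disjoint_image_psdFaceBase_range {F : Type*} [NormedAddCommGroup F] [NormedSpace ℝ F]
    {Λ : Matrix ι ι ℂ →L[ℝ] F}
    (hΛ : ∀ Z, Z.IsHermitian → Λ Z = 0 → IsSemidefiniteOnHyperplane Z → Z = 0) (e : ι → ℂ) :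
    Disjoint (Λ '' psdFaceBase e) (LinearMap.range (Λ.toLinearMap ∘ₗ rankOneTangent e)) := by
  rw [Set.disjoint_left]
  rintro _ ⟨P, ⟨hP, hPe, htr⟩, rfl⟩ ⟨w, hw⟩
  have hP_eq : P = rankOneTangent e w := by
    refine sub_eq_zero.mp (hΛ _ (hP.isHermitian.sub (isHermitian_rankOneTangent e w)) ?_
      ⟨e, Or.inl fun x hx => ?_⟩)
    · rw [map_sub, sub_eq_zero]
      exact hw.symm
    · rw [hermForm_sub, hermForm_rankOneTangent, hx]
      simpa using (posSemidef_iff_hermForm.mp hP).2 x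
  rw [hP_eq, re_trace_rankOneTangent] at htr
  obtain ⟨r, hr⟩ : ∃ r : ℝ, star e ⬝ᵥ e = r :=
    ⟨_, Complex.eq_re_of_ofReal_le (r := 0) (by simp)⟩
  rw [hP_eq, hermForm_rankOneTangent, hr, Complex.re_ofReal_mul] at hPe
  have hr₀ : r = 0 := by linear_combination hPe - r * htr
  have he : e = 0 := dotProduct_star_self_eq_zero.mp (by rw [hr, hr₀, Complex.ofReal_zero])
  simp [he] at htr

theorem exists_forall_rankOneTangent_eq_zero_and_forall_pos {F : Type*} [NormedAddCommGroup F]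
    [NormedSpace ℝ F] {Λ : Matrix ι ι ℂ →L[ℝ] F}
    (hΛ : ∀ Z, Z.IsHermitian → Λ Z = 0 → IsSemidefiniteOnHyperplane Z → Z = 0) (e : ι → ℂ) :
    ∃ ψ : F →L[ℝ] ℝ, (∀ w, ψ (Λ (rankOneTangent e w)) = 0) ∧
      ∀ u, star e ⬝ᵥ u = 0 → u ≠ 0 → 0 < ψ (Λ (vecMulVec u (star u))) := by
  obtain ⟨ψ, hzero, hpos⟩ := exists_forall_eq_zero_and_forall_pos
    ((convex_psdFaceBase e).linear_image Λ.toLinearMap)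
    ((isCompact_psdFaceBase e).image Λ.continuous)
    (Submodule.closed_of_finiteDimensional _) (disjoint_image_psdFaceBase_range hΛ e)
  refine ⟨ψ, fun w => hzero _ ⟨w, rfl⟩, fun u hu hne => ?_⟩
  have hscaled := hpos _ ⟨_, inv_smul_vecMulVec_star_mem_psdFaceBase hu hne, rfl⟩
  rw [ContinuousLinearMap.coe_coe, map_smul, map_smul, smul_eq_mul] at hscaled
  exact pos_of_mul_pos_right hscaled (inv_nonneg.mpr
    (re_trace_pos (posSemidef_vecMulVec_self_star u) (by simpa using hne)).le)

end Separation

section Isolation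

open Filter Topology
open scoped Matrix.Norms.Elementwise

/-- The quadratic terms are absorbed by the linear one once `x` is small. -/
theorem eq_zero_of_linear_add_quadratic_eq_zero {F : Type*} [NormedAddCommGroup F]
    {a m A B x s p q : ℝ} {t u v : F} (hpq : p + q = 0) (htuv : t + (u + v) = 0)
    (hp : |p| ≤ A * x ^ 2) (hq : a * s ≤ |q|) (ht : m * x ≤ ‖t‖) (hu : ‖u‖ ≤ B * x ^ 2)
    (hv : ‖v‖ ≤ B * s) (ha : 0 < a) (hB : 0 ≤ B) (hx : 0 ≤ x) (hs : 0 ≤ s)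
    (hsmall : B * (1 + A / a) * x < m) : x = 0 ∧ s = 0 := by
  have hs_le : s ≤ A / a * x ^ 2 := by
    rw [div_mul_eq_mul_div, le_div_iff₀' ha]
    rw [eq_neg_of_add_eq_zero_left hpq, abs_neg] at hp
    exact hq.trans hp
  have hquad : m * x ≤ B * (1 + A / a) * x * x := calc
    m * x ≤ ‖u + v‖ := by rwa [eq_neg_of_add_eq_zero_left htuv, norm_neg] at ht
    _ ≤ B * x ^ 2 + B * s := norm_add_le_of_le hu hv
    _ ≤ B * x ^ 2 + B * (A / a * x ^ 2) := by gcongr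
    _ = B * (1 + A / a) * x * x := by ring
  have hx₀ : x = 0 := by
    by_contra hne
    exact hquad.not_gt (mul_lt_mul_of_pos_right hsmall (hx.lt_of_ne' hne))
  exact ⟨hx₀, le_antisymm (hs_le.trans_eq (by rw [hx₀]; ring)) hs⟩

variable {ι : Type*}

theorem norm_vecMulVec_star_le [Fintype ι] (u : ι → ℂ) : ‖vecMulVec u (star u)‖ ≤ ‖u‖ ^ 2 := by
  refine (norm_le_iff (by positivity)).mpr fun i j => ?_
  rw [vecMulVec_apply, Pi.star_apply, norm_mul, norm_star, sq]
  exact mul_le_mul (norm_le_pi_norm u i) (norm_le_pi_norm u j) (norm_nonneg _) (norm_nonneg _)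

theorem exists_forall_norm_apply_smul_vecMulVec_star_le [Fintype ι] {F : Type*}
    [NormedAddCommGroup F] [NormedSpace ℝ F] (g : Matrix ι ι ℂ →L[ℝ] F) :
    ∃ C > 0, ∀ (a : ℝ) (u : ι → ℂ), ‖g (a • vecMulVec u (star u))‖ ≤ C * (|a| * ‖u‖ ^ 2) := by
  obtain ⟨C, hC, hbound⟩ := ContinuousLinearMap.bound g
  refine ⟨C, hC, fun a u => (hbound _).trans ?_⟩
  gcongr
  rw [norm_smul, Real.norm_eq_abs]
  gcongr
  exact norm_vecMulVec_star_le u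

theorem exists_pos_forall_mul_norm_sq_le [Fintype ι] {o : ι} {f : Matrix ι ι ℂ →L[ℝ] ℝ}
    (hpos : ∀ u, u o = 0 → u ≠ 0 → 0 < f (vecMulVec u (star u))) :
    ∃ a > 0, ∀ u : ι → ℂ, u o = 0 → a * ‖u‖ ^ 2 ≤ f (vecMulVec u (star u)) := by
  refine exists_pos_forall_mul_norm_pow_le two_ne_zero (V := {u : ι → ℂ | u o = 0})
    (isClosed_eq (continuous_apply o) continuous_const) (fun u hu a _ => ?_)
    (f.continuous.comp (continuous_id.matrix_vecMulVec continuous_star)) (fun a u _ => ?_) hpos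
  · simpa using Or.inr hu
  · rw [star_smul, star_trivial, smul_vecMulVec, vecMulVec_smul, smul_smul, ← sq, map_smul,
      smul_eq_mul]

theorem vecMulVec_star_smul_add (r : ℝ) (e w : ι → ℂ) :
    vecMulVec (r • e + w) (star (r • e + w)) =
      r ^ 2 • vecMulVec e (star e) + r • rankOneTangent e w + vecMulVec w (star w) := by
  simp only [star_add, star_smul, star_trivial, add_vecMulVec, vecMulVec_add, smul_vecMulVec,
    vecMulVec_smul, rankOneTangent, LinearMap.coe_mk, AddHom.coe_mk]
  module

theorem rankOneTangent_self (e : ι → ℂ) : rankOneTangent e e = (2 : ℝ) • vecMulVec e (star e) := by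
  rw [two_smul]
  rfl

variable [DecidableEq ι]

theorem vecMulVec_single_star_single (o : ι) :
    vecMulVec (Pi.single o 1) (star (Pi.single o 1)) = (single o o 1 : Matrix ι ι ℂ) := by
  rw [← Pi.single_star, star_one, single_eq_single_vecMulVec_single]

/-- The vector `w` for which `rankOneTangent e w` approximates `Z - e e*` near `e e*`, where
`e = Pi.single o 1`; its entry at `o` is normalised to be real when `Z` is Hermitian. -/
noncomputable def tangentVector (o : ι) (Z : Matrix ι ι ℂ) : ι → ℂ :=
  Z.col o - (((Z o o).re + 1) / 2) • (Pi.single o 1 : ι → ℂ)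

theorem im_tangentVector_self {Z : Matrix ι ι ℂ} (hZ : Z.IsHermitian) (o : ι) :
    (tangentVector o Z o).im = 0 := by
  have him : (Z o o).im = 0 := Complex.conj_eq_iff_im.mp (hZ.apply o o)
  simp [tangentVector, him]

theorem tangentVector_single (o : ι) :
    tangentVector o (single o o 1) = 0 := by
  ext i
  rcases eq_or_ne i o with rfl | hi
  · simp [tangentVector]
  · simp [tangentVector, hi, hi.symm]

theorem continuous_tangentVector (o : ι) : Continuous (tangentVector o) := by
  refine continuous_pi fun i => ?_
  simp only [tangentVector, Pi.sub_apply, col_apply, Pi.smul_apply]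
  fun_prop

theorem HasRankLeTwo.exists_sub_single_eq [Fintype ι] {Z : Matrix ι ι ℂ}
    (hrank : HasRankLeTwo Z) (hZ : Z.IsHermitian) {o : ι} (ho : 1 / 2 < (Z o o).re) :
    ∃ (ρ σ : ℝ) (w c : ι → ℂ), |ρ| * ‖w‖ ^ 2 ≤ 2 * ‖tangentVector o Z‖ ^ 2 ∧ c o = 0 ∧
      Z - single o o 1 =
        rankOneTangent (Pi.single o 1) (tangentVector o Z) +
          ρ • vecMulVec w (star w) + σ • vecMulVec c (star c) := by
  obtain ⟨σ, c, hc, hschur⟩ := hrank.exists_eq_schur hZ (m := o) fun h => by norm_num [h] at ho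
  set e : ι → ℂ := Pi.single o 1 with he
  set r := (Z o o).re with hr_def
  have hr : (r : ℂ) = Z o o := hZ.coe_re_apply_self o
  have hr₀ : 0 < r := by linarith
  obtain ⟨w, hcol⟩ : ∃ w, Z.col o = r • e + w := ⟨Z.col o - r • e, by rw [add_sub_cancel]⟩
  have hwo : w o = 0 := by simpa [he, hr] using congrFun hcol o
  have hvec : tangentVector o Z = w + ((r - 1) / 2) • e := by
    rw [tangentVector, hcol]
    module
  have hw : ‖w‖ ≤ ‖tangentVector o Z‖ := by
    refine (pi_norm_le_iff_of_nonneg (norm_nonneg _)).mpr fun i => ?_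
    rcases eq_or_ne i o with rfl | hi
    · simp [hwo]
    · simpa [hvec, he, hi] using norm_le_pi_norm (tangentVector o Z) i
  refine ⟨r⁻¹, σ, w, c, ?_, hc, ?_⟩
  · rw [abs_inv, abs_of_pos hr₀]
    gcongr
    rw [inv_le_comm₀ hr₀ two_pos]
    linarith
  · rw [hvec, map_add, map_smul, rankOneTangent_self]
    nth_rw 1 [hschur]
    rw [← vecMulVec_single_star_single, ← he, hcol, vecMulVec_star_smul_add, smul_add,
      smul_add, smul_smul, smul_smul, inv_mul_cancel₀ hr₀.ne', show r⁻¹ * r ^ 2 = r by field_simp]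
    module

theorem exists_pos_forall_mul_norm_le_apply_rankOneTangent [Fintype ι] {F : Type*}
    [NormedAddCommGroup F] [NormedSpace ℝ F] {o : ι} {g : Matrix ι ι ℂ →L[ℝ] F}
    (hg : ∀ w, (w o).im = 0 → g (rankOneTangent (Pi.single o 1) w) = 0 → w = 0) :
    ∃ m > 0, ∀ w : ι → ℂ, (w o).im = 0 →
      m * ‖w‖ ≤ ‖g (rankOneTangent (Pi.single o 1) w)‖ := by
  refine exists_pos_forall_mul_norm_le (V := {w : ι → ℂ | (w o).im = 0})
    (f := g.comp (rankOneTangent (Pi.single o 1)).toContinuousLinearMap)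
    (isClosed_eq (by fun_prop) continuous_const) (fun w hw a _ => ?_) hg
  simpa using Or.inr hw

theorem eventually_eq_single [Finite ι] {F : Type*} [NormedAddCommGroup F]
    [NormedSpace ℝ F] {o : ι} {f : Matrix ι ι ℂ →L[ℝ] ℝ} {g : Matrix ι ι ℂ →L[ℝ] F}
    (hf : ∀ w, f (rankOneTangent (Pi.single o 1) w) = 0)
    (hpos : ∀ u, u o = 0 → u ≠ 0 → 0 < f (vecMulVec u (star u)))
    (hg : ∀ w, (w o).im = 0 → g (rankOneTangent (Pi.single o 1) w) = 0 → w = 0) :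
    ∀ᶠ Z in 𝓝 (single o o 1), Z.IsHermitian → HasRankLeTwo Z →
      f (Z - single o o 1) = 0 → g (Z - single o o 1) = 0 → Z = single o o 1 := by
  cases nonempty_fintype ι
  obtain ⟨A, hA₀, hA⟩ := exists_forall_norm_apply_smul_vecMulVec_star_le f
  obtain ⟨B, hB₀, hB⟩ := exists_forall_norm_apply_smul_vecMulVec_star_le g
  obtain ⟨a, ha₀, ha⟩ := exists_pos_forall_mul_norm_sq_le hpos
  obtain ⟨m, hm₀, hm⟩ := exists_pos_forall_mul_norm_le_apply_rankOneTangent hg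
  have hsmall : ∀ᶠ Z in 𝓝 (single o o 1),
      B * 2 * (1 + A * 2 / a) * ‖tangentVector o Z‖ < m := by
    refine (((continuous_tangentVector o).norm.const_mul _).tendsto _).eventually_lt_const ?_
    rwa [tangentVector_single, norm_zero, mul_zero]
  have hdiag : ∀ᶠ Z : Matrix ι ι ℂ in 𝓝 (single o o 1), 1 / 2 < (Z o o).re := by
    refine (Continuous.tendsto (by fun_prop) _).eventually_const_lt ?_
    norm_num
  filter_upwards [hsmall, hdiag] with Z hsmall hdiag hZ hrank hfZ hgZ
  obtain ⟨ρ, σ, w, c, hquad, hc, hexpand⟩ := hrank.exists_sub_single_eq hZ hdiag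
  rw [hexpand, map_add, map_add, hf, zero_add] at hfZ
  rw [hexpand, map_add, map_add, add_assoc] at hgZ
  obtain ⟨hvec, hσc⟩ := eq_zero_of_linear_add_quadratic_eq_zero hfZ hgZ
    (A := A * 2) (B := B * 2) (s := |σ| * ‖c‖ ^ 2)
    ((hA _ w).trans (by rw [mul_assoc]; gcongr))
    (by
      rw [map_smul, smul_eq_mul, abs_mul, mul_left_comm]
      gcongr
      exact (ha c hc).trans (le_abs_self _))
    (hm _ (im_tangentVector_self hZ o))
    ((hB _ w).trans (by rw [mul_assoc]; gcongr))
    ((hB σ c).trans (by gcongr; linarith))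
    ha₀ (by positivity) (norm_nonneg _) (by positivity) hsmall
  have hρw₀ : ρ • vecMulVec w (star w) = 0 := by
    have hρw : |ρ| * ‖w‖ ^ 2 = 0 := le_antisymm (by simpa [hvec] using hquad) (by positivity)
    simpa using hρw
  have hσc₀ : σ • vecMulVec c (star c) = 0 := by
    simpa using hσc
  rw [← sub_eq_zero, hexpand, norm_eq_zero.mp hvec, map_zero, hρw₀, hσc₀, add_zero, add_zero]

end Isolation

section KernelMeetsSemidefinite

open Filter Topology
open scoped Matrix.Norms.Elementwise

theorem exists_mem_ker_notMem_range {E F : Type*} [AddCommGroup E] [Module ℝ E]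
    [FiniteDimensional ℝ E] [AddCommGroup F] [Module ℝ F] [FiniteDimensional ℝ F]
    (h : Module.finrank ℝ E + 1 < Module.finrank ℝ F) (f : E →ₗ[ℝ] F) (ψ : F →ₗ[ℝ] ℝ) :
    ∃ y, ψ y = 0 ∧ y ∉ LinearMap.range f := by
  by_contra! hle
  have hle' : Module.finrank ℝ (LinearMap.ker ψ) ≤ Module.finrank ℝ (LinearMap.range f) :=
    Submodule.finrank_mono fun y hy => hle y hy
  have hrange : Module.finrank ℝ (LinearMap.range ψ) ≤ 1 :=
    (Submodule.finrank_le _).trans_eq (Module.finrank_self ℝ)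
  have := ψ.finrank_range_add_finrank_ker
  have := f.finrank_range_le
  lia

theorem exists_linearMap_apply_eq_zero_iff_mem_span {F : Type*} [AddCommGroup F] [Module ℝ F]
    (y : F) : ∃ π : F →ₗ[ℝ] F, ∀ x, π x = 0 ↔ x ∈ Submodule.span ℝ {y} := by
  obtain ⟨q, hq⟩ := Submodule.exists_isCompl (Submodule.span ℝ {y})
  exact ⟨q.projection _ hq.symm, fun x => Submodule.projection_apply_eq_zero_iff hq.symm⟩

section SemidefiniteKernel

variable {ι F : Type*} [Fintype ι] [DecidableEq ι] [NormedAddCommGroup F] [NormedSpace ℝ F]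
  {Λ : Matrix ι ι ℂ →L[ℝ] F}

theorem eq_zero_of_apply_rankOneTangent_eq_zero
    (hΛ : ∀ Z, Z.IsHermitian → Λ Z = 0 → IsSemidefiniteOnHyperplane Z → Z = 0) {o : ι} {w : ι → ℂ}
    (hw : (w o).im = 0) (hzero : Λ (rankOneTangent (Pi.single o 1) w) = 0) : w = 0 := by
  have htangent : rankOneTangent (Pi.single o 1) w = 0 :=
    hΛ _ (isHermitian_rankOneTangent _ _) hzero
      ⟨Pi.single o 1, Or.inl fun x hx => by rw [hermForm_rankOneTangent, hx]; simp⟩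
  ext i
  have hentry := congrFun₂ htangent i o
  rcases eq_or_ne i o with rfl | hi
  · have hre : (w i).re = 0 := by
      simpa [rankOneTangent, vecMulVec_apply] using congrArg Complex.re hentry
    exact Complex.ext hre hw
  · simpa [rankOneTangent, vecMulVec_apply, hi] using hentry

theorem eventually_eq_single_of_apply_sub_mem_span [FiniteDimensional ℝ F]
    (hΛ : ∀ Z, Z.IsHermitian → Λ Z = 0 → IsSemidefiniteOnHyperplane Z → Z = 0) {o : ι}
    {ψ : F →L[ℝ] ℝ} (hψ : ∀ w, ψ (Λ (rankOneTangent (Pi.single o 1) w)) = 0)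
    (hpos : ∀ u, u o = 0 → u ≠ 0 → 0 < ψ (Λ (vecMulVec u (star u)))) {h : F} (hψh : ψ h = 0)
    (hh : ∀ w, Λ (rankOneTangent (Pi.single o 1) w) ≠ h) :
    ∀ᶠ Z in 𝓝 (single o o 1), Z.IsHermitian → HasRankLeTwo Z →
      Λ (Z - single o o 1) ∈ Submodule.span ℝ {h} → Z = single o o 1 := by
  obtain ⟨π, hπ⟩ := exists_linearMap_apply_eq_zero_iff_mem_span h
  have hinj (w) (hw : (w o).im = 0) (hzero : π (Λ (rankOneTangent (Pi.single o 1) w)) = 0) :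
      w = 0 := by
    obtain ⟨c, hc⟩ := Submodule.mem_span_singleton.mp ((hπ _).mp hzero)
    rcases eq_or_ne c 0 with rfl | hc₀
    · exact eq_zero_of_apply_rankOneTangent_eq_zero hΛ hw (by rw [← hc, zero_smul])
    · refine absurd ?_ (hh (c⁻¹ • w))
      rw [map_smul, map_smul, ← hc, inv_smul_smul₀ hc₀]
  filter_upwards [eventually_eq_single (f := ψ.comp Λ) (g := π.toContinuousLinearMap.comp Λ)
    hψ hpos hinj] with Z hisol hZ hrank hspan
  refine hisol hZ hrank ?_ ((hπ _).mpr hspan)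
  obtain ⟨c, hc⟩ := Submodule.mem_span_singleton.mp hspan
  rw [ContinuousLinearMap.comp_apply, ← hc, map_smul, hψh, smul_zero]

theorem eventually_forall_of_apply_eq
    (hΛ : ∀ Z, Z.IsHermitian → Λ Z = 0 → IsSemidefiniteOnHyperplane Z → Z = 0) {o : ι}
    {p : Matrix ι ι ℂ → Prop} (hp : ∀ᶠ Z in 𝓝 (single o o 1), p Z) :
    ∀ᶠ y in 𝓝 (Λ (single o o 1)), ∀ Z, Z.IsHermitian → HasRankLeTwo Z → Λ Z = y → p Z := by
  let V : Set (Matrix ι ι ℂ) := {Z | Z.IsHermitian ∧ HasRankLeTwo Z}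
  have hle := comap_nhds_inf_principal_le_nhds (V := V) (f := Λ) (x₀ := single o o 1)
    (isClosed_setOf_isHermitian_and_hasRankLeTwo ι)
    (fun Z hZ a _ => ⟨hZ.1.smul (.all a), hZ.2.smul (a : ℂ)⟩)
    (fun Z hZ hzero => hΛ Z hZ.1 hzero (hZ.2.isSemidefiniteOnHyperplane hZ.1))
    (fun Z hZ heq => by
      rw [← vecMulVec_single_star_single] at heq ⊢
      exact sub_eq_zero.mp (hΛ _ (hZ.1.sub (isHermitian_vecMulVec_star _))
        ((map_sub Λ _ _).trans (sub_eq_zero.mpr heq))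
        (hZ.2.isSemidefiniteOnHyperplane_sub hZ.1 _)))
  have hp' := eventually_comap.mp (eventually_inf_principal.mp (hle hp))
  filter_upwards [hp'] with y hy Z hZ hrank hZy using hy Z hZy ⟨hZ, hrank⟩

end SemidefiniteKernel

/-- If not, `Λ` maps the Hermitian matrices of rank at most two onto `σ → ℝ`, yet the image of a
neighbourhood of `e e*` meets some line through `Λ (e e*)` only there. -/
theorem exists_isSemidefiniteOnHyperplane_ne_zero {σ : Type*} [Fintype σ] {k n : ℕ} (hk : k ≠ 0)
    (hn : n = 2 ^ k) (hσ : Fintype.card σ = 4 * n)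
    (Λ : Matrix (Fin (n + 1)) (Fin (n + 1)) ℂ →ₗ[ℝ] σ → ℝ) :
    ∃ Z, Z.IsHermitian ∧ Λ Z = 0 ∧ IsSemidefiniteOnHyperplane Z ∧ Z ≠ 0 := by
  by_contra! hΛ
  let Λc := Λ.toContinuousLinearMap
  obtain ⟨ψ, hψ, hpos⟩ :=
    exists_forall_rankOneTangent_eq_zero_and_forall_pos (Λ := Λc) hΛ (Pi.single 0 1)
  obtain ⟨h, hψh, hh⟩ :
      ∃ h, ψ h = 0 ∧ h ∉ LinearMap.range (Λ ∘ₗ rankOneTangent (Pi.single 0 1)) := by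
    refine exists_mem_ker_notMem_range ?_ _ ψ.toLinearMap
    have : 2 ^ 1 ≤ n := hn ▸ Nat.pow_le_pow_right two_pos (Nat.one_le_iff_ne_zero.mpr hk)
    simp only [Module.finrank_pi_fintype, Complex.finrank_real_complex, Finset.sum_const,
      Finset.card_univ, Fintype.card_fin, Module.finrank_self, smul_eq_mul, hσ]
    lia
  have hisol := eventually_forall_of_apply_eq (Λ := Λc) hΛ <|
    eventually_eq_single_of_apply_sub_mem_span (Λ := Λc) hΛ hψ
      (fun u hu => hpos u (by simpa using hu)) hψh fun w hw => hh ⟨w, hw⟩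
  have hline : Tendsto (fun t : ℝ => Λ (single 0 0 1) + t • h) (𝓝[≠] 0)
      (𝓝 (Λ (single 0 0 1))) :=
    (Continuous.tendsto' (by fun_prop) _ _ (by simp)).mono_left nhdsWithin_le_nhds
  obtain ⟨t, ht, ht₀⟩ := ((hline.eventually hisol).and self_mem_nhdsWithin).exists
  obtain ⟨Z, hZ, hrank, hZt⟩ := exists_isHermitian_hasRankLeTwo_eq hn hσ
    (fun Z hZ hrank hzero => hΛ Z hZ hzero (hrank.isSemidefiniteOnHyperplane hZ))
    (Λ (single 0 0 1) + t • h)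
  have hsub : Λ (Z - single 0 0 1) = t • h := by rw [map_sub, hZt, add_sub_cancel_left]
  have hZ₀ : Z = single 0 0 1 :=
    ht Z hZ hrank hZt hZ hrank (Submodule.mem_span_singleton.mpr ⟨t, hsub.symm⟩)
  rw [hZ₀, sub_self, map_zero] at hsub
  rcases smul_eq_zero.mp hsub.symm with rfl | rfl
  · exact ht₀ rfl
  · exact hh (zero_mem _)

end KernelMeetsSemidefinite

section Inertia

variable {ι m : Type*} [Fintype ι] [Fintype m]

theorem hermForm_conjTranspose_mulVec (Z : Matrix ι ι ℂ) (E : Matrix m ι ℂ) (y : m → ℂ) :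
    hermForm Z (Eᴴ *ᵥ y) = hermForm (E * Z * Eᴴ) y := by
  rw [hermForm, hermForm, star_mulVec, conjTranspose_conjTranspose, ← dotProduct_mulVec,
    mulVec_mulVec, mulVec_mulVec, Matrix.mul_assoc]

theorem IsSemidefiniteOnHyperplane.mul_mul_conjTranspose {Z : Matrix ι ι ℂ}
    (hZ : IsSemidefiniteOnHyperplane Z) (E : Matrix m ι ℂ) :
    IsSemidefiniteOnHyperplane (E * Z * Eᴴ) := by
  obtain ⟨v, hv⟩ := hZ
  have hmem (y : m → ℂ) (hy : star (E *ᵥ v) ⬝ᵥ y = 0) : star v ⬝ᵥ Eᴴ *ᵥ y = 0 := by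
    rwa [dotProduct_mulVec, ← star_mulVec]
  simp only [IsSemidefiniteOnHyperplane, ← hermForm_conjTranspose_mulVec]
  exact ⟨E *ᵥ v, hv.imp (fun h y hy => h _ (hmem y hy)) fun h y hy => h _ (hmem y hy)⟩

variable [DecidableEq ι] {X : Matrix ι ι ℂ}

theorem hermForm_smul_eigenvectorBasis_add_smul (hX : X.IsHermitian) {i j : ι} (hij : i ≠ j)
    (α β : ℂ) :
    hermForm X (α • ⇑(hX.eigenvectorBasis i) + β • ⇑(hX.eigenvectorBasis j)) =
      hX.eigenvalues i * Complex.normSq α + hX.eigenvalues j * Complex.normSq β := by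
  have horth (a b : ι) : star ⇑(hX.eigenvectorBasis a) ⬝ᵥ ⇑(hX.eigenvectorBasis b) =
      if a = b then 1 else 0 := by
    rw [dotProduct_comm, ← EuclideanSpace.inner_eq_star_dotProduct]
    exact orthonormal_iff_ite.mp hX.eigenvectorBasis.orthonormal a b
  simp only [hermForm, mulVec_add, mulVec_smul, hX.mulVec_eigenvectorBasis, star_add, star_smul,
    add_dotProduct, dotProduct_add, smul_dotProduct, dotProduct_smul, horth, if_pos, if_neg hij,
    if_neg hij.symm]
  simp [Complex.normSq_apply]
  ring

theorem exists_hermForm_eq_eigenvalues (hX : X.IsHermitian) {i j : ι} (hij : i ≠ j) (v : ι → ℂ) :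
    ∃ (x : ι → ℂ) (a b : ℝ), star v ⬝ᵥ x = 0 ∧ 0 ≤ a ∧ 0 ≤ b ∧ 0 < a + b ∧
      hermForm X x = hX.eigenvalues i * a + hX.eigenvalues j * b := by
  obtain ⟨α, β, hne, hv⟩ : ∃ α β : ℂ, (α ≠ 0 ∨ β ≠ 0) ∧
      star v ⬝ᵥ (α • ⇑(hX.eigenvectorBasis i) + β • ⇑(hX.eigenvectorBasis j)) = 0 := by
    simp only [dotProduct_add, dotProduct_smul, smul_eq_mul]
    by_cases hvi : star v ⬝ᵥ ⇑(hX.eigenvectorBasis i) = 0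
    · exact ⟨1, 0, Or.inl one_ne_zero, by rw [hvi, mul_zero, zero_mul, zero_add]⟩
    · exact ⟨-(star v ⬝ᵥ ⇑(hX.eigenvectorBasis j)), _, Or.inr hvi, by ring⟩
  refine ⟨_, Complex.normSq α, Complex.normSq β, hv, Complex.normSq_nonneg α,
    Complex.normSq_nonneg β, ?_, hermForm_smul_eigenvectorBasis_add_smul hX hij α β⟩
  rcases hne with hα | hβ
  · exact add_pos_of_pos_of_nonneg (Complex.normSq_pos.mpr hα) (Complex.normSq_nonneg β)
  · exact add_pos_of_nonneg_of_pos (Complex.normSq_nonneg α) (Complex.normSq_pos.mpr hβ)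

theorem exists_hermForm_neg (hX : X.IsHermitian) (hneg : 2 ≤ negEigCount hX) (v : ι → ℂ) :
    ∃ x, star v ⬝ᵥ x = 0 ∧ hermForm X x < 0 := by
  obtain ⟨i, hi, j, hj, hij⟩ := Finset.one_lt_card.mp hneg
  obtain ⟨x, a, b, hvx, ha, hb, hab, hx⟩ := exists_hermForm_eq_eigenvalues hX hij v
  rw [Finset.mem_filter_univ] at hi hj
  refine ⟨x, hvx, hx ▸ ?_⟩
  rcases ha.eq_or_lt with rfl | ha <;> nlinarith

theorem exists_hermForm_pos (hX : X.IsHermitian) (hpos : 2 ≤ posEigCount hX) (v : ι → ℂ) :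
    ∃ x, star v ⬝ᵥ x = 0 ∧ 0 < hermForm X x := by
  obtain ⟨i, hi, j, hj, hij⟩ := Finset.one_lt_card.mp hpos
  obtain ⟨x, a, b, hvx, ha, hb, hab, hx⟩ := exists_hermForm_eq_eigenvalues hX hij v
  rw [Finset.mem_filter_univ] at hi hj
  refine ⟨x, hvx, hx ▸ ?_⟩
  rcases ha.eq_or_lt with rfl | ha <;> nlinarith

theorem not_isSemidefiniteOnHyperplane_of_two_le (hX : X.IsHermitian) (hpos : 2 ≤ posEigCount hX)
    (hneg : 2 ≤ negEigCount hX) : ¬ IsSemidefiniteOnHyperplane X := by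
  rintro ⟨v, hv | hv⟩
  · obtain ⟨x, hvx, hx⟩ := exists_hermForm_neg hX hneg v
    exact hx.not_ge (hv x hvx)
  · obtain ⟨x, hvx, hx⟩ := exists_hermForm_pos hX hpos v
    exact hx.not_ge (hv x hvx)

end Inertia

section Dimension

theorem exists_linearMap_ker_eq {K V : Type*} [Field K] [AddCommGroup V] [Module K V]
    [FiniteDimensional K V] {W : Submodule K V} {N : ℕ}
    (h : Module.finrank K V ≤ Module.finrank K W + N) :
    ∃ g : V →ₗ[K] Fin N → K, LinearMap.ker g = W := by
  have hquot : Module.finrank K (V ⧸ W) ≤ Module.finrank K (Fin N → K) := by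
    rw [Module.finrank_fin_fun]
    have := Submodule.finrank_quotient_add_finrank W
    lia
  obtain ⟨f, hf⟩ := finrank_le_iff_exists_linearMap.mp hquot
  exact ⟨f ∘ₗ W.mkQ, by
    rw [LinearMap.ker_comp_of_ker_eq_bot _ (LinearMap.ker_eq_bot.mpr hf), Submodule.ker_mkQ]⟩

variable {ι : Type*}

/-- The real linear map `X ↦ Re X + Im X`, entrywise; it is injective on Hermitian matrices, where
`Re X` is symmetric and `Im X` antisymmetric. -/
def reAddIm : Matrix ι ι ℂ →ₗ[ℝ] Matrix ι ι ℝ :=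
  (Complex.reLm + Complex.imLm).mapMatrix

theorem eq_zero_of_reAddIm_eq_zero {X : Matrix ι ι ℂ} (hX : X.IsHermitian) (h : reAddIm X = 0) :
    X = 0 := by
  ext i j
  have hij : (X i j).re + (X i j).im = 0 := congrFun₂ h i j
  have hji : (X i j).re - (X i j).im = 0 := by
    simpa [reAddIm, ← hX.apply j i, sub_eq_add_neg] using congrFun₂ h j i
  apply Complex.ext <;> simp <;> linarith

theorem exists_linearMap_forall_mem_of_apply_eq_zero [Fintype ι] {N : ℕ}
    {L : Submodule ℝ (Matrix ι ι ℂ)} (hherm : ∀ X ∈ L, X.IsHermitian)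
    (hdim : Fintype.card ι ^ 2 ≤ Module.finrank ℝ L + N) :
    ∃ g : Matrix ι ι ℂ →ₗ[ℝ] Fin N → ℝ, ∀ X, X.IsHermitian → g X = 0 → X ∈ L := by
  have hinj : Function.Injective (reAddIm.domRestrict L) :=
    (injective_iff_map_eq_zero _).mpr fun X hX =>
      Subtype.ext (eq_zero_of_reAddIm_eq_zero (hherm X X.2) hX)
  have hfinrank : Module.finrank ℝ (L.map reAddIm) = Module.finrank ℝ L := by
    rw [← LinearMap.finrank_range_of_inj hinj, LinearMap.range_domRestrict]
  obtain ⟨g, hg⟩ := exists_linearMap_ker_eq (W := L.map reAddIm) (N := N)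
    (by simpa [Module.finrank_matrix, hfinrank, ← sq] using hdim)
  refine ⟨g ∘ₗ reAddIm, fun X hX hzero => ?_⟩
  obtain ⟨Y, hY, hYX⟩ : reAddIm X ∈ L.map reAddIm := hg ▸ hzero
  have hsub := eq_zero_of_reAddIm_eq_zero ((hherm Y hY).sub hX)
    (by rw [map_sub, hYX, sub_self])
  rwa [← sub_eq_zero.mp hsub]

theorem exists_conjTranspose_mul_self_eq_one {n q : ℕ} (h : n ≤ q) :
    ∃ E : Matrix (Fin q) (Fin n) ℂ, Eᴴ * E = 1 := by
  refine ⟨(1 : Matrix (Fin q) (Fin q) ℂ).submatrix id (Fin.castLE h), ?_⟩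
  rw [conjTranspose_submatrix, conjTranspose_one, ← submatrix_mul _ _ _ _ _ Function.bijective_id,
    Matrix.one_mul, submatrix_one _ (Fin.castLE_injective h)]

theorem exists_mem_isSemidefiniteOnHyperplane {k q : ℕ} (hk : k ≠ 0) (hq : 2 ^ k + 1 ≤ q)
    {L : Submodule ℝ (Matrix (Fin q) (Fin q) ℂ)} (hherm : ∀ X ∈ L, X.IsHermitian)
    (hdim : q ^ 2 ≤ Module.finrank ℝ L + 4 * 2 ^ k) :
    ∃ X ∈ L, X ≠ 0 ∧ IsSemidefiniteOnHyperplane X := by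
  obtain ⟨g, hg⟩ := exists_linearMap_forall_mem_of_apply_eq_zero hherm (by rwa [Fintype.card_fin])
  obtain ⟨E, hE⟩ := exists_conjTranspose_mul_self_eq_one hq
  obtain ⟨Z, hZ, hΛ, hsemidef, hne⟩ := exists_isSemidefiniteOnHyperplane_ne_zero hk rfl
    (Fintype.card_fin _) (g ∘ₗ mulRightLinearMap _ ℝ Eᴴ ∘ₗ mulLeftLinearMap _ ℝ E)
  refine ⟨E * Z * Eᴴ, hg _ (isHermitian_mul_mul_conjTranspose E hZ) hΛ, fun hzero => hne ?_,
    hsemidef.mul_mul_conjTranspose E⟩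
  calc Z = (Eᴴ * E) * Z * (Eᴴ * E) := by rw [hE, Matrix.one_mul, Matrix.mul_one]
    _ = Eᴴ * (E * Z * Eᴴ) * E := by simp only [Matrix.mul_assoc]
    _ = 0 := by rw [hzero, Matrix.mul_zero, Matrix.zero_mul]

end Dimension

end HermitianInertia

open HermitianInertia

theorem dim_bound_of_min_inertia_ge_two_eps_general {k q : ℕ} (hk : k ≠ 0) (hq : 2 ^ k + 1 ≤ q)
    {L : Submodule ℝ (Matrix (Fin q) (Fin q) ℂ)} (hherm : ∀ X ∈ L, X.IsHermitian)
    (hinertia : ∀ X ∈ L, X ≠ 0 → ∀ hX : X.IsHermitian, 2 ≤ posEigCount hX ∧ 2 ≤ negEigCount hX) :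
    Module.finrank ℝ L + (4 * 2 ^ k + 1) ≤ q ^ 2 := by
  by_contra! hdim
  obtain ⟨X, hXL, hX₀, hsemidef⟩ :=
    exists_mem_isSemidefiniteOnHyperplane hk hq hherm (by lia)
  obtain ⟨hpos, hneg⟩ := hinertia X hXL hX₀ (hherm X hXL)
  exact not_isSemidefiniteOnHyperplane_of_two_le (hherm X hXL) hpos hneg hsemidef

theorem dim_bound_of_min_inertia_ge_two_eps (k ε q : ℕ) (hk : 2 ≤ k)
    (hε₀ : 0 < ε) (hε₁ : ε < 2 ^ k) (hq : q = 2 ^ k + 1 + ε)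
    (L : Submodule ℝ (Matrix (Fin q) (Fin q) ℂ))
    (hherm : ∀ X ∈ L, X.IsHermitian)
    (hinertia : ∀ X ∈ L, X ≠ 0 → ∀ hX : Matrix.IsHermitian X,
      2 ≤ posEigCount hX ∧ 2 ≤ negEigCount hX) :
    Module.finrank ℝ L ≤ q ^ 2 - (4 * q - 3 - 4 * ε) := by
  have hbound := dim_bound_of_min_inertia_ge_two_eps_general (k := k) (by omega) (by omega) hherm
    hinertia
  omega
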